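/- Let M = p_i^{n_i} p_j^2 p_k^2 with p_i, p_j, p_k distinct primes and n_i ≥ 2. Assume A ⊕ B = ℤ_M, |A| = p_i p_j p_k, Φ_M | A, and that A ∩ Λ contains a p_i extended corner for some D(M)-grid Λ. Then Λ ⊕ B = ℤ_M is also a tiling, and both A and B satisfy (T2). -/

import Mathlib

open Polynomial

/-- The mask polynomial `A(X) = Σ_{a ∈ A} X^a` of a finite subset of `ZMod M`,
using the representatives in `{0, …, M-1}`. -/
noncomputable def maskPoly (M : ℕ) (A : Finset (ZMod M)) : Polynomial ℤ :=
  ∑ a ∈ A, X ^ a.val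

/-- `Φ_s | A` : the `s`-th cyclotomic polynomial divides the mask polynomial of `A` in `ℤ[X]`. -/
def cycDvd (M s : ℕ) (A : Finset (ZMod M)) : Prop :=
  cyclotomic s ℤ ∣ maskPoly M A

/-- `A ⊕ B = ℤ_M` : every element of `ℤ_M` has a unique representation `a + b`
with `a ∈ A` and `b ∈ B`. -/
def IsTiling (M : ℕ) (A B : Set (ZMod M)) : Prop :=
  ∀ z : ZMod M, ∃! ab : ZMod M × ZMod M, ab.1 ∈ A ∧ ab.2 ∈ B ∧ ab.1 + ab.2 = z

/-- The Coven–Meyerowitz property (T2): whenever `s_1, …, s_m` are prime powers dividing `M`,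
powers of pairwise distinct primes, with `Φ_{s_t} | A` for each `t`, then `Φ_{s_1 ⋯ s_m} | A`. -/
def SatisfiesT2 (M : ℕ) (A : Finset (ZMod M)) : Prop :=
  ∀ (P : Finset ℕ) (e : ℕ → ℕ), P.Nonempty →
    (∀ p ∈ P, p.Prime ∧ 1 ≤ e p ∧ p ^ e p ∣ M ∧ cycDvd M (p ^ e p) A) →
    cycDvd M (∏ p ∈ P, p ^ e p) A

/-- The `D`-grid through `x` in `ZMod M` : `Λ(x, D) = {y : D ∣ y - x}`. -/
def gridSet (M : ℕ) (x : ZMod M) (D : ℕ) : Set (ZMod M) :=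
  {y : ZMod M | (D : ZMod M) ∣ (y - x)}

/-- `S` is fibered in the `p` direction on scale `M`: every element of `S` has its whole
fiber `Λ(s, M/p)` contained in `S`. -/
def Fibered (M p : ℕ) (S : Set (ZMod M)) : Prop :=
  ∀ s ∈ S, gridSet M s (M / p) ⊆ S

/-- `Div_N(S)` : the set of values `(s - s', N) = gcd(s - s', N)` for `s, s' ∈ S`. -/
def DivSet (M N : ℕ) (S : Set (ZMod M)) : Set ℕ :=
  {m : ℕ | ∃ s ∈ S, ∃ s' ∈ S, Nat.gcd (s - s').val N = m}

/-- `A ∩ Λ` contains a `p` extended corner (other two directions `q`, `r`). -/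
def ExtCorner (M p q r : ℕ) (A Lam : Set (ZMod M)) : Prop :=
  ∃ a ∈ A ∩ Lam, ∃ a' ∈ A ∩ Lam,
    Nat.gcd (a - a').val M = M / p ∧
    Fibered M q (A ∩ gridSet M a (M / (q * r))) ∧
    ¬ Fibered M r (A ∩ gridSet M a (M / (q * r))) ∧
    Fibered M r (A ∩ gridSet M a' (M / (q * r))) ∧
    ¬ Fibered M q (A ∩ gridSet M a' (M / (q * r)))


/-- nonzero elements killed by `p` -/
def Elow {X : Type*} [CommRing X] (p : ℕ) (x : X) : Prop := x ≠ 0 ∧ (p : X) * x = 0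

structure Lv (p : ℕ) (X : Type*) [CommRing X] : Prop where
  assoc : ∀ s d : X, (p : X) * d = 0 → s ≠ 0 → s + d ≠ 0 → Associated s (s + d)
  cardK : Nat.card {x : X // (p : X) * x = 0} = p

structure Lv2 (p : ℕ) (X : Type*) [CommRing X] : Prop extends Lv p X where
  cardX : Nat.card X = p ^ 2
  unit_iff : ∀ x : X, IsUnit x ↔ (p : X) * x ≠ 0

/-- class predicate -/
def Cl {X : Type*} [CommRing X] (P : X → Prop) : Prop := ∀ s t, P s → P t → Associated s t

theorem Cl_zero {X : Type*} [CommRing X] : Cl (fun x : X => x = 0) := by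
  intro s t hs ht; subst hs; subst ht; exact Associated.refl _

theorem Cl_unit {X : Type*} [CommRing X] : Cl (fun x : X => IsUnit x) := by
  rintro s t ⟨u, rfl⟩ ⟨v, rfl⟩
  exact ⟨u⁻¹ * v, by simp⟩

theorem Cl_E {X : Type*} [CommRing X] {p : ℕ} (h : Lv p X) : Cl (fun x : X => Elow p x) := by
  rintro s t ⟨hs, hs'⟩ ⟨ht, ht'⟩
  have := h.assoc s (t - s) (by rw [mul_sub, hs', ht', sub_zero]) hs (by simpa using ht)
  simpa using this

section Core
set_option linter.unusedSectionVars false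
open scoped Classical

/-- number of units carrying `t` to `s` -/
noncomputable def Wt {X : Type*} [CommRing X] [Fintype X] (s t : X) : ℕ :=
  (Finset.univ.filter (fun u : Xˣ => s = u * t)).card

section Wt
variable {X : Type*} [CommRing X] [Fintype X]

theorem Wt_pos {s t : X} (h : Wt s t ≠ 0) : Associated t s := by
  unfold Wt at h
  obtain ⟨u, hu⟩ := Finset.card_ne_zero.1 h
  simp at hu
  exact ⟨u, by rw [hu, mul_comm]⟩

theorem Wt_zero : Wt (0 : X) 0 = Nat.card Xˣ := by
  simp [Wt, Finset.card_univ, Nat.card_eq_fintype_card]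

theorem Wt_unit {s t : X} (hs : IsUnit s) (ht : IsUnit t) : Wt s t = 1 := by
  obtain ⟨u, rfl⟩ := hs
  obtain ⟨v, rfl⟩ := ht
  unfold Wt
  rw [Finset.card_eq_one]
  refine ⟨u * v⁻¹, ?_⟩
  ext w
  simp only [Finset.mem_filter, Finset.mem_univ, true_and, Finset.mem_singleton]
  rw [eq_mul_inv_iff_mul_eq, ← Units.val_mul, Units.ext_iff, eq_comm]
  

theorem card_E {p : ℕ} (h : Lv p X) :
    (Finset.univ.filter (fun x : X => (p : X) * x = 0)).card = p := by
  have := h.cardK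
  rw [Nat.card_eq_fintype_card, Fintype.card_subtype] at this
  convert this

theorem card_E' {p : ℕ} (h : Lv p X) :
    (Finset.univ.filter (fun x : X => Elow p x)).card = p - 1 := by
  have : (Finset.univ.filter (fun x : X => Elow p x)) =
    (Finset.univ.filter (fun x : X => (p : X) * x = 0)).erase 0 := by
    ext x; simp only [Finset.mem_filter, Finset.mem_univ, true_and, Finset.mem_erase]; rfl
  rw [this, Finset.card_erase_of_mem (by simp), card_E h]

theorem Wt_E {p : ℕ} (h : Lv p X) {s t : X} (hs : Elow p s) (ht : Elow p t) :
    (p - 1) * Wt s t = Nat.card Xˣ := by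
  -- all Wt s' t equal
  have key : ∀ s', Elow p s' → Wt s' t = Wt s t := by
    intro s' hs'
    obtain ⟨v, hv⟩ := Cl_E h s s' hs hs'
    unfold Wt
    apply Finset.card_bij' (fun u _ => v⁻¹ * u) (fun u _ => v * u)
    · intro u hu
      simp only [Finset.mem_filter, Finset.mem_univ, true_and] at hu ⊢
      rw [Units.val_mul, mul_assoc, ← hu, ← hv, mul_comm s, Units.inv_mul_cancel_left]
    · intro u hu
      simp only [Finset.mem_filter, Finset.mem_univ, true_and] at hu ⊢
      rw [Units.val_mul, mul_assoc, ← hu, ← hv, mul_comm s]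
    · intro u hu; simp
    · intro u hu; simp
  have h1 : Nat.card Xˣ = ∑ s' ∈ Finset.univ.filter (fun x : X => Elow p x), Wt s' t := by
    rw [Nat.card_eq_fintype_card, ← Finset.card_univ]
    rw [Finset.card_eq_sum_card_fiberwise (f := fun u : Xˣ => (u : X) * t)
      (t := Finset.univ.filter (fun x : X => Elow p x))]
    · apply Finset.sum_congr rfl
      intro x _
      unfold Wt
      congr 1
      ext u; simp [eq_comm]
    · intro u _
      simp only [Finset.coe_filter, Finset.mem_univ, true_and, Set.mem_ofPred_eq]
      refine ⟨?_, ?_⟩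
      · rw [Ne, Units.mul_right_eq_zero]; exact ht.1
      · rw [mul_left_comm, ht.2, mul_zero]
  rw [h1, Finset.sum_congr rfl (fun x hx => key x (by simpa using hx))]
  rw [Finset.sum_const, card_E' h, smul_eq_mul]

theorem card_unitset {p : ℕ} (h : Lv2 p X) (c : X) :
    (Finset.univ.filter (fun x : X => IsUnit (x - c))).card = p * (p - 1) := by
  have h1 : (Finset.univ.filter (fun x : X => IsUnit (x - c))).card =
    (Finset.univ.filter (fun x : X => IsUnit x)).card := by
    apply Finset.card_bij' (fun x _ => x - c) (fun x _ => x + c) <;> simp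
  rw [h1]
  have h2 := Finset.card_filter_add_card_filter_not (s := (Finset.univ : Finset X)) (fun x => IsUnit x)
  have h3 : (Finset.univ.filter (fun x : X => ¬ IsUnit x)) = Finset.univ.filter (fun x : X => (p:X) * x = 0) := by
    ext x; simp [h.unit_iff x]
  rw [h3, card_E h.toLv, Finset.card_univ, ← Nat.card_eq_fintype_card, h.cardX] at h2
  rw [Nat.mul_sub]; rw [pow_two] at h2; omega

theorem card_units {p : ℕ} (h : Lv2 p X) : Nat.card Xˣ = p * (p - 1) := by
  rw [← card_unitset h 0]
  rw [Nat.card_eq_fintype_card, ← Finset.card_univ]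
  apply Finset.card_bij (fun (u : Xˣ) _ => (u : X))
  · intro u _; simp
  · intro u _ v _ huv; exact Units.ext huv
  · intro x hx; simp at hx; obtain ⟨u, rfl⟩ := hx; exact ⟨u, by simp, rfl⟩

theorem Wt_E2 {p : ℕ} (hp : p.Prime) (h : Lv2 p X) {s t : X} (hs : Elow p s) (ht : Elow p t) : Wt s t = p := by
  have := Wt_E h.toLv hs ht
  rw [card_units h, mul_comm] at this
  exact Nat.eq_of_mul_eq_mul_right (Nat.sub_pos_of_lt hp.one_lt) this

/-- sets with pairwise unit differences have at most `p` elements -/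
theorem card_le_of_unit {p : ℕ} (hp : p.Prime) (h : Lv2 p X) (S : Finset X)
    (hS : ∀ x ∈ S, ∀ y ∈ S, x ≠ y → IsUnit (x - y)) : S.card ≤ p := by
  have : (S ×ˢ Finset.univ.filter (fun x : X => (p:X) * x = 0)).card ≤ (Finset.univ : Finset X).card := by
    apply Finset.card_le_card_of_injOn (fun x => x.1 + x.2) (by simp)
    rintro ⟨a, b⟩ hab ⟨c, d⟩ hcd heq
    simp only [Finset.coe_product, Finset.coe_filter, Finset.mem_univ, true_and, Set.mem_prod,
      Finset.mem_coe, Set.mem_ofPred_eq] at hab hcd heq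
    have e1 : a - c = d - b := by linear_combination heq
    by_cases hac : a = c
    · subst hac; simpa using heq
    · have := (h.unit_iff _).1 (hS a hab.1 c hcd.1 hac)
      rw [e1, mul_sub, hcd.2, hab.2, sub_zero] at this
      exact absurd rfl this
  rw [Finset.card_product, card_E h.toLv, Finset.card_univ, ← Nat.card_eq_fintype_card, h.cardX, pow_two] at this
  exact Nat.le_of_mul_le_mul_right this hp.pos

/-- sets with pairwise differences killed by `p` have at most `p` elements -/
theorem card_le_of_low {p : ℕ} (h : Lv p X) (S : Finset X)
    (hS : ∀ x ∈ S, ∀ y ∈ S, (p : X) * (x - y) = 0) : S.card ≤ p := by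
  rcases S.eq_empty_or_nonempty with rfl | ⟨c, hc⟩
  · simp
  rw [← card_E h]
  apply Finset.card_le_card_of_injOn (fun x => x - c)
  · intro x hx; simpa using hS x hx c hc
  · intro x _ y _ hxy; simpa using hxy
end Wt
end Core

section Core
set_option linter.unusedSectionVars false
open scoped Classical

variable {R X Y Z : Type*} [CommRing R] [CommRing X] [CommRing Y] [CommRing Z]

structure Ctx [Fintype R] [Fintype X] [Fintype Y] [Fintype Z]
    (f : R →+* X) (g : R →+* Y) (h : R →+* Z) (p q r : ℕ) (A B : Finset R) : Prop where
  hp : p.Prime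
  hq : q.Prime
  hr : r.Prime
  hpq : p ≠ q
  hpr : p ≠ r
  hqr : q ≠ r
  bij : Function.Bijective (fun t : R => (f t, g t, h t))
  LX : Lv p X
  LY : Lv2 q Y
  LZ : Lv2 r Z
  tile : ∀ t : R, IsUnit t → ∀ x : R, ∃! ab : R × R, ab.1 ∈ A ∧ ab.2 ∈ B ∧ ab.1 + t * ab.2 = x
  slice : ∀ c, (A.filter (fun a => f a = c)).card ≤ q * r
  neB : B.Nonempty

structure Corner (f : R →+* X) (g : R →+* Y) (h : R →+* Z) (p q r : ℕ) (A : Finset R)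
    (i0 i1 : X) (y0 : Y) (z0 : Z) : Prop where
  hi : i1 ≠ i0
  hi' : (p : X) * (i1 - i0) = 0
  Aq : ∀ a, f a = i0 → (q : Y) * (g a - y0) = 0 → h a = z0 → a ∈ A
  Ar : ∀ a, f a = i1 → g a = y0 → (r : Z) * (h a - z0) = 0 → a ∈ A
  nA0 : ∃ c, f c = i0 ∧ g c = y0 ∧ (r : Z) * (h c - z0) = 0 ∧ c ∉ A
  nA1 : ∃ c, f c = i1 ∧ h c = z0 ∧ (q : Y) * (g c - y0) = 0 ∧ c ∉ A
  fib0 : ∀ c ∈ A, f c = i0 → g c = y0 → (r : Z) * (h c - z0) = 0 →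
    ∀ c', f c' = i0 → h c' = h c → (q : Y) * (g c' - y0) = 0 → c' ∈ A
  fib1 : ∀ c ∈ A, f c = i1 → h c = z0 → (q : Y) * (g c - y0) = 0 →
    ∀ c', f c' = i1 → g c' = g c → (r : Z) * (h c' - z0) = 0 → c' ∈ A

theorem Corner.swap {f : R →+* X} {g : R →+* Y} {h : R →+* Z} {p q r : ℕ} {A : Finset R}
    {i0 i1 : X} {y0 : Y} {z0 : Z} (c : Corner f g h p q r A i0 i1 y0 z0) :
    Corner f h g p r q A i1 i0 z0 y0 where
  hi := c.hi.symm
  hi' := by rw [← neg_sub, mul_neg, c.hi', neg_zero]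
  Aq := fun a h1 h2 h3 => c.Ar a h1 h3 h2
  Ar := fun a h1 h2 h3 => c.Aq a h1 h3 h2
  nA0 := c.nA1
  nA1 := c.nA0
  fib0 := c.fib1
  fib1 := c.fib0

variable [Fintype R] [Fintype X] [Fintype Y] [Fintype Z]
variable {f : R →+* X} {g : R →+* Y} {h : R →+* Z} {p q r : ℕ} {A B : Finset R}

theorem Ctx.swap (C : Ctx f g h p q r A B) : Ctx f h g p r q A B where
  hp := C.hp
  hq := C.hr
  hr := C.hq
  hpq := C.hpr
  hpr := C.hpq
  hqr := C.hqr.symm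
  bij := by
    have := (Equiv.prodCongr (Equiv.refl X) (Equiv.prodComm Y Z)).bijective.comp C.bij
    exact this
  LX := C.LX
  LY := C.LZ
  LZ := C.LY
  tile := C.tile
  slice := fun c => by rw [mul_comm]; exact C.slice c
  neB := C.neB

theorem Ctx.ex (C : Ctx f g h p q r A B) (x : X) (y : Y) (z : Z) :
    ∃ t, f t = x ∧ g t = y ∧ h t = z := by
  obtain ⟨t, ht⟩ := C.bij.2 (x, y, z)
  simp only [Prod.mk.injEq] at ht
  exact ⟨t, ht⟩

theorem Ctx.inj (C : Ctx f g h p q r A B) {s t : R} (h1 : f s = f t) (h2 : g s = g t)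
    (h3 : h s = h t) : s = t := C.bij.1 (by simp [h1, h2, h3])

theorem Ctx.exU (C : Ctx f g h p q r A B) (x : Xˣ) (y : Yˣ) (z : Zˣ) :
    ∃ t, IsUnit t ∧ f t = x ∧ g t = y ∧ h t = z := by
  obtain ⟨t, h1, h2, h3⟩ := C.ex x y z
  obtain ⟨s, k1, k2, k3⟩ := C.ex (x⁻¹ : Xˣ) (y⁻¹ : Yˣ) (z⁻¹ : Zˣ)
  refine ⟨t, ?_, h1, h2, h3⟩
  apply IsUnit.of_mul_eq_one s
  apply C.inj <;> simp [*]

theorem Ctx.tile1 (C : Ctx f g h p q r A B) (b0 x : R) (u : Xˣ) (v : Yˣ) (w : Zˣ) :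
    ((A ×ˢ B).filter (fun ab => f x - f ab.1 = u * (f ab.2 - f b0) ∧
      g x - g ab.1 = v * (g ab.2 - g b0) ∧ h x - h ab.1 = w * (h ab.2 - h b0))).card = 1 := by
  obtain ⟨t, ht, t1, t2, t3⟩ := C.exU u v w
  obtain ⟨ab, ⟨h1, h2, h3⟩, huniq⟩ := C.tile t ht (x + t * b0)
  rw [Finset.card_eq_one]
  refine ⟨ab, ?_⟩
  ext cd
  simp only [Finset.mem_filter, Finset.mem_product, Finset.mem_singleton]
  constructor
  · rintro ⟨⟨k1, k2⟩, k3, k4, k5⟩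
    apply huniq
    refine ⟨k1, k2, ?_⟩
    apply C.inj
    · simp only [map_add, map_mul, t1]; linear_combination - k3
    · simp only [map_add, map_mul, t2]; linear_combination - k4
    · simp only [map_add, map_mul, t3]; linear_combination - k5
  · rintro rfl
    refine ⟨⟨h1, h2⟩, ?_, ?_, ?_⟩
    · have := congrArg f h3; simp only [map_add, map_mul, t1] at this; linear_combination - this
    · have := congrArg g h3; simp only [map_add, map_mul, t2] at this; linear_combination - this
    · have := congrArg h h3; simp only [map_add, map_mul, t3] at this; linear_combination - this

theorem Ctx.sum_id (C : Ctx f g h p q r A B) (b0 x : R) :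
    ∑ ab ∈ A ×ˢ B, Wt (f x - f ab.1) (f ab.2 - f b0) * Wt (g x - g ab.1) (g ab.2 - g b0) *
      Wt (h x - h ab.1) (h ab.2 - h b0) = Nat.card Xˣ * Nat.card Yˣ * Nat.card Zˣ := by
  have key := Finset.sum_card_bipartiteAbove_eq_sum_card_bipartiteBelow (s := A ×ˢ B)
    (t := (Finset.univ : Finset (Xˣ × Yˣ × Zˣ)))
    (fun ab uvw => f x - f ab.1 = uvw.1 * (f ab.2 - f b0) ∧
      g x - g ab.1 = uvw.2.1 * (g ab.2 - g b0) ∧ h x - h ab.1 = uvw.2.2 * (h ab.2 - h b0))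
  have h2 : ∀ uvw ∈ (Finset.univ : Finset (Xˣ × Yˣ × Zˣ)),
    (Finset.bipartiteBelow (fun (ab : R × R) (uvw : Xˣ × Yˣ × Zˣ) => f x - f ab.1 = uvw.1 * (f ab.2 - f b0) ∧
      g x - g ab.1 = uvw.2.1 * (g ab.2 - g b0) ∧ h x - h ab.1 = uvw.2.2 * (h ab.2 - h b0)) (A ×ˢ B) uvw).card = 1 := by
    rintro ⟨u, v, w⟩ -
    exact C.tile1 b0 x u v w
  rw [Finset.sum_congr rfl h2] at key
  rw [Finset.sum_const, Finset.card_univ, smul_eq_mul, mul_one, Fintype.card_prod, Fintype.card_prod,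
    ← mul_assoc, ← Nat.card_eq_fintype_card, ← Nat.card_eq_fintype_card, ← Nat.card_eq_fintype_card] at key
  rw [← key]
  apply Finset.sum_congr rfl
  rintro ⟨a, b⟩ -
  unfold Wt Finset.bipartiteAbove
  rw [mul_assoc, ← Finset.card_product, ← Finset.card_product]
  congr 1
  ext ⟨u, v, w⟩
  simp

theorem Ctx.dv (C : Ctx f g h p q r A B) {a a' b b' : R} (ha : a ∈ A) (ha' : a' ∈ A)
    (hb : b ∈ B) (hb' : b' ∈ B) (h1 : Associated (f a - f a') (f b - f b'))
    (h2 : Associated (g a - g a') (g b - g b')) (h3 : Associated (h a - h a') (h b - h b')) :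
    a = a' ∧ b = b' := by
  obtain ⟨u, hu⟩ := h1.symm
  obtain ⟨v, hv⟩ := h2.symm
  obtain ⟨w, hw⟩ := h3.symm
  obtain ⟨t, ht, t1, t2, t3⟩ := C.exU u v w
  have e : a + t * b' = a' + t * b := by
    apply C.inj
    · simp only [map_add, map_mul, t1]; linear_combination - hu
    · simp only [map_add, map_mul, t2]; linear_combination - hv
    · simp only [map_add, map_mul, t3]; linear_combination - hw
  obtain ⟨c, _, hc⟩ := C.tile t ht (a + t * b')
  have e1 := hc (a, b') ⟨ha, hb', rfl⟩
  have e2 := hc (a', b) ⟨ha', hb, e.symm⟩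
  rw [← e2] at e1
  simp only [Prod.mk.injEq] at e1
  exact ⟨e1.1, e1.2.symm⟩

/-- number of elements of `B` whose difference with `b0` is of the given type -/
noncomputable def Bc (f : R →+* X) (g : R →+* Y) (h : R →+* Z) (B : Finset R) (b0 : R)
    (P : X → Prop) (Q : Y → Prop) (S : Z → Prop) : ℕ :=
  (B.filter (fun b => P (f b - f b0) ∧ Q (g b - g b0) ∧ S (h b - h b0))).card

theorem Bc_swap (b0 : R)
    (P : X → Prop) (Q : Y → Prop) (S : Z → Prop) : Bc f g h B b0 P Q S = Bc f h g B b0 P S Q := by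
  unfold Bc; congr 1; ext b; simp; tauto

theorem Ctx.noB (C : Ctx f g h p q r A B) {P : X → Prop} {Q : Y → Prop} {S : Z → Prop}
    (hP : Cl P) (hQ : Cl Q) (hS : Cl S) {a a' : R} (ha : a ∈ A) (ha' : a' ∈ A) (hne : a ≠ a')
    (h1 : P (f a - f a')) (h2 : Q (g a - g a')) (h3 : S (h a - h a')) :
    ∀ b0 ∈ B, ∀ b ∈ B, ¬ (P (f b - f b0) ∧ Q (g b - g b0) ∧ S (h b - h b0)) := by
  rintro b0 hb0 b hb ⟨k1, k2, k3⟩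
  exact hne (C.dv ha ha' hb hb0 (hP _ _ h1 k1) (hQ _ _ h2 k2) (hS _ _ h3 k3)).1

theorem Bc_zero {P : X → Prop} {Q : Y → Prop} {S : Z → Prop} {b0 : R}
    (H : ∀ b ∈ B, ¬ (P (f b - f b0) ∧ Q (g b - g b0) ∧ S (h b - h b0))) : Bc f g h B b0 P Q S = 0 := by
  unfold Bc; rw [Finset.card_eq_zero, Finset.filter_eq_empty_iff]; exact H

theorem Bc_zero_iff {P : X → Prop} {Q : Y → Prop} {S : Z → Prop} {b0 : R} :
    Bc f g h B b0 P Q S = 0 ↔ ∀ b ∈ B, ¬ (P (f b - f b0) ∧ Q (g b - g b0) ∧ S (h b - h b0)) := by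
  unfold Bc; rw [Finset.card_eq_zero, Finset.filter_eq_empty_iff]

/-- number of elements of `A` on a line, at unit distance from `y0` -/
noncomputable def Nc (f : R →+* X) (g : R →+* Y) (h : R →+* Z) (A : Finset R) (y0 : Y) (i : X) (z : Z) : ℕ :=
  (A.filter (fun a => f a = i ∧ IsUnit (g a - y0) ∧ h a = z)).card

theorem Elow_neg {X : Type*} [CommRing X] {p : ℕ} {x : X} : Elow p (-x) ↔ Elow p x := by
  simp [Elow]

theorem Elow_sub {X : Type*} [CommRing X] {p : ℕ} {x y : X} : Elow p (x - y) ↔ Elow p (y - x) := by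
  rw [← Elow_neg, neg_sub]

theorem IsUnit_sub {X : Type*} [CommRing X] {x y : X} : IsUnit (x - y) ↔ IsUnit (y - x) := by
  rw [← IsUnit.neg_iff, neg_sub]

theorem Lv2.trich {q : ℕ} (H : Lv2 q Y) (y : Y) : y = 0 ∨ Elow q y ∨ IsUnit y := by
  rw [H.unit_iff]; unfold Elow; tauto

theorem Lv2.not_both {q : ℕ} (H : Lv2 q Y) {y : Y} (h1 : (q : Y) * y = 0) : ¬ IsUnit y := by
  rw [H.unit_iff]; simpa using h1

theorem assoc_zero {X : Type*} [CommRing X] {s t : X} (H : Associated s t) : s = 0 ↔ t = 0 :=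
  H.eq_zero_iff

theorem assoc_E {X : Type*} [CommRing X] {p : ℕ} {s t : X} (H : Associated s t) (hs : Elow p s) : Elow p t := by
  obtain ⟨u, rfl⟩ := H
  refine ⟨?_, ?_⟩
  · rw [Ne, Units.mul_left_eq_zero]; exact hs.1
  · rw [← mul_assoc, hs.2, zero_mul]

end Core

section Core
set_option linter.unusedSectionVars false
open scoped Classical

variable {R X Y Z : Type*} [CommRing R] [CommRing X] [CommRing Y] [CommRing Z]
variable [Fintype R] [Fintype X] [Fintype Y] [Fintype Z]
variable {f : R →+* X} {g : R →+* Y} {h : R →+* Z} {p q r : ℕ} {A B : Finset R}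
variable {i0 i1 : X} {y0 : Y} {z0 : Z}

theorem Ctx.low (C : Ctx f g h p q r A B) (K : Corner f g h p q r A i0 i1 y0 z0)
    {b b0 : R} (hb : b ∈ B) (hb0 : b0 ∈ B) (h1 : (p : X) * (f b - f b0) = 0)
    (h2 : (q : Y) * (g b - g b0) = 0) (h3 : (r : Z) * (h b - h b0) = 0) :
    b = b0 ∨ (f b - f b0 = 0 ∧ Elow q (g b - g b0) ∧ Elow r (h b - h b0)) := by
  by_cases e1 : f b - f b0 = 0
  · by_cases e2 : g b - g b0 = 0
    · left
      obtain ⟨a, a1, a2, a3⟩ := C.ex i1 y0 (z0 + (h b - h b0))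
      obtain ⟨a', a1', a2', a3'⟩ := C.ex i1 y0 z0
      refine (C.dv (K.Ar a a1 a2 (by rw [a3]; simpa using h3)) (K.Ar a' a1' a2' (by simp [a3'])) hb hb0 ?_ ?_ ?_).2
      · rw [a1, a1', e1, sub_self]
      · rw [a2, a2', e2, sub_self]
      · rw [a3, a3']; simp
    by_cases e3 : h b - h b0 = 0
    · left
      obtain ⟨a, a1, a2, a3⟩ := C.ex i0 (y0 + (g b - g b0)) z0
      obtain ⟨a', a1', a2', a3'⟩ := C.ex i0 y0 z0
      refine (C.dv (K.Aq a a1 (by rw [a2]; simpa using h2) a3) (K.Aq a' a1' (by simp [a2']) a3') hb hb0 ?_ ?_ ?_).2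
      · rw [a1, a1', e1, sub_self]
      · rw [a2, a2']; simp
      · rw [a3, a3', e3, sub_self]
    · right; exact ⟨e1, ⟨e2, h2⟩, ⟨e3, h3⟩⟩
  · left
    obtain ⟨a, a1, a2, a3⟩ := C.ex i1 y0 (z0 + (h b - h b0))
    obtain ⟨a', a1', a2', a3'⟩ := C.ex i0 (y0 - (g b - g b0)) z0
    refine (C.dv (K.Ar a a1 a2 (by rw [a3]; simpa using h3)) (K.Aq a' a1' (by rw [a2']; linear_combination - h2) a3') hb hb0 ?_ ?_ ?_).2
    · rw [a1, a1']
      exact Cl_E C.LX _ _ ⟨sub_ne_zero.2 K.hi, K.hi'⟩ ⟨e1, h1⟩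
    · rw [a2, a2']; simp
    · rw [a3, a3']; simp

theorem assoc_cases (C : Ctx f g h p q r A B) (K : Corner f g h p q r A i0 i1 y0 z0)
    {x a b b0 : R} (x1 : f x = i0) (x2 : g x = y0) (x3 : (r : Z) * (h x - z0) = 0) (x4 : x ∉ A)
    (ha : a ∈ A) (hb : b ∈ B) (hb0 : b0 ∈ B)
    (h1 : Associated (f x - f a) (f b - f b0))
    (h2 : Associated (g x - g a) (g b - g b0)) (h3 : Associated (h x - h a) (h b - h b0)) :
    (f a = i0 ∨ f a = i1) ∧ (h a = h x ∨ h a = z0) ∧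
      (IsUnit (g a - y0) ∨ (f a = i0 ∧ Elow q (g a - y0) ∧ h a = z0)) := by
  have hbne : b ≠ b0 := by
    rintro rfl
    apply x4
    have e1 := (assoc_zero h1).2 (sub_self _)
    have e2 := (assoc_zero h2).2 (sub_self _)
    have e3 := (assoc_zero h3).2 (sub_self _)
    rw [C.inj (sub_eq_zero.1 e1) (sub_eq_zero.1 e2) (sub_eq_zero.1 e3)]; exact ha
  have c1 : f a = i0 ∨ f a = i1 := by
    by_contra hcon
    push Not at hcon
    obtain ⟨c, k1, k2, k3⟩ := C.ex i1 y0 (h x)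
    have hc : c ∈ A := K.Ar c k1 k2 (by rw [k3]; exact x3)
    apply hbne
    refine (C.dv hc ha hb hb0 ?_ ?_ ?_).2
    · refine Associated.trans ?_ h1
      have := C.LX.assoc (f x - f a) (i1 - i0) K.hi' (by rw [x1, sub_ne_zero]; exact hcon.1.symm)
        (by rw [x1]; intro hh; apply hcon.2; linear_combination - hh)
      rw [k1]
      convert this.symm using 1
      rw [x1]; ring
    · rw [k2, ← x2]; exact h2
    · rw [k3]; exact h3
  have c2 : h a = h x ∨ h a = z0 := by
    by_contra hcon
    push Not at hcon
    obtain ⟨c, k1, k2, k3⟩ := C.ex i0 y0 z0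
    have hc : c ∈ A := K.Aq c k1 (by simp [k2]) k3
    apply hbne
    refine (C.dv hc ha hb hb0 ?_ ?_ ?_).2
    · rw [k1, ← x1]; exact h1
    · rw [k2, ← x2]; exact h2
    · refine Associated.trans ?_ h3
      have := C.LZ.assoc (h x - h a) (z0 - h x) (by rw [← neg_sub, mul_neg, x3, neg_zero])
        (by rw [sub_ne_zero]; exact hcon.1.symm)
        (by intro hh; apply hcon.2; linear_combination - hh)
      rw [k3]
      convert this.symm using 1
      ring
  refine ⟨c1, c2, ?_⟩
  by_cases hu : IsUnit (g a - y0)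
  · exact Or.inl hu
  right
  have hq0 : (q : Y) * (g x - g a) = 0 := by
    rw [C.LY.unit_iff, not_not] at hu
    rw [x2]; linear_combination - hu
  obtain ⟨u, hu1⟩ := h1
  obtain ⟨v, hv1⟩ := h2
  obtain ⟨w, hw1⟩ := h3
  have hp0 : (p : X) * (f x - f a) = 0 := by
    rcases c1 with c | c
    · rw [c, x1]; simp
    · rw [c, x1]; linear_combination - K.hi'
  have hr0 : (r : Z) * (h x - h a) = 0 := by
    rcases c2 with c | c
    · rw [c]; simp
    · rw [c]; exact x3
  rcases C.low K hb hb0 (by rw [← hu1, ← mul_assoc, hp0, zero_mul]) (by rw [← hv1, ← mul_assoc, hq0, zero_mul])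
    (by rw [← hw1, ← mul_assoc, hr0, zero_mul]) with hh | ⟨l1, l2, l3⟩
  · exact absurd hh hbne
  · rw [← hu1, Units.mul_left_eq_zero, sub_eq_zero, x1] at l1
    refine ⟨l1.symm, ?_, ?_⟩
    · rw [Elow_sub, ← x2]; exact assoc_E (Associated.symm ⟨v, hv1⟩) l2
    · rcases c2 with c | c
      · exfalso; rw [← hw1, c, sub_self, zero_mul] at l3; exact l3.1 rfl
      · exact c

theorem sum_ite_prod {α β : Type*} (S : Finset α) (T : Finset β) (P : α → Prop) (Q : β → Prop) (w : ℕ)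
    [DecidablePred P] [DecidablePred Q] [∀ ab : α × β, Decidable (P ab.1 ∧ Q ab.2)] :
    ∑ ab ∈ S ×ˢ T, (if P ab.1 ∧ Q ab.2 then w else 0) = w * ((S.filter P).card * (T.filter Q).card) := by
  rw [← Finset.sum_filter, Finset.sum_const, smul_eq_mul, mul_comm]
  congr 1
  rw [← Finset.card_product]
  congr 1
  ext ⟨a, b⟩
  simp
  tauto

theorem sum_ite_prod' {α β : Type*} (S : Finset α) (T : Finset β) (P : α → Prop) (Q : β → Prop) (w : ℕ)
    [∀ ab : α × β, Decidable (P ab.1 ∧ Q ab.2)] (nA nB : ℕ) (hA : nA = (S.filter P).card)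
    (hB : nB = (T.filter Q).card) :
    ∑ ab ∈ S ×ˢ T, (if P ab.1 ∧ Q ab.2 then w else 0) = w * (nA * nB) := by
  rw [hA, hB, sum_ite_prod]

theorem card_fiber (C : Ctx f g h p q r A B) (K : Corner f g h p q r A i0 i1 y0 z0) :
    (A.filter (fun a => f a = i0 ∧ Elow q (g a - y0) ∧ h a = z0)).card = q - 1 := by
  rw [← card_E' C.LY.toLv]
  apply Finset.card_bij (fun a _ => g a - y0)
  · intro a ha; simp only [Finset.mem_filter] at ha; simpa using ha.2.2.1
  · intro a ha b hb hab
    simp only [Finset.mem_filter] at ha hb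
    apply C.inj
    · rw [ha.2.1, hb.2.1]
    · simpa using hab
    · rw [ha.2.2.2, hb.2.2.2]
  · intro y hy
    simp only [Finset.mem_filter, Finset.mem_univ, true_and] at hy
    obtain ⟨c, k1, k2, k3⟩ := C.ex i0 (y0 + y) z0
    have hg : g c - y0 = y := by rw [k2]; ring
    refine ⟨c, ?_, hg⟩
    simp only [Finset.mem_filter]
    refine ⟨K.Aq c k1 (by rw [hg]; exact hy.2) k3, k1, by rw [hg]; exact hy, k3⟩

set_option maxHeartbeats 1000000 in
theorem QEq (C : Ctx f g h p q r A B) (K : Corner f g h p q r A i0 i1 y0 z0)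
    {x b0 : R} (x1 : f x = i0) (x2 : g x = y0) (x3 : (r : Z) * (h x - z0) = 0) (x4 : x ∉ A)
    (hb0 : b0 ∈ B) :
    (p - 1) * (r - 1) * (Nc f g h A y0 i0 (h x) * Bc f g h B b0 (· = 0) IsUnit (· = 0)) +
    (p - 1) * (Nc f g h A y0 i0 z0 * Bc f g h B b0 (· = 0) IsUnit (Elow r)) +
    (r - 1) * (Nc f g h A y0 i1 (h x) * Bc f g h B b0 (Elow p) IsUnit (· = 0)) +
    (Nc f g h A y0 i1 z0 * Bc f g h B b0 (Elow p) IsUnit (Elow r)) +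
    (p - 1) * (q * (q - 1)) * Bc f g h B b0 (· = 0) (Elow q) (Elow r) =
    (p - 1) * (q * (q - 1)) * (r - 1) := by
  have hz : h x ≠ z0 := by
    intro hh
    exact x4 (K.Aq x x1 (by simp [x2]) hh)
  have hEi : Elow p (i1 - i0) := ⟨sub_ne_zero.2 K.hi, K.hi'⟩
  have hEi' : Elow p (i0 - i1) := Elow_sub.1 hEi
  have hEz : Elow r (h x - z0) := ⟨sub_ne_zero.2 hz, x3⟩
  obtain ⟨PX, hPX⟩ : ∃ P, P = Wt (i1 - i0) (i1 - i0) := ⟨_, rfl⟩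
  have hp1 : 0 < p - 1 := Nat.sub_pos_of_lt C.hp.one_lt
  have hcX : Nat.card Xˣ = (p - 1) * PX := by rw [hPX, Wt_E C.LX hEi hEi]
  have hW : ∀ s t : X, Elow p s → Elow p t → Wt s t = PX := by
    intro s t hs ht
    have := Wt_E C.LX hs ht
    rw [hcX] at this
    exact Nat.eq_of_mul_eq_mul_left hp1 this
  have hPpos : 0 < PX := by
    rcases Nat.eq_zero_or_pos PX with h0 | h0
    · exfalso
      rw [h0, mul_zero] at hcX
      exact (Nat.card_pos (α := Xˣ)).ne' hcX
    · exact h0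
  have hid := C.sum_id b0 x
  have hpt : ∀ ab ∈ A ×ˢ B, Wt (f x - f ab.1) (f ab.2 - f b0) * Wt (g x - g ab.1) (g ab.2 - g b0) *
      Wt (h x - h ab.1) (h ab.2 - h b0) =
      (if (f ab.1 = i0 ∧ IsUnit (g ab.1 - y0) ∧ h ab.1 = h x) ∧
        (f ab.2 - f b0 = 0 ∧ IsUnit (g ab.2 - g b0) ∧ h ab.2 - h b0 = 0) then (p - 1) * PX * (r * (r - 1)) else 0) +
      (if (f ab.1 = i0 ∧ IsUnit (g ab.1 - y0) ∧ h ab.1 = z0) ∧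
        (f ab.2 - f b0 = 0 ∧ IsUnit (g ab.2 - g b0) ∧ Elow r (h ab.2 - h b0)) then (p - 1) * PX * r else 0) +
      (if (f ab.1 = i1 ∧ IsUnit (g ab.1 - y0) ∧ h ab.1 = h x) ∧
        (Elow p (f ab.2 - f b0) ∧ IsUnit (g ab.2 - g b0) ∧ h ab.2 - h b0 = 0) then PX * (r * (r - 1)) else 0) +
      (if (f ab.1 = i1 ∧ IsUnit (g ab.1 - y0) ∧ h ab.1 = z0) ∧
        (Elow p (f ab.2 - f b0) ∧ IsUnit (g ab.2 - g b0) ∧ Elow r (h ab.2 - h b0)) then PX * r else 0) +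
      (if (f ab.1 = i0 ∧ Elow q (g ab.1 - y0) ∧ h ab.1 = z0) ∧
        (f ab.2 - f b0 = 0 ∧ Elow q (g ab.2 - g b0) ∧ Elow r (h ab.2 - h b0)) then (p - 1) * PX * (q * r) else 0) := by
    rintro ⟨a, b⟩ hab
    rw [Finset.mem_product] at hab
    simp only at hab ⊢
    have hne : i0 ≠ i1 := K.hi.symm
    by_cases n1 : f a = i0 ∧ IsUnit (g a - y0) ∧ h a = h x
    · obtain ⟨n1, n2, n3⟩ := n1
      have n4 : ¬ Elow q (g a - y0) := fun hh => C.LY.not_both hh.2 n2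
      simp only [n1, n2, n3, n4, hz, hne, true_and, false_and, and_false, if_false, add_zero]
      split_ifs with hc
      · rw [x1, hc.1, hc.2.2, x2, sub_self, sub_self, Wt_zero, Wt_zero, Wt_unit (IsUnit_sub.1 n2) hc.2.1, hcX, card_units C.LZ, mul_one]
      · by_contra hW0
        apply hc
        have w1 := (mul_ne_zero_iff.1 (mul_ne_zero_iff.1 hW0).1).1
        have w2 := (mul_ne_zero_iff.1 (mul_ne_zero_iff.1 hW0).1).2
        have w3 := (mul_ne_zero_iff.1 hW0).2
        refine ⟨(assoc_zero (Wt_pos w1)).2 (by rw [x1, sub_self]), (Wt_pos w2).symm.isUnit ?_,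
          (assoc_zero (Wt_pos w3)).2 (by rw [sub_self])⟩
        rw [x2]; exact IsUnit_sub.1 n2
    by_cases n1' : f a = i0 ∧ IsUnit (g a - y0) ∧ h a = z0
    · obtain ⟨n1, n2, n3⟩ := n1'
      have n4 : ¬ Elow q (g a - y0) := fun hh => C.LY.not_both hh.2 n2
      simp only [n1, n2, n3, n4, hz.symm, hne, true_and, false_and, and_false, if_false, add_zero, zero_add]
      split_ifs with hc
      · rw [x1, hc.1, x2, sub_self, Wt_zero, Wt_E2 C.hr C.LZ hEz hc.2.2, Wt_unit (IsUnit_sub.1 n2) hc.2.1, hcX, mul_one]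
      · by_contra hW0
        apply hc
        have w1 := (mul_ne_zero_iff.1 (mul_ne_zero_iff.1 hW0).1).1
        have w2 := (mul_ne_zero_iff.1 (mul_ne_zero_iff.1 hW0).1).2
        have w3 := (mul_ne_zero_iff.1 hW0).2
        refine ⟨(assoc_zero (Wt_pos w1)).2 (by rw [x1, sub_self]), (Wt_pos w2).symm.isUnit ?_,
          assoc_E (Wt_pos w3).symm hEz⟩
        rw [x2]; exact IsUnit_sub.1 n2
    by_cases n1'' : f a = i1 ∧ IsUnit (g a - y0) ∧ h a = h x
    · obtain ⟨n1, n2, n3⟩ := n1''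
      have n4 : ¬ Elow q (g a - y0) := fun hh => C.LY.not_both hh.2 n2
      simp only [n1, n2, n3, n4, hz, hne.symm, true_and, false_and, and_false, if_false, add_zero, zero_add]
      split_ifs with hc
      · rw [x1, hc.2.2, x2, sub_self, Wt_zero, hW _ _ hEi' hc.1, Wt_unit (IsUnit_sub.1 n2) hc.2.1, card_units C.LZ, mul_one]
      · by_contra hW0
        apply hc
        have w1 := (mul_ne_zero_iff.1 (mul_ne_zero_iff.1 hW0).1).1
        have w2 := (mul_ne_zero_iff.1 (mul_ne_zero_iff.1 hW0).1).2
        have w3 := (mul_ne_zero_iff.1 hW0).2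
        refine ⟨assoc_E (Wt_pos w1).symm (by rw [x1]; exact hEi'), (Wt_pos w2).symm.isUnit ?_,
          (assoc_zero (Wt_pos w3)).2 (by rw [sub_self])⟩
        rw [x2]; exact IsUnit_sub.1 n2
    by_cases nn13 : f a = i1 ∧ IsUnit (g a - y0) ∧ h a = z0
    · obtain ⟨n1, n2, n3⟩ := nn13
      have n4 : ¬ Elow q (g a - y0) := fun hh => C.LY.not_both hh.2 n2
      simp only [n1, n2, n3, n4, hz.symm, hne.symm, true_and, false_and, and_false, if_false, add_zero, zero_add]
      split_ifs with hc
      · rw [x1, x2, hW _ _ hEi' hc.1, Wt_unit (IsUnit_sub.1 n2) hc.2.1, Wt_E2 C.hr C.LZ hEz hc.2.2, mul_one]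
      · by_contra hW0
        apply hc
        have w1 := (mul_ne_zero_iff.1 (mul_ne_zero_iff.1 hW0).1).1
        have w2 := (mul_ne_zero_iff.1 (mul_ne_zero_iff.1 hW0).1).2
        have w3 := (mul_ne_zero_iff.1 hW0).2
        refine ⟨assoc_E (Wt_pos w1).symm (by rw [x1]; exact hEi'), (Wt_pos w2).symm.isUnit ?_,
          assoc_E (Wt_pos w3).symm hEz⟩
        rw [x2]; exact IsUnit_sub.1 n2
    by_cases n5 : f a = i0 ∧ Elow q (g a - y0) ∧ h a = z0
    · obtain ⟨n1, n2, n3⟩ := n5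
      have n4 : ¬ IsUnit (g a - y0) := C.LY.not_both n2.2
      simp only [n1, n2, n3, n4, hne, true_and, false_and, and_false, if_false, zero_add]
      split_ifs with hc
      · rw [x1, x2, hc.1, sub_self, Wt_zero, Wt_E2 C.hq C.LY (Elow_sub.1 n2) hc.2.1, Wt_E2 C.hr C.LZ hEz hc.2.2, hcX, mul_assoc]
      · by_contra hW0
        apply hc
        have w1 := (mul_ne_zero_iff.1 (mul_ne_zero_iff.1 hW0).1).1
        have w2 := (mul_ne_zero_iff.1 (mul_ne_zero_iff.1 hW0).1).2
        have w3 := (mul_ne_zero_iff.1 hW0).2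
        refine ⟨(assoc_zero (Wt_pos w1)).2 (by rw [x1, sub_self]), assoc_E (Wt_pos w2).symm ?_,
          assoc_E (Wt_pos w3).symm hEz⟩
        rw [x2]; exact Elow_sub.1 n2
    · simp only [n1, n1', n1'', nn13, n5, false_and, if_false, zero_add]
      by_contra hW0
      have w1 := (mul_ne_zero_iff.1 (mul_ne_zero_iff.1 hW0).1).1
      have w2 := (mul_ne_zero_iff.1 (mul_ne_zero_iff.1 hW0).1).2
      have w3 := (mul_ne_zero_iff.1 hW0).2
      have := assoc_cases C K x1 x2 x3 x4 hab.1 hab.2 hb0 (Wt_pos w1).symm (Wt_pos w2).symm (Wt_pos w3).symm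
      obtain ⟨t1, t2, t3⟩ := this
      rcases t3 with t3 | t3
      · rcases t1 with t1 | t1 <;> rcases t2 with t2 | t2
        · exact n1 ⟨t1, t3, t2⟩
        · exact n1' ⟨t1, t3, t2⟩
        · exact n1'' ⟨t1, t3, t2⟩
        · exact nn13 ⟨t1, t3, t2⟩
      · exact n5 t3
  rw [Finset.sum_congr rfl hpt] at hid
  simp only [Finset.sum_add_distrib] at hid
  rw [sum_ite_prod' A B (fun a => f a = i0 ∧ IsUnit (g a - y0) ∧ h a = h x) (fun b => f b - f b0 = 0 ∧ IsUnit (g b - g b0) ∧ h b - h b0 = 0) _ (Nc f g h A y0 i0 (h x)) (Bc f g h B b0 (· = 0) IsUnit (· = 0)) (by unfold Nc; congr) (by unfold Bc; congr),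
    sum_ite_prod' A B (fun a => f a = i0 ∧ IsUnit (g a - y0) ∧ h a = z0) (fun b => f b - f b0 = 0 ∧ IsUnit (g b - g b0) ∧ Elow r (h b - h b0)) _ (Nc f g h A y0 i0 z0) (Bc f g h B b0 (· = 0) IsUnit (Elow r)) (by unfold Nc; congr) (by unfold Bc; congr),
    sum_ite_prod' A B (fun a => f a = i1 ∧ IsUnit (g a - y0) ∧ h a = h x) (fun b => Elow p (f b - f b0) ∧ IsUnit (g b - g b0) ∧ h b - h b0 = 0) _ (Nc f g h A y0 i1 (h x)) (Bc f g h B b0 (Elow p) IsUnit (· = 0)) (by unfold Nc; congr) (by unfold Bc; congr),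
    sum_ite_prod' A B (fun a => f a = i1 ∧ IsUnit (g a - y0) ∧ h a = z0) (fun b => Elow p (f b - f b0) ∧ IsUnit (g b - g b0) ∧ Elow r (h b - h b0)) _ (Nc f g h A y0 i1 z0) (Bc f g h B b0 (Elow p) IsUnit (Elow r)) (by unfold Nc; congr) (by unfold Bc; congr),
    sum_ite_prod' A B (fun a => f a = i0 ∧ Elow q (g a - y0) ∧ h a = z0) (fun b => f b - f b0 = 0 ∧ Elow q (g b - g b0) ∧ Elow r (h b - h b0)) _ (q - 1) (Bc f g h B b0 (· = 0) (Elow q) (Elow r)) (by rw [← card_fiber C K]; congr) (by unfold Bc; congr),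
        hcX, card_units C.LY, card_units C.LZ] at hid
  apply Nat.eq_of_mul_eq_mul_left (Nat.mul_pos hPpos C.hr.pos)
  linear_combination hid

end Core

section Core
set_option linter.unusedSectionVars false
open scoped Classical

variable {R X Y Z : Type*} [CommRing R] [CommRing X] [CommRing Y] [CommRing Z]
variable [Fintype R] [Fintype X] [Fintype Y] [Fintype Z]

/-- counts of the five types of differences -/
noncomputable abbrev b1 (f : R →+* X) (g : R →+* Y) (h : R →+* Z) (B : Finset R) (b : R) : ℕ :=
  Bc f g h B b (· = 0) IsUnit (· = 0)
noncomputable abbrev b2 (f : R →+* X) (g : R →+* Y) (h : R →+* Z) (r : ℕ) (B : Finset R) (b : R) : ℕ :=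
  Bc f g h B b (· = 0) IsUnit (Elow r)
noncomputable abbrev b3 (f : R →+* X) (g : R →+* Y) (h : R →+* Z) (p : ℕ) (B : Finset R) (b : R) : ℕ :=
  Bc f g h B b (Elow p) IsUnit (· = 0)
noncomputable abbrev b4 (f : R →+* X) (g : R →+* Y) (h : R →+* Z) (p r : ℕ) (B : Finset R) (b : R) : ℕ :=
  Bc f g h B b (Elow p) IsUnit (Elow r)
noncomputable abbrev be (f : R →+* X) (g : R →+* Y) (h : R →+* Z) (q r : ℕ) (B : Finset R) (b : R) : ℕ :=
  Bc f g h B b (· = 0) (Elow q) (Elow r)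

/-- holes next to the corner -/
def Hole (f : R →+* X) (g : R →+* Y) (h : R →+* Z) (r : ℕ) (A : Finset R) (i0 : X) (y0 : Y) (z0 : Z) (x : R) : Prop :=
  f x = i0 ∧ g x = y0 ∧ (r : Z) * (h x - z0) = 0 ∧ x ∉ A

variable {f : R →+* X} {g : R →+* Y} {h : R →+* Z} {p q r : ℕ} {A B : Finset R}
variable {i0 i1 : X} {y0 : Y} {z0 : Z}

theorem Nc_ne {i : X} {z : Z} (H : Nc f g h A y0 i z ≠ 0) :
    ∃ a ∈ A, f a = i ∧ IsUnit (g a - y0) ∧ h a = z := by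
  obtain ⟨a, ha⟩ := Finset.card_ne_zero.1 H
  rw [Finset.mem_filter] at ha
  exact ⟨a, ha⟩

theorem Hole.ne (K : Corner f g h p q r A i0 i1 y0 z0) {x : R} (hx : Hole f g h r A i0 y0 z0 x) : h x ≠ z0 := by
  intro hh
  exact hx.2.2.2 (K.Aq x hx.1 (by simp [hx.2.1]) hh)

theorem corner_mem (C : Ctx f g h p q r A B) (K : Corner f g h p q r A i0 i1 y0 z0) :
    ∃ c ∈ A, f c = i0 ∧ g c = y0 ∧ h c = z0 := by
  obtain ⟨c, k1, k2, k3⟩ := C.ex i0 y0 z0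
  exact ⟨c, K.Aq c k1 (by simp [k2]) k3, k1, k2, k3⟩

theorem corner_mem1 (C : Ctx f g h p q r A B) (K : Corner f g h p q r A i0 i1 y0 z0) (z : Z)
    (hz : (r : Z) * (z - z0) = 0) :
    ∃ c ∈ A, f c = i1 ∧ g c = y0 ∧ h c = z := by
  obtain ⟨c, k1, k2, k3⟩ := C.ex i1 y0 z
  exact ⟨c, K.Ar c k1 k2 (by rw [k3]; exact hz), k1, k2, k3⟩

theorem unit_ne {a c : R} (hY : Lv2 q Y) (hu : IsUnit (g a - y0)) (hc : g c = y0) : a ≠ c := by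
  rintro rfl
  rw [hc, sub_self] at hu
  exact hY.not_both (mul_zero _) hu

theorem excl (C : Ctx f g h p q r A B) (K : Corner f g h p q r A i0 i1 y0 z0) {x : R}
    (hx : Hole f g h r A i0 y0 z0 x) {b : R} (hb : b ∈ B) :
    (Nc f g h A y0 i0 (h x) ≠ 0 → b2 f g h r B b = 0 ∧ b3 f g h p B b = 0 ∧ b4 f g h p r B b = 0) ∧
    (Nc f g h A y0 i0 z0 ≠ 0 → b1 f g h B b = 0 ∧ b3 f g h p B b = 0 ∧ b4 f g h p r B b = 0) ∧
    (Nc f g h A y0 i1 (h x) ≠ 0 → b1 f g h B b = 0 ∧ b2 f g h r B b = 0 ∧ b4 f g h p r B b = 0) ∧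
    (Nc f g h A y0 i1 z0 ≠ 0 → b1 f g h B b = 0 ∧ b2 f g h r B b = 0 ∧ b3 f g h p B b = 0) := by
  have hEi : Elow p (i1 - i0) := ⟨sub_ne_zero.2 K.hi, K.hi'⟩
  have hEi' : Elow p (i0 - i1) := Elow_sub.1 hEi
  have hEz : Elow r (h x - z0) := ⟨sub_ne_zero.2 (hx.ne K), hx.2.2.1⟩
  have hEz' : Elow r (z0 - h x) := Elow_sub.1 hEz
  obtain ⟨c, hc, c1, c2, c3⟩ := corner_mem C K
  obtain ⟨d, hd, d1, d2, d3⟩ := corner_mem1 C K (h x) hx.2.2.1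
  obtain ⟨e, he, e1, e2, e3⟩ := corner_mem1 C K z0 (by simp)
  have cX := Cl_E C.LX
  have cZ := Cl_E C.LZ.toLv
  refine ⟨fun H => ?_, fun H => ?_, fun H => ?_, fun H => ?_⟩ <;>
    obtain ⟨a, ha, a1, a2, a3⟩ := Nc_ne H <;>
    refine ⟨Bc_zero ?_, Bc_zero ?_, Bc_zero ?_⟩
  · exact C.noB Cl_zero Cl_unit cZ ha hc (unit_ne C.LY a2 c2) (by simp [a1, c1]) (by rw [c2]; exact a2) (by rw [a3, c3]; exact hEz) b hb
  · exact C.noB cX Cl_unit Cl_zero ha hd (unit_ne C.LY a2 d2) (by rw [a1, d1]; exact hEi') (by rw [d2]; exact a2) (by simp [a3, d3]) b hb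
  · exact C.noB cX Cl_unit cZ ha he (unit_ne C.LY a2 e2) (by rw [a1, e1]; exact hEi') (by rw [e2]; exact a2) (by rw [a3, e3]; exact hEz) b hb
  · exact C.noB Cl_zero Cl_unit Cl_zero ha hc (unit_ne C.LY a2 c2) (by simp [a1, c1]) (by rw [c2]; exact a2) (by simp [a3, c3]) b hb
  · exact C.noB cX Cl_unit Cl_zero ha he (unit_ne C.LY a2 e2) (by rw [a1, e1]; exact hEi') (by rw [e2]; exact a2) (by simp [a3, e3]) b hb
  · exact C.noB cX Cl_unit cZ ha hd (unit_ne C.LY a2 d2) (by rw [a1, d1]; exact hEi') (by rw [d2]; exact a2) (by rw [a3, d3]; exact hEz') b hb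
  · exact C.noB Cl_zero Cl_unit Cl_zero ha hd (unit_ne C.LY a2 d2) (by simp [a1, d1]) (by rw [d2]; exact a2) (by simp [a3, d3]) b hb
  · exact C.noB Cl_zero Cl_unit cZ ha he (unit_ne C.LY a2 e2) (by simp [a1, e1]) (by rw [e2]; exact a2) (by rw [a3, e3]; exact hEz) b hb
  · exact C.noB cX Cl_unit cZ ha hc (unit_ne C.LY a2 c2) (by rw [a1, c1]; exact hEi) (by rw [c2]; exact a2) (by rw [a3, c3]; exact hEz) b hb
  · exact C.noB Cl_zero Cl_unit Cl_zero ha he (unit_ne C.LY a2 e2) (by simp [a1, e1]) (by rw [e2]; exact a2) (by simp [a3, e3]) b hb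
  · exact C.noB Cl_zero Cl_unit cZ ha hd (unit_ne C.LY a2 d2) (by simp [a1, d1]) (by rw [d2]; exact a2) (by rw [a3, d3]; exact hEz') b hb
  · exact C.noB cX Cl_unit Cl_zero ha hc (unit_ne C.LY a2 c2) (by rw [a1, c1]; exact hEi) (by rw [c2]; exact a2) (by simp [a3, c3]) b hb

/-- four possible cases -/
def Q1 (f : R →+* X) (g : R →+* Y) (h : R →+* Z) (p q r : ℕ) (A B : Finset R) (i0 : X) (y0 : Y) (z0 : Z) : Prop :=
  (∀ b ∈ B, b2 f g h r B b = 0 ∧ b3 f g h p B b = 0 ∧ b4 f g h p r B b = 0) ∧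
  ∀ x, Hole f g h r A i0 y0 z0 x → ∀ b ∈ B,
    (r - 1) * (Nc f g h A y0 i0 (h x) * b1 f g h B b) + q * (q - 1) * be f g h q r B b = q * (q - 1) * (r - 1)
def Q2 (f : R →+* X) (g : R →+* Y) (h : R →+* Z) (p q r : ℕ) (A B : Finset R) (i0 : X) (y0 : Y) (z0 : Z) : Prop :=
  (∀ b ∈ B, b1 f g h B b = 0 ∧ b3 f g h p B b = 0 ∧ b4 f g h p r B b = 0) ∧ ∀ b ∈ B,
    (Nc f g h A y0 i0 z0 * b2 f g h r B b) + q * (q - 1) * be f g h q r B b = q * (q - 1) * (r - 1)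
def Q3 (f : R →+* X) (g : R →+* Y) (h : R →+* Z) (p q r : ℕ) (A B : Finset R) (i0 i1 : X) (y0 : Y) (z0 : Z) : Prop :=
  (∀ b ∈ B, b1 f g h B b = 0 ∧ b2 f g h r B b = 0 ∧ b4 f g h p r B b = 0) ∧
  ∀ x, Hole f g h r A i0 y0 z0 x → ∀ b ∈ B,
    (r - 1) * (Nc f g h A y0 i1 (h x) * b3 f g h p B b) + (p - 1) * (q * (q - 1)) * be f g h q r B b
      = (p - 1) * (q * (q - 1)) * (r - 1)
def Q4 (f : R →+* X) (g : R →+* Y) (h : R →+* Z) (p q r : ℕ) (A B : Finset R) (i1 : X) (y0 : Y) (z0 : Z) : Prop :=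
  (∀ b ∈ B, b1 f g h B b = 0 ∧ b2 f g h r B b = 0 ∧ b3 f g h p B b = 0) ∧ ∀ b ∈ B,
    (Nc f g h A y0 i1 z0 * b4 f g h p r B b) + (p - 1) * (q * (q - 1)) * be f g h q r B b
      = (p - 1) * (q * (q - 1)) * (r - 1)

theorem Qcase (C : Ctx f g h p q r A B) (K : Corner f g h p q r A i0 i1 y0 z0)
    (hE : ∃ b ∈ B, be f g h q r B b ≠ r - 1) :
    Q1 f g h p q r A B i0 y0 z0 ∨ Q2 f g h p q r A B i0 y0 z0 ∨ Q3 f g h p q r A B i0 i1 y0 z0 ∨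
      Q4 f g h p q r A B i1 y0 z0 := by
  have hp1 : 0 < p - 1 := Nat.sub_pos_of_lt C.hp.one_lt
  have hq1 : 0 < q - 1 := Nat.sub_pos_of_lt C.hq.one_lt
  have hqq : 0 < q * (q - 1) := Nat.mul_pos C.hq.pos hq1
  obtain ⟨bb, hbb, hbe⟩ := hE
  obtain ⟨x, hx⟩ : ∃ x, Hole f g h r A i0 y0 z0 x := by
    obtain ⟨c, c1, c2, c3, c4⟩ := K.nA0
    exact ⟨c, c1, c2, c3, c4⟩
  have hEQ : ∀ x, Hole f g h r A i0 y0 z0 x → ∀ b ∈ B,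
      (p - 1) * (r - 1) * (Nc f g h A y0 i0 (h x) * b1 f g h B b) + (p - 1) * (Nc f g h A y0 i0 z0 * b2 f g h r B b) +
      (r - 1) * (Nc f g h A y0 i1 (h x) * b3 f g h p B b) + (Nc f g h A y0 i1 z0 * b4 f g h p r B b) +
      (p - 1) * (q * (q - 1)) * be f g h q r B b = (p - 1) * (q * (q - 1)) * (r - 1) :=
    fun x (hx : Hole f g h r A i0 y0 z0 x) b (hb : b ∈ B) => QEq C K hx.1 hx.2.1 hx.2.2.1 hx.2.2.2 hb
  have hex := fun x (hx : Hole f g h r A i0 y0 z0 x) b (hb : b ∈ B) => excl C K hx hb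
  have hnot : ∀ x, Hole f g h r A i0 y0 z0 x →
      ¬ (Nc f g h A y0 i0 (h x) * b1 f g h B bb = 0 ∧ Nc f g h A y0 i0 z0 * b2 f g h r B bb = 0 ∧
      Nc f g h A y0 i1 (h x) * b3 f g h p B bb = 0 ∧ Nc f g h A y0 i1 z0 * b4 f g h p r B bb = 0) := by
    rintro x hx ⟨m1, m2, m3, m4⟩
    have := hEQ x hx bb hbb
    rw [m1, m2, m3, m4] at this
    apply hbe
    apply Nat.eq_of_mul_eq_mul_left (Nat.mul_pos hp1 hqq)
    simpa using this
  by_cases m1 : b1 f g h B bb = 0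
  · by_cases m2 : b2 f g h r B bb = 0
    · by_cases m3 : b3 f g h p B bb = 0
      · right; right; right
        have hN : Nc f g h A y0 i1 z0 ≠ 0 := by
          intro hN; apply hnot x hx; simp [m1, m2, m3, hN]
        refine ⟨fun b hb => (hex x hx b hb).2.2.2 hN, fun b hb => ?_⟩
        have := hEQ x hx b hb
        obtain ⟨k1, k2, k3⟩ := (hex x hx b hb).2.2.2 hN
        rw [k1, k2, k3] at this
        simpa using this
      · right; right; left
        have hN : ∀ x, Hole f g h r A i0 y0 z0 x → Nc f g h A y0 i1 (h x) ≠ 0 := by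
          intro x hx hN
          apply hnot x hx
          simp only [m1, m2, hN, mul_zero, zero_mul, true_and]
          by_contra h4
          exact m3 ((hex x hx bb hbb).2.2.2 (left_ne_zero_of_mul h4)).2.2
        refine ⟨fun b hb => (hex x hx b hb).2.2.1 (hN x hx), fun x hx b hb => ?_⟩
        have := hEQ x hx b hb
        obtain ⟨k1, k2, k3⟩ := (hex x hx b hb).2.2.1 (hN x hx)
        rw [k1, k2, k3] at this
        simpa using this
    · right; left
      have hN : Nc f g h A y0 i0 z0 ≠ 0 := by
        intro hN
        apply hnot x hx
        refine ⟨by simp [m1], by simp [hN], ?_, ?_⟩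
        · by_contra h4
          exact m2 ((hex x hx bb hbb).2.2.1 (left_ne_zero_of_mul h4)).2.1
        · by_contra h4
          exact m2 ((hex x hx bb hbb).2.2.2 (left_ne_zero_of_mul h4)).2.1
      refine ⟨fun b hb => (hex x hx b hb).2.1 hN, fun b hb => ?_⟩
      have := hEQ x hx b hb
      obtain ⟨k1, k2, k3⟩ := (hex x hx b hb).2.1 hN
      rw [k1, k2, k3] at this
      apply Nat.eq_of_mul_eq_mul_left hp1
      simp only [mul_zero, add_zero, zero_add] at this
      linear_combination this
  · left
    have hN : ∀ x, Hole f g h r A i0 y0 z0 x → Nc f g h A y0 i0 (h x) ≠ 0 := by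
      intro x hx hN
      apply hnot x hx
      refine ⟨by simp [hN], ?_, ?_, ?_⟩
      · by_contra h4
        exact m1 ((hex x hx bb hbb).2.1 (left_ne_zero_of_mul h4)).1
      · by_contra h4
        exact m1 ((hex x hx bb hbb).2.2.1 (left_ne_zero_of_mul h4)).1
      · by_contra h4
        exact m1 ((hex x hx bb hbb).2.2.2 (left_ne_zero_of_mul h4)).1
    refine ⟨fun b hb => (hex x hx b hb).1 (hN x hx), fun x hx b hb => ?_⟩
    have := hEQ x hx b hb
    obtain ⟨k1, k2, k3⟩ := (hex x hx b hb).1 (hN x hx)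
    rw [k1, k2, k3] at this
    apply Nat.eq_of_mul_eq_mul_left hp1
    simp only [mul_zero, add_zero, zero_add] at this
    linear_combination this

end Core

section Core
set_option linter.unusedSectionVars false
open scoped Classical

variable {R X Y Z : Type*} [CommRing R] [CommRing X] [CommRing Y] [CommRing Z]
variable [Fintype R] [Fintype X] [Fintype Y] [Fintype Z]
variable {f : R →+* X} {g : R →+* Y} {h : R →+* Z} {p q r : ℕ} {A B : Finset R}
variable {i0 i1 : X} {y0 : Y} {z0 : Z}

theorem card_unit_T (hq : q.Prime) (LY : Lv2 q Y) (T : Finset R)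
    (H : ∀ x ∈ T, ∀ x' ∈ T, (q : Y) * (g x - g x') = 0 → x = x') : T.card ≤ q := by
  have hinj : Set.InjOn g (T : Set R) := by
    intro x hx x' hx' he
    exact H x hx x' hx' (by rw [he, sub_self, mul_zero])
  rw [← Finset.card_image_of_injOn hinj]
  apply card_le_of_unit hq LY
  intro x hx y hy hxy
  rw [Finset.mem_image] at hx hy
  obtain ⟨s, hs, rfl⟩ := hx
  obtain ⟨t, ht, rfl⟩ := hy
  rw [LY.unit_iff]
  intro h0
  exact hxy (by rw [H s hs t ht h0])

theorem card_low_T {k : ℕ} {W : Type*} [CommRing W] [Fintype W] (φ : R →+* W) (L : Lv k W) (T : Finset R)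
    (H : ∀ x ∈ T, ∀ x' ∈ T, (k : W) * (φ x - φ x') = 0)
    (H2 : ∀ x ∈ T, ∀ x' ∈ T, φ x = φ x' → x = x') : T.card ≤ k := by
  have hinj : Set.InjOn φ (T : Set R) := fun x hx x' hx' he => H2 x hx x' hx' he
  rw [← Finset.card_image_of_injOn hinj]
  apply card_le_of_low L
  intro x hx y hy
  rw [Finset.mem_image] at hx hy
  obtain ⟨s, hs, rfl⟩ := hx
  obtain ⟨t, ht, rfl⟩ := hy
  exact H s hs t ht

/-- type class of `b` in `B` with `b` added -/
noncomputable def BI (f : R →+* X) (g : R →+* Y) (h : R →+* Z) (B : Finset R) (b : R)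
    (P : X → Prop) (Q : Y → Prop) (S : Z → Prop) : Finset R :=
  B.filter (fun b' => b' = b ∨ (P (f b' - f b) ∧ Q (g b' - g b) ∧ S (h b' - h b)))

theorem mem_BI {P : X → Prop} {Q : Y → Prop} {S : Z → Prop} {b x : R} : x ∈ BI f g h B b P Q S ↔
    x ∈ B ∧ (x = b ∨ (P (f x - f b) ∧ Q (g x - g b) ∧ S (h x - h b))) := by
  unfold BI; rw [Finset.mem_filter]

theorem Bc_insert {P : X → Prop} {Q : Y → Prop} {S : Z → Prop} {b : R} (hb : b ∈ B)
    (hn : ¬ (P 0 ∧ Q 0 ∧ S 0)) :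
    (BI f g h B b P Q S).card = 1 + Bc f g h B b P Q S := by
  have : BI f g h B b P Q S =
    insert b (B.filter (fun b' => (P (f b' - f b) ∧ Q (g b' - g b) ∧ S (h b' - h b)))) := by
    ext c
    simp only [mem_BI, Finset.mem_filter, Finset.mem_insert]
    constructor
    · rintro ⟨h1, h2 | h2⟩
      · exact Or.inl h2
      · exact Or.inr ⟨h1, h2⟩
    · rintro (h2 | h2)
      · subst h2; exact ⟨hb, Or.inl rfl⟩
      · exact ⟨h2.1, Or.inr h2.2⟩
  rw [this, Finset.card_insert_of_notMem, add_comm]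
  · rfl
  · simp only [Finset.mem_filter, sub_self]
    tauto

theorem nb1 (C : Ctx f g h p q r A B) (H : ∀ b ∈ B, b1 f g h B b = 0) {b b' : R} (hb : b ∈ B) (hb' : b' ∈ B)
    (k1 : f b - f b' = 0) (k2 : h b - h b' = 0) : (q : Y) * (g b - g b') = 0 := by
  by_contra hc
  exact Bc_zero_iff.1 (H b' hb') b hb ⟨k1, (C.LY.unit_iff _).2 hc, k2⟩

theorem nb2 (C : Ctx f g h p q r A B) (H : ∀ b ∈ B, b2 f g h r B b = 0) {b b' : R} (hb : b ∈ B) (hb' : b' ∈ B)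
    (k1 : f b - f b' = 0) (k2 : Elow r (h b - h b')) : (q : Y) * (g b - g b') = 0 := by
  by_contra hc
  exact Bc_zero_iff.1 (H b' hb') b hb ⟨k1, (C.LY.unit_iff _).2 hc, k2⟩

theorem nb3 (C : Ctx f g h p q r A B) (H : ∀ b ∈ B, b3 f g h p B b = 0) {b b' : R} (hb : b ∈ B) (hb' : b' ∈ B)
    (k1 : Elow p (f b - f b')) (k2 : h b - h b' = 0) : (q : Y) * (g b - g b') = 0 := by
  by_contra hc
  exact Bc_zero_iff.1 (H b' hb') b hb ⟨k1, (C.LY.unit_iff _).2 hc, k2⟩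

theorem nb13 (C : Ctx f g h p q r A B) (H : ∀ b ∈ B, b1 f g h B b = 0) (H3 : ∀ b ∈ B, b3 f g h p B b = 0)
    {b b' : R} (hb : b ∈ B) (hb' : b' ∈ B)
    (k1 : (p : X) * (f b - f b') = 0) (k2 : h b - h b' = 0) : (q : Y) * (g b - g b') = 0 := by
  by_cases h0 : f b - f b' = 0
  · exact nb1 C H hb hb' h0 k2
  · exact nb3 C H3 hb hb' ⟨h0, k1⟩ k2

theorem nb12 (C : Ctx f g h p q r A B) (H : ∀ b ∈ B, b1 f g h B b = 0) (H3 : ∀ b ∈ B, b2 f g h r B b = 0)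
    {b b' : R} (hb : b ∈ B) (hb' : b' ∈ B)
    (k1 : (f b - f b') = 0) (k2 : (r : Z) * (h b - h b') = 0) : (q : Y) * (g b - g b') = 0 := by
  by_cases h0 : h b - h b' = 0
  · exact nb1 C H hb hb' k1 h0
  · exact nb2 C H3 hb hb' k1 ⟨h0, k2⟩

theorem nbe (C : Ctx f g h p q r A B) (K : Corner f g h p q r A i0 i1 y0 z0)
    (H : ∀ b ∈ B, be f g h q r B b = 0) {b b' : R} (hb : b ∈ B) (hb' : b' ∈ B)
    (k1 : (p : X) * (f b - f b') = 0) (k2 : (q : Y) * (g b - g b') = 0) (k3 : (r : Z) * (h b - h b') = 0) : b = b' := by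
  rcases C.low K hb hb' k1 k2 k3 with h0 | h0
  · exact h0
  · exact absurd h0 (Bc_zero_iff.1 (H b' hb') b hb)

theorem B1le (C : Ctx f g h p q r A B) (K : Corner f g h p q r A i0 i1 y0 z0) {b : R} (hb : b ∈ B) :
    1 + b1 f g h B b ≤ q := by
  rw [← Bc_insert hb (by intro hh; exact C.LY.not_both (mul_zero _) hh.2.1)]
  apply card_unit_T (g := g) C.hq C.LY
  have key : ∀ x, (x ∈ B ∧ (x = b ∨ (f x - f b = 0 ∧ IsUnit (g x - g b) ∧ h x - h b = 0))) →
      x ∈ B ∧ f x = f b ∧ h x = h b := by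
    intro x hx
    obtain ⟨x1, rfl | x2⟩ := hx
    · exact ⟨x1, rfl, rfl⟩
    · exact ⟨x1, sub_eq_zero.1 x2.1, sub_eq_zero.1 x2.2.2⟩
  intro x hx x' hx' he
  obtain ⟨x1, x2, x3⟩ := key x (mem_BI.1 hx)
  obtain ⟨y1, y2, y3⟩ := key x' (mem_BI.1 hx')
  rcases C.low K x1 y1 (by rw [x2, y2]; simp) he (by rw [x3, y3]; simp) with h0 | h0
  · exact h0
  · exact absurd (by rw [x3, y3, sub_self]) h0.2.2.1

theorem Bele (C : Ctx f g h p q r A B) (K : Corner f g h p q r A i0 i1 y0 z0) {b : R} (hb : b ∈ B) :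
    1 + be f g h q r B b ≤ r := by
  rw [← Bc_insert hb (by intro hh; exact hh.2.1.1 rfl)]
  have key : ∀ x, (x ∈ B ∧ (x = b ∨ (f x - f b = 0 ∧ Elow q (g x - g b) ∧ Elow r (h x - h b)))) →
      x ∈ B ∧ f x = f b ∧ (q : Y) * (g x - g b) = 0 ∧ (r : Z) * (h x - h b) = 0 := by
    intro x hx
    obtain ⟨x1, rfl | x2⟩ := hx
    · exact ⟨x1, rfl, by simp, by simp⟩
    · exact ⟨x1, sub_eq_zero.1 x2.1, x2.2.1.2, x2.2.2.2⟩
  apply card_low_T h C.LZ.toLv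
  · intro x hx x' hx'
    obtain ⟨x1, x2, x3, x4⟩ := key x (mem_BI.1 hx)
    obtain ⟨y1, y2, y3, y4⟩ := key x' (mem_BI.1 hx')
    linear_combination x4 - y4
  · intro x hx x' hx' he
    obtain ⟨x1, x2, x3, x4⟩ := key x (mem_BI.1 hx)
    obtain ⟨y1, y2, y3, y4⟩ := key x' (mem_BI.1 hx')
    rcases C.low K x1 y1 (by rw [x2, y2]; simp) (by linear_combination x3 - y3) (by rw [he]; simp) with h0 | h0
    · exact h0
    · exact absurd (by rw [he, sub_self]) h0.2.2.1

/-- elements of `B` low in the first and third coordinates -/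
noncomputable def Sset (f : R →+* X) (h : R →+* Z) (p r : ℕ) (B : Finset R) (b : R) : Finset R :=
  B.filter (fun b' => (p : X) * (f b' - f b) = 0 ∧ (r : Z) * (h b' - h b) = 0)

theorem mem_Sset {b b' : R} : b' ∈ Sset f h p r B b ↔ b' ∈ B ∧ (p : X) * (f b' - f b) = 0 ∧ (r : Z) * (h b' - h b) = 0 := by
  unfold Sset; rw [Finset.mem_filter]

theorem Sset_le (C : Ctx f g h p q r A B) (K : Corner f g h p q r A i0 i1 y0 z0)
    (H1 : ∀ b ∈ B, b1 f g h B b = 0) (H3 : ∀ b ∈ B, b3 f g h p B b = 0) {b : R} :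
    (Sset f h p r B b).card ≤ r := by
  apply card_low_T h C.LZ.toLv
  · intro x hx x' hx'
    rw [mem_Sset] at hx hx'
    linear_combination hx.2.2 - hx'.2.2
  · intro x hx x' hx' he
    rw [mem_Sset] at hx hx'
    have k1 : (p : X) * (f x - f x') = 0 := by linear_combination hx.2.1 - hx'.2.1
    have k3 : h x - h x' = 0 := by rw [he, sub_self]
    have k2 := nb13 C H1 H3 hx.1 hx'.1 k1 k3
    rcases C.low K hx.1 hx'.1 k1 k2 (by rw [k3, mul_zero]) with h0 | h0
    · exact h0
    · exact absurd k3 h0.2.2.1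

theorem Sset_card (C : Ctx f g h p q r A B) (K : Corner f g h p q r A i0 i1 y0 z0)
    (H1 : ∀ b ∈ B, b1 f g h B b = 0) (H3 : ∀ b ∈ B, b3 f g h p B b = 0) {b : R} (hb : b ∈ B) :
    (Sset f h p r B b).card = 1 + be f g h q r B b + b2 f g h r B b + b4 f g h p r B b := by
  rw [← Bc_insert hb (by intro hh; exact hh.2.1.1 rfl)]
  unfold b2 b4 Bc
  rw [← Finset.card_union_of_disjoint, ← Finset.card_union_of_disjoint]
  · congr 1
    ext x
    simp only [mem_Sset, Finset.mem_union, Finset.mem_filter, mem_BI]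
    constructor
    · rintro ⟨x1, x2, x3⟩
      by_cases k : (q : Y) * (g x - g b) = 0
      · rcases C.low K x1 hb x2 k x3 with h0 | h0
        · exact Or.inl (Or.inl ⟨x1, Or.inl h0⟩)
        · exact Or.inl (Or.inl ⟨x1, Or.inr h0⟩)
      · have hh : h x - h b ≠ 0 := fun h0 => k (nb13 C H1 H3 x1 hb x2 h0)
        have hu := (C.LY.unit_iff _).2 k
        by_cases k' : f x - f b = 0
        · exact Or.inl (Or.inr ⟨x1, k', hu, hh, x3⟩)
        · exact Or.inr ⟨x1, ⟨k', x2⟩, hu, hh, x3⟩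
    · rintro ((⟨x1, rfl | x2⟩ | x2) | x2)
      · simp [x1]
      · exact ⟨x1, by rw [x2.1, mul_zero], x2.2.2.2⟩
      · exact ⟨x2.1, by rw [x2.2.1, mul_zero], x2.2.2.2.2⟩
      · exact ⟨x2.1, x2.2.1.2, x2.2.2.2.2⟩
  · rw [Finset.disjoint_left]
    intro x hx hx'
    simp only [Finset.mem_union, Finset.mem_filter, mem_BI] at hx hx'
    obtain ⟨x1, ⟨x2, _⟩, x3, x4⟩ := hx'
    rcases hx with ⟨_, rfl | h0⟩ | h0
    · exact x2 (sub_self _)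
    · exact x2 h0.1
    · exact x2 h0.2.1
  · rw [Finset.disjoint_left]
    intro x hx hx'
    simp only [Finset.mem_filter, mem_BI] at hx hx'
    obtain ⟨x1, x2, x3, x4⟩ := hx'
    rcases hx with ⟨_, rfl | h0⟩
    · rw [sub_self] at x3; exact C.LY.not_both (mul_zero _) x3
    · exact C.LY.not_both h0.2.1.2 x3

theorem B3le (C : Ctx f g h p q r A B) (K : Corner f g h p q r A i0 i1 y0 z0)
    (H1 : ∀ b ∈ B, b1 f g h B b = 0) {b : R} (hb : b ∈ B) :
    1 + b3 f g h p B b ≤ p := by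
  rw [← Bc_insert hb (by intro hh; exact hh.1.1 rfl)]
  have key : ∀ x, (x ∈ B ∧ (x = b ∨ (Elow p (f x - f b) ∧ IsUnit (g x - g b) ∧ h x - h b = 0))) →
      x ∈ B ∧ (p : X) * (f x - f b) = 0 ∧ h x = h b := by
    intro x hx
    obtain ⟨x1, rfl | x2⟩ := hx
    · exact ⟨x1, by simp, rfl⟩
    · exact ⟨x1, x2.1.2, sub_eq_zero.1 x2.2.2⟩
  apply card_low_T f C.LX
  · intro x hx x' hx'
    obtain ⟨x1, x2, x3⟩ := key x (mem_BI.1 hx)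
    obtain ⟨y1, y2, y3⟩ := key x' (mem_BI.1 hx')
    linear_combination x2 - y2
  · intro x hx x' hx' he
    obtain ⟨x1, x2, x3⟩ := key x (mem_BI.1 hx)
    obtain ⟨y1, y2, y3⟩ := key x' (mem_BI.1 hx')
    have k2 := nb1 C H1 x1 y1 (by rw [he, sub_self]) (by rw [x3, y3, sub_self])
    rcases C.low K x1 y1 (by rw [he]; simp) k2 (by rw [x3, y3]; simp) with h0 | h0
    · exact h0
    · exact absurd (by rw [x3, y3, sub_self]) h0.2.2.1

theorem B3leq (C : Ctx f g h p q r A B) (K : Corner f g h p q r A i0 i1 y0 z0)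
    {b : R} (hb : b ∈ B) :
    1 + b3 f g h p B b ≤ q := by
  rw [← Bc_insert hb (by intro hh; exact hh.1.1 rfl)]
  have key : ∀ x, (x ∈ B ∧ (x = b ∨ (Elow p (f x - f b) ∧ IsUnit (g x - g b) ∧ h x - h b = 0))) →
      x ∈ B ∧ (p : X) * (f x - f b) = 0 ∧ h x = h b := by
    intro x hx
    obtain ⟨x1, rfl | x2⟩ := hx
    · exact ⟨x1, by simp, rfl⟩
    · exact ⟨x1, x2.1.2, sub_eq_zero.1 x2.2.2⟩
  apply card_unit_T (g := g) C.hq C.LY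
  intro x hx x' hx' he
  obtain ⟨x1, x2, x3⟩ := key x (mem_BI.1 hx)
  obtain ⟨y1, y2, y3⟩ := key x' (mem_BI.1 hx')
  rcases C.low K x1 y1 (by linear_combination x2 - y2) he (by rw [x3, y3]; simp) with h0 | h0
  · exact h0
  · exact absurd (by rw [x3, y3, sub_self]) h0.2.2.1

theorem B2leq (C : Ctx f g h p q r A B) (K : Corner f g h p q r A i0 i1 y0 z0)
    (He : ∀ b ∈ B, be f g h q r B b = 0) {b : R} (hb : b ∈ B) :
    1 + b2 f g h r B b ≤ q := by
  rw [← Bc_insert hb (by intro hh; exact hh.2.2.1 rfl)]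
  have key : ∀ x, (x ∈ B ∧ (x = b ∨ (f x - f b = 0 ∧ IsUnit (g x - g b) ∧ Elow r (h x - h b)))) →
      x ∈ B ∧ (f x = f b) ∧ (r : Z) * (h x - h b) = 0 := by
    intro x hx
    obtain ⟨x1, rfl | x2⟩ := hx
    · exact ⟨x1, by simp, by simp⟩
    · exact ⟨x1, sub_eq_zero.1 x2.1, x2.2.2.2⟩
  apply card_unit_T (g := g) C.hq C.LY
  intro x hx x' hx' he
  obtain ⟨x1, x2, x3⟩ := key x (mem_BI.1 hx)
  obtain ⟨y1, y2, y3⟩ := key x' (mem_BI.1 hx')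
  exact nbe C K He x1 y1 (by rw [x2, y2]; simp) he (by linear_combination x3 - y3)

theorem B4lep (C : Ctx f g h p q r A B) (K : Corner f g h p q r A i0 i1 y0 z0)
    (He : ∀ b ∈ B, be f g h q r B b = 0) (H1 : ∀ b ∈ B, b1 f g h B b = 0) (H2 : ∀ b ∈ B, b2 f g h r B b = 0)
    {b : R} (hb : b ∈ B) :
    1 + b4 f g h p r B b ≤ p := by
  rw [← Bc_insert hb (by intro hh; exact hh.2.2.1 rfl)]
  have key : ∀ x, (x ∈ B ∧ (x = b ∨ (Elow p (f x - f b) ∧ IsUnit (g x - g b) ∧ Elow r (h x - h b)))) →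
      x ∈ B ∧ (p : X) * (f x - f b) = 0 ∧ (r : Z) * (h x - h b) = 0 := by
    intro x hx
    obtain ⟨x1, rfl | x2⟩ := hx
    · exact ⟨x1, by simp, by simp⟩
    · exact ⟨x1, x2.1.2, x2.2.2.2⟩
  apply card_low_T f C.LX
  · intro x hx x' hx'
    obtain ⟨x1, x2, x3⟩ := key x (mem_BI.1 hx)
    obtain ⟨y1, y2, y3⟩ := key x' (mem_BI.1 hx')
    linear_combination x2 - y2
  · intro x hx x' hx' he
    obtain ⟨x1, x2, x3⟩ := key x (mem_BI.1 hx)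
    obtain ⟨y1, y2, y3⟩ := key x' (mem_BI.1 hx')
    have k3 : (r : Z) * (h x - h x') = 0 := by linear_combination x3 - y3
    have k2 := nb12 C H1 H2 x1 y1 (by rw [he, sub_self]) k3
    exact nbe C K He x1 y1 (by rw [he]; simp) k2 k3

theorem Nc_le (C : Ctx f g h p q r A B) (i : X) (z : Z) : Nc f g h A y0 i z ≤ q * (q - 1) := by
  rw [← card_unitset C.LY y0]
  apply Finset.card_le_card_of_injOn g
  · intro a ha
    rw [Finset.mem_coe, Finset.mem_filter] at ha
    simpa using ha.2.2.1
  · intro a ha b hb hab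
    rw [Finset.mem_coe, Finset.mem_filter] at ha hb
    exact C.inj (by rw [ha.2.1, hb.2.1]) hab (by rw [ha.2.2.2, hb.2.2.2])

/-- line counts -/
noncomputable def Lc (f : R →+* X) (h : R →+* Z) (A : Finset R) (i : X) (z : Z) : ℕ :=
  (A.filter (fun a => f a = i ∧ h a = z)).card

theorem Nc_le_Lc (i : X) (z : Z) : Nc f g h A y0 i z ≤ Lc f h A i z := by
  apply Finset.card_le_card
  intro a ha
  rw [Finset.mem_filter] at ha ⊢
  tauto

/-- a line containing a full fiber -/
theorem Lc_fiber (C : Ctx f g h p q r A B) {i : X} {z : Z} (y0 : Y)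
    (H : ∀ a, f a = i → (q : Y) * (g a - y0) = 0 → h a = z → a ∈ A) :
    q + Nc f g h A y0 i z ≤ Lc f h A i z := by
  have h1 : q = (A.filter (fun a => f a = i ∧ (q : Y) * (g a - y0) = 0 ∧ h a = z)).card := by
    conv_lhs => rw [← card_E C.LY.toLv]
    symm
    apply Finset.card_bij (fun a _ => g a - y0)
    · intro a ha; simp only [Finset.mem_filter] at ha; simpa using ha.2.2.1
    · intro a ha b hb hab
      simp only [Finset.mem_filter] at ha hb
      apply C.inj
      · rw [ha.2.1, hb.2.1]
      · simpa using hab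
      · rw [ha.2.2.2, hb.2.2.2]
    · intro y hy
      simp only [Finset.mem_filter, Finset.mem_univ, true_and] at hy
      obtain ⟨c, k1, k2, k3⟩ := C.ex i (y0 + y) z
      have hg : g c - y0 = y := by rw [k2]; ring
      refine ⟨c, ?_, hg⟩
      simp only [Finset.mem_filter]
      refine ⟨H c k1 (by rw [hg]; exact hy) k3, k1, by rw [hg]; exact hy, k3⟩
  conv_lhs => rw [h1]
  unfold Nc Lc
  rw [← Finset.card_union_of_disjoint]
  · apply Finset.card_le_card
    intro a ha
    rw [Finset.mem_union, Finset.mem_filter, Finset.mem_filter] at ha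
    rw [Finset.mem_filter]; tauto
  · rw [Finset.disjoint_left]
    intro a ha hb
    rw [Finset.mem_filter] at ha hb
    exact C.LY.not_both ha.2.2.1 hb.2.2.1

/-- low ball -/
noncomputable def Ball (r : ℕ) (z0 : Z) : Finset Z := Finset.univ.filter (fun z => (r : Z) * (z - z0) = 0)

theorem mem_Ball {z : Z} : z ∈ Ball r z0 ↔ (r : Z) * (z - z0) = 0 := by simp [Ball]

theorem card_Ball (L : Lv r Z) : (Ball r z0).card = r := by
  conv_rhs => rw [← card_E L]
  apply Finset.card_bij' (fun x _ => x - z0) (fun x _ => x + z0) <;> simp [Ball]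

theorem slice_sum (i : X) (T : Finset Z) :
    ∑ z ∈ T, Lc f h A i z = (A.filter (fun a => f a = i ∧ h a ∈ T)).card := by
  rw [Finset.card_eq_sum_card_fiberwise (f := h) (t := T)]
  · apply Finset.sum_congr rfl
    intro z hz
    unfold Lc
    congr 1
    ext a
    simp only [Finset.mem_filter]
    constructor
    · rintro ⟨a1, a2, a3⟩; exact ⟨⟨a1, a2, by rw [a3]; exact hz⟩, a3⟩
    · rintro ⟨⟨a1, a2, _⟩, a3⟩; exact ⟨a1, a2, a3⟩
  · intro a ha
    rw [Finset.mem_coe, Finset.mem_filter] at ha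
    exact ha.2.2

theorem slice_le (C : Ctx f g h p q r A B) (i : X) (T : Finset Z) : ∑ z ∈ T, Lc f h A i z ≤ q * r := by
  rw [slice_sum]
  refine le_trans (Finset.card_le_card ?_) (C.slice i)
  intro a ha
  rw [Finset.mem_filter] at ha ⊢
  exact ⟨ha.1, ha.2.1⟩

/-- if all lines over the ball contain at least `q` elements -/
theorem slice_full (C : Ctx f g h p q r A B) (i : X) (H : ∀ z ∈ Ball r z0, q ≤ Lc f h A i z) :
    (A.filter (fun a => f a = i)).card = q * r ∧ (∀ a ∈ A, f a = i → (r : Z) * (h a - z0) = 0) ∧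
    ∀ z ∈ Ball r z0, Lc f h A i z = q := by
  have h1 : ∑ z ∈ Ball r z0, q ≤ ∑ z ∈ Ball r z0, Lc f h A i z := Finset.sum_le_sum H
  have h2 := slice_le C i (Ball r z0)
  have h3 : ∑ z ∈ Ball r z0, q = q * r := by
    rw [Finset.sum_const, card_Ball C.LZ.toLv, smul_eq_mul, mul_comm]
  have h4 := slice_sum (f := f) (h := h) (A := A) i (Ball r z0)
  have h5 : A.filter (fun a => f a = i ∧ h a ∈ Ball r z0) ⊆ A.filter (fun a => f a = i) := by
    intro a ha
    rw [Finset.mem_filter] at ha ⊢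
    exact ⟨ha.1, ha.2.1⟩
  have h6 := Finset.eq_of_subset_of_card_le h5 (by have := C.slice i; omega)
  refine ⟨by rw [← h6]; omega, ?_, ?_⟩
  · intro a ha hi
    have : a ∈ A.filter (fun a => f a = i) := by rw [Finset.mem_filter]; exact ⟨ha, hi⟩
    rw [← h6, Finset.mem_filter, mem_Ball] at this
    exact this.2.2
  · intro z hz
    have h7 : ∑ z ∈ Ball r z0, q = ∑ z ∈ Ball r z0, Lc f h A i z := by omega
    exact ((Finset.sum_eq_sum_iff_of_le H).1 h7 z hz).symm

end Core

section Core
set_option linter.unusedSectionVars false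
open scoped Classical

variable {R X Y Z : Type*} [CommRing R] [CommRing X] [CommRing Y] [CommRing Z]
variable [Fintype R] [Fintype X] [Fintype Y] [Fintype Z]
variable {f : R →+* X} {g : R →+* Y} {h : R →+* Z} {p q r : ℕ} {A B : Finset R}
variable {i0 i1 : X} {y0 : Y} {z0 : Z}

theorem Q1full (C : Ctx f g h p q r A B) (K : Corner f g h p q r A i0 i1 y0 z0)
    (HQ : Q1 f g h p q r A B i0 y0 z0) (hb0 : ∃ b ∈ B, be f g h q r B b = 0) :
    (A.filter (fun a => f a = i0)).card = q * r ∧ (∀ a ∈ A, f a = i0 → (r : Z) * (h a - z0) = 0) ∧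
    ∀ b ∈ B, be f g h q r B b = 0 → b1 f g h B b = q - 1 := by
  have hq1 : 0 < q - 1 := Nat.sub_pos_of_lt C.hq.one_lt
  have hr1 : 0 < r - 1 := Nat.sub_pos_of_lt C.hr.one_lt
  obtain ⟨b0, hb0, hbe0⟩ := hb0
  have hN : ∀ x, Hole f g h r A i0 y0 z0 x → ∀ b ∈ B, be f g h q r B b = 0 →
      Nc f g h A y0 i0 (h x) * b1 f g h B b = q * (q - 1) := by
    intro x hx b hb hbe
    have := HQ.2 x hx b hb
    rw [hbe, mul_zero, add_zero, mul_comm _ (r - 1)] at this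
    exact Nat.eq_of_mul_eq_mul_left hr1 this
  have hN2 : ∀ x, Hole f g h r A i0 y0 z0 x → q ≤ Nc f g h A y0 i0 (h x) := by
    intro x hx
    have h1 := hN x hx b0 hb0 hbe0
    have h2 := B1le C K hb0
    have h3 : b1 f g h B b0 ≤ q - 1 := by omega
    have h4 := Nat.mul_le_mul_left (Nc f g h A y0 i0 (h x)) h3
    rw [h1] at h4
    exact Nat.le_of_mul_le_mul_right h4 hq1
  have hL : ∀ z ∈ Ball r z0, q ≤ Lc f h A i0 z := by
    intro z hz
    rw [mem_Ball] at hz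
    by_cases hzz : z = z0
    · subst hzz
      have := Lc_fiber C y0 K.Aq
      omega
    · obtain ⟨c, c1, c2, c3⟩ := C.ex i0 y0 z
      by_cases hc : c ∈ A
      · have := Lc_fiber C (i := i0) (z := z) y0 (fun a a1 a2 a3 =>
          K.fib0 c hc c1 c2 (by rw [c3]; exact hz) a a1 (by rw [a3, c3]) a2)
        omega
      · have := hN2 c ⟨c1, c2, by rw [c3]; exact hz, hc⟩
        rw [c3] at this
        exact this.trans (Nc_le_Lc _ _)
  obtain ⟨s1, s2, s3⟩ := slice_full C i0 hL
  refine ⟨s1, s2, ?_⟩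
  intro b hb hbe
  obtain ⟨x, x1, x2, x3, x4⟩ := K.nA0
  have hx : Hole f g h r A i0 y0 z0 x := ⟨x1, x2, x3, x4⟩
  have e1 := hN2 x hx
  have e2 := s3 (h x) (mem_Ball.2 x3)
  have e3 := Nc_le_Lc (f := f) (g := g) (h := h) (A := A) (y0 := y0) i0 (h x)
  have e4 : Nc f g h A y0 i0 (h x) = q := by omega
  have e5 := hN x hx b hb hbe
  rw [e4] at e5
  exact Nat.eq_of_mul_eq_mul_left C.hq.pos e5

theorem slice1 (C : Ctx f g h p q r A B) (K : Corner f g h p q r A i0 i1 y0 z0) :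
    r + ∑ z ∈ Ball r z0, Nc f g h A y0 i1 z ≤ q * r := by
  refine le_trans ?_ (slice_le C i1 (Ball r z0))
  have h1 : ∑ z ∈ Ball r z0, (1 + Nc f g h A y0 i1 z) = r + ∑ z ∈ Ball r z0, Nc f g h A y0 i1 z := by
    rw [Finset.sum_add_distrib, Finset.sum_const, card_Ball C.LZ.toLv]; simp
  rw [← h1]
  apply Finset.sum_le_sum
  intro z hz
  rw [mem_Ball] at hz
  obtain ⟨c, hc, c1, c2, c3⟩ := corner_mem1 C K z hz
  have hcn : c ∉ A.filter (fun a => f a = i1 ∧ IsUnit (g a - y0) ∧ h a = z) := by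
    rw [Finset.mem_filter]
    rintro ⟨_, _, hu, _⟩
    rw [c2, sub_self] at hu
    exact C.LY.not_both (mul_zero _) hu
  unfold Nc Lc
  rw [add_comm, ← Finset.card_insert_of_notMem hcn]
  apply Finset.card_le_card
  intro a ha
  rw [Finset.mem_insert, Finset.mem_filter] at ha
  rw [Finset.mem_filter]
  rcases ha with rfl | ha
  · exact ⟨hc, c1, c3⟩
  · exact ⟨ha.1, ha.2.1, ha.2.2.2⟩

theorem slice1' (C : Ctx f g h p q r A B) (K : Corner f g h p q r A i0 i1 y0 z0) {z : Z} (hz : z ∈ Ball r z0) :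
    r + Nc f g h A y0 i1 z ≤ q * r := by
  have h1 := slice1 C K
  have h2 := Finset.single_le_sum (f := fun z => Nc f g h A y0 i1 z) (fun _ _ => Nat.zero_le _) hz
  omega

theorem slice0 (C : Ctx f g h p q r A B) (K : Corner f g h p q r A i0 i1 y0 z0) :
    q + Nc f g h A y0 i0 z0 ≤ q * r := by
  have h1 := Lc_fiber C y0 K.Aq
  have h2 := slice_le C i0 {z0}
  rw [Finset.sum_singleton] at h2
  omega

theorem nat_squeeze {N b Q k : ℕ} (h : Q * k ≤ N * b) (hb : b ≤ k) (hk : 0 < k) : Q ≤ N :=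
  Nat.le_of_mul_le_mul_right (h.trans (Nat.mul_le_mul_left N hb)) hk

theorem nat_absurd1 {q r N : ℕ} (hq : 0 < q) (hr : 0 < r) (h : r < q) (hN : q * (q - 1) ≤ N)
    (h2 : r + N ≤ q * r) : False := by
  have : q * r ≤ q * (q - 1) := Nat.mul_le_mul_left q (by omega)
  omega

theorem z0_ball : z0 ∈ Ball r z0 := by rw [mem_Ball]; simp

theorem part2Q (C : Ctx f g h p q r A B) (K : Corner f g h p q r A i0 i1 y0 z0)
    (He : ∀ b ∈ B, be f g h q r B b = 0) :
    Q1 f g h p q r A B i0 y0 z0 ∨ (q < r ∧ ∃ a ∈ A, f a = i1 ∧ IsUnit (g a - y0)) := by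
  have hp1 : 0 < p - 1 := Nat.sub_pos_of_lt C.hp.one_lt
  have hq1 : 0 < q - 1 := Nat.sub_pos_of_lt C.hq.one_lt
  have hr1 : 0 < r - 1 := Nat.sub_pos_of_lt C.hr.one_lt
  have hqq : 0 < q * (q - 1) := Nat.mul_pos C.hq.pos hq1
  obtain ⟨b, hb⟩ := C.neB
  have hbe := He b hb
  obtain ⟨x, x1, x2, x3, x4⟩ := K.nA0
  have hx : Hole f g h r A i0 y0 z0 x := ⟨x1, x2, x3, x4⟩
  rcases Qcase C K ⟨b, hb, by omega⟩ with H | H | H | H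
  · exact Or.inl H
  · exfalso
    have h1 := H.2 b hb
    rw [hbe, mul_zero, add_zero] at h1
    have h2 := Sset_le C K (fun b hb => (H.1 b hb).1) (fun b hb => (H.1 b hb).2.1) (b := b)
    rw [Sset_card C K (fun b hb => (H.1 b hb).1) (fun b hb => (H.1 b hb).2.1) hb] at h2
    have h3 := nat_squeeze h1.ge (by omega) hr1
    have h4 := slice0 C K
    have h5 := Nc_le C (y0 := y0) i0 z0
    have h6 : b2 f g h r B b = r - 1 := by
      rw [le_antisymm h5 h3] at h1
      exact Nat.eq_of_mul_eq_mul_left hqq h1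
    have h7 := B2leq C K He hb
    have h8 : q * q ≤ q * r := by
      rw [Nat.mul_sub] at h3
      have := Nat.mul_le_mul_left q C.hq.one_lt.le
      omega
    have h9 := Nat.le_of_mul_le_mul_left h8 C.hq.pos
    exact C.hqr (by omega)
  · right
    have h1 := H.2 x hx b hb
    rw [hbe, mul_zero, add_zero, mul_comm _ (r - 1)] at h1
    have h2 := Nat.eq_of_mul_eq_mul_left hr1 h1
    have h3 := B3le C K (fun b hb => (H.1 b hb).1) hb
    rw [mul_comm (p - 1)] at h2
    have h4 := nat_squeeze h2.ge (by omega) hp1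
    have h5 := slice1' C K (mem_Ball.2 x3)
    refine ⟨?_, ?_⟩
    · by_contra hc
      exact nat_absurd1 C.hq.pos C.hr.pos (lt_of_le_of_ne (not_lt.1 hc) C.hqr.symm) h4 h5
    · obtain ⟨a, a1, a2, a3, a4⟩ := Nc_ne (show Nc f g h A y0 i1 (h x) ≠ 0 by omega)
      exact ⟨a, a1, a2, a3⟩
  · exfalso
    have h1 := H.2 b hb
    rw [hbe, mul_zero, add_zero] at h1
    have h2 := Sset_le C K (fun b hb => (H.1 b hb).1) (fun b hb => (H.1 b hb).2.2) (b := b)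
    rw [Sset_card C K (fun b hb => (H.1 b hb).1) (fun b hb => (H.1 b hb).2.2) hb] at h2
    have h3 := B4lep C K He (fun b hb => (H.1 b hb).1) (fun b hb => (H.1 b hb).2.1) hb
    have h5 := Nc_le C (y0 := y0) i1 z0
    have h6 : (p - 1) * (r - 1) ≤ b4 f g h p r B b := by
      apply Nat.le_of_mul_le_mul_left _ hqq
      calc q * (q - 1) * ((p - 1) * (r - 1)) = (p - 1) * (q * (q - 1)) * (r - 1) := by ring
        _ = _ := h1.symm
        _ ≤ _ := Nat.mul_le_mul_right _ h5
    have h7 : r - 1 ≤ 1 := by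
      apply Nat.le_of_mul_le_mul_left _ hp1
      omega
    have h8 : p - 1 ≤ 1 := by
      apply Nat.le_of_mul_le_mul_right _ hr1
      omega
    exact C.hpr (by omega)

theorem be_swap (b : R) : be f h g r q B b = be f g h q r B b := by
  unfold be; rw [Bc_swap]

theorem part2 (C : Ctx f g h p q r A B) (K : Corner f g h p q r A i0 i1 y0 z0)
    (He : ∀ b ∈ B, be f g h q r B b = 0) :
    (A.filter (fun a => f a = i0)).card = q * r ∧
    ∀ b ∈ B, b1 f g h B b = q - 1 ∧ b1 f h g B b = r - 1 := by
  have He' : ∀ b ∈ B, be f h g r q B b = 0 := fun b hb => by rw [be_swap]; exact He b hb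
  obtain ⟨b0, hb0⟩ := C.neB
  rcases part2Q C K He with H | ⟨H, a, a1, a2, a3⟩ <;>
  rcases part2Q C.swap K.swap He' with H' | ⟨H', a', a1', a2', a3'⟩
  · obtain ⟨s1, s2, s3⟩ := Q1full C K H ⟨b0, hb0, He b0 hb0⟩
    obtain ⟨t1, t2, t3⟩ := Q1full C.swap K.swap H' ⟨b0, hb0, He' b0 hb0⟩
    exact ⟨s1, fun b hb => ⟨s3 b hb (He b hb), t3 b hb (He' b hb)⟩⟩
  · obtain ⟨s1, s2, s3⟩ := Q1full C K H ⟨b0, hb0, He b0 hb0⟩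
    exact absurd a3' (C.LZ.not_both (s2 a' a1' a2'))
  · obtain ⟨s1, s2, s3⟩ := Q1full C.swap K.swap H' ⟨b0, hb0, He' b0 hb0⟩
    exact absurd a3 (C.LY.not_both (s2 a a1 a2))
  · omega

theorem e1lem (C : Ctx f g h p q r A B) (H2 : ∀ b ∈ B, b2 f g h r B b = 0) {b : R} (hb : b ∈ B)
    (he : be f g h q r B b ≠ 0) : b1 f g h B b = 0 := by
  obtain ⟨c, hc⟩ := Finset.card_ne_zero.1 he
  rw [Finset.mem_filter] at hc
  obtain ⟨hc, c1, c2, c3⟩ := hc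
  apply Bc_zero
  rintro d hd ⟨d1, d2, d3⟩
  have := nb2 C H2 hd hc (by linear_combination d1 - c1) (by
    have : h d - h c = -(h c - h b) := by linear_combination d3
    rw [this, Elow_neg]; exact c3)
  apply C.LY.not_both _ d2
  linear_combination this + c2.2

theorem allHoles (C : Ctx f g h p q r A B) (K : Corner f g h p q r A i0 i1 y0 z0)
    (hex : ∃ b ∈ B, be f g h q r B b ≠ 0) {x : R} (x1 : f x = i0) (x2 : g x = y0)
    (x3 : (r : Z) * (h x - z0) = 0) (x4 : h x ≠ z0) : Hole f g h r A i0 y0 z0 x := by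
  refine ⟨x1, x2, x3, fun hx => ?_⟩
  obtain ⟨b, hb, hbe⟩ := hex
  apply hbe
  obtain ⟨y, hy⟩ : ∃ y : Y, Elow q y := by
    have := card_E' C.LY.toLv
    have h2 : 0 < (Finset.univ.filter (fun x : Y => Elow q x)).card := by
      rw [this]; exact Nat.sub_pos_of_lt C.hq.one_lt
    obtain ⟨y, hy⟩ := Finset.card_pos.1 h2
    exact ⟨y, by simpa using hy⟩
  obtain ⟨c, c1, c2, c3⟩ := C.ex i0 (y0 + y) (h x)
  have hc : c ∈ A := K.fib0 x hx x1 x2 x3 c c1 c3 (by rw [c2]; simpa using hy.2)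
  obtain ⟨d, hd, d1, d2, d3⟩ := corner_mem C K
  apply Bc_zero
  refine C.noB Cl_zero (Cl_E C.LY.toLv) (Cl_E C.LZ.toLv) hc hd ?_ (by rw [c1, d1, sub_self])
    (by rw [c2, d2]; simpa using hy) (by rw [c3, d3]; exact ⟨sub_ne_zero.2 x4, x3⟩) b hb
  rintro rfl
  exact x4 (by rw [← c3, d3])

theorem sum_holes (C : Ctx f g h p q r A B) (K : Corner f g h p q r A i0 i1 y0 z0)
    (hex : ∃ b ∈ B, be f g h q r B b ≠ 0) {k : ℕ}
    (H : ∀ x, Hole f g h r A i0 y0 z0 x → k ≤ (r - 1) * Nc f g h A y0 i1 (h x)) :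
    r + k ≤ q * r := by
  have hr1 : 0 < r - 1 := Nat.sub_pos_of_lt C.hr.one_lt
  have h1 := slice1 C K
  have h2 : ∑ z ∈ (Ball r z0).erase z0, k ≤ ∑ z ∈ (Ball r z0).erase z0, (r - 1) * Nc f g h A y0 i1 z := by
    apply Finset.sum_le_sum
    intro z hz
    rw [Finset.mem_erase, mem_Ball] at hz
    obtain ⟨c, c1, c2, c3⟩ := C.ex i0 y0 z
    have := H c (allHoles C K hex c1 c2 (by rw [c3]; exact hz.2) (by rw [c3]; exact hz.1))
    rwa [c3] at this
  rw [Finset.sum_const, Finset.card_erase_of_mem z0_ball, card_Ball C.LZ.toLv, smul_eq_mul, ← Finset.mul_sum] at h2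
  have h3 := Nat.le_of_mul_le_mul_left h2 hr1
  have h4 : ∑ z ∈ (Ball r z0).erase z0, Nc f g h A y0 i1 z ≤ ∑ z ∈ (Ball r z0), Nc f g h A y0 i1 z :=
    Finset.sum_le_sum_of_subset (Finset.erase_subset _ _)
  omega

theorem part1Q (C : Ctx f g h p q r A B) (K : Corner f g h p q r A i0 i1 y0 z0) (hrq : r < q)
    (hex : ∃ b ∈ B, be f g h q r B b ≠ 0) (hex2 : ∃ b ∈ B, be f g h q r B b ≠ r - 1) :
    Q1 f g h p q r A B i0 y0 z0 := by
  have hp1 : 0 < p - 1 := Nat.sub_pos_of_lt C.hp.one_lt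
  have hq1 : 0 < q - 1 := Nat.sub_pos_of_lt C.hq.one_lt
  have hr1 : 0 < r - 1 := Nat.sub_pos_of_lt C.hr.one_lt
  have hqq : 0 < q * (q - 1) := Nat.mul_pos C.hq.pos hq1
  obtain ⟨b, hb, hbe⟩ := id hex2
  have hbl := Bele C K hb
  obtain ⟨k, hk⟩ : ∃ k, r - 1 = be f g h q r B b + k := ⟨r - 1 - be f g h q r B b, by omega⟩
  have hk0 : 0 < k := by omega
  rcases Qcase C K hex2 with H | H | H | H
  · exact H
  · exfalso
    have h1 := H.2 b hb
    rw [hk, mul_add, add_comm] at h1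
    have h1 := Nat.add_left_cancel h1
    have h2 := Sset_le C K (fun b hb => (H.1 b hb).1) (fun b hb => (H.1 b hb).2.1) (b := b)
    rw [Sset_card C K (fun b hb => (H.1 b hb).1) (fun b hb => (H.1 b hb).2.1) hb] at h2
    have h3 := nat_squeeze h1.ge (by omega) hk0
    have h4 := slice0 C K
    refine nat_absurd1 C.hq.pos C.hr.pos hrq h3 ?_
    omega
  · exfalso
    refine nat_absurd1 C.hq.pos C.hr.pos hrq le_rfl (sum_holes C K hex ?_)
    intro x hx
    have h1 := H.2 x hx b hb
    have h3 := B3le C K (fun b hb => (H.1 b hb).1) hb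
    have h5 : (r - 1) * (Nc f g h A y0 i1 (h x) * b3 f g h p B b) = (q * (q - 1) * k) * (p - 1) := by
      have : (p - 1) * (q * (q - 1)) * (r - 1) = (p - 1) * (q * (q - 1)) * (be f g h q r B b + k) := by rw [← hk]
      rw [this] at h1
      linarith
    rw [← mul_assoc] at h5
    have h6 := nat_squeeze h5.ge (by omega) hp1
    exact le_trans (Nat.le_mul_of_pos_right _ hk0) h6
  · exfalso
    have h1 := H.2 b hb
    rw [hk, mul_add, add_comm] at h1
    have h1 := Nat.add_left_cancel h1
    have h2 := Sset_le C K (fun b hb => (H.1 b hb).1) (fun b hb => (H.1 b hb).2.2) (b := b)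
    rw [Sset_card C K (fun b hb => (H.1 b hb).1) (fun b hb => (H.1 b hb).2.2) hb] at h2
    have h3 := nat_squeeze h1.ge (by omega) hk0
    have h4 := slice1' C K (z0_ball)
    refine nat_absurd1 C.hq.pos C.hr.pos hrq (le_trans ?_ h3) h4
    exact Nat.le_mul_of_pos_left _ hp1

theorem nat_absurd2 {p q r : ℕ} (hp : p.Prime) (hq : q.Prime) (hr : r.Prime) (hpq : p ≠ q) (hqr : q < r)
    (h1 : r + q * (q - 1) * (r - q) ≤ q * r) (h2 : r + (p - 1) * (q * (r - q)) ≤ q * r) : False := by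
  obtain ⟨d, rfl⟩ : ∃ d, r = q + d := ⟨r - q, by omega⟩
  obtain ⟨s, rfl⟩ : ∃ s, q = s + 2 := ⟨q - 2, by have := hq.two_le; omega⟩
  obtain ⟨t, rfl⟩ : ∃ t, p = t + 2 := ⟨p - 2, by have := hp.two_le; omega⟩
  simp only [Nat.add_sub_cancel_left, Nat.add_sub_cancel, show s + 2 - 1 = s + 1 by omega, show t + 2 - 1 = t + 1 by omega] at h1 h2
  have hd : 1 ≤ d := by omega
  have h3 : (s + 2) * d ≤ s + 2 + d := by
    have h5 : (s + 1) * ((s + 2) * d) ≤ (s + 1) * (s + 2 + d) := by nlinarith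
    exact Nat.le_of_mul_le_mul_left h5 (by omega)
  have h4 : (s + 1) * (d - 1) ≤ 1 := by
    obtain ⟨e, rfl⟩ : ∃ e, d = e + 1 := ⟨d - 1, by omega⟩
    simp only [Nat.add_sub_cancel]
    nlinarith
  rcases Nat.lt_or_ge d 2 with hd2 | hd2
  · have : d = 1 := by omega
    subst this
    rcases hq.eq_two_or_odd' with h0 | h0
    · have : s = 0 := by omega
      subst this
      have : t = 0 := by omega
      omega
    · have h5 : Even (s + 2 + 1) := h0.add_one
      rcases hr.eq_two_or_odd' with h6 | h6
      · omega
      · exact (Nat.not_even_iff_odd.2 h6) h5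
  · have h5 : s + 1 ≤ (s + 1) * (d - 1) := Nat.le_mul_of_pos_right _ (by omega)
    have : s = 0 := by omega
    subst this
    have : d = 2 := by omega
    subst this
    norm_num at hr

theorem Rlem (C : Ctx f g h p q r A B) (K : Corner f g h p q r A i0 i1 y0 z0) (hqr : q < r)
    (hex : ∃ b ∈ B, be f g h q r B b ≠ 0) :
    (∀ b ∈ B, b1 f g h B b = 0) ∧ (∀ b ∈ B, b3 f g h p B b = 0) ∧
    (∀ b ∈ B, (Sset f h p r B b).card = r) ∧
    ((∀ b ∈ B, b4 f g h p r B b = 0) ∨ ∃ a ∈ A, f a = i1 ∧ IsUnit (g a - y0)) := by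
  have hp1 : 0 < p - 1 := Nat.sub_pos_of_lt C.hp.one_lt
  have hq1 : 0 < q - 1 := Nat.sub_pos_of_lt C.hq.one_lt
  have hr1 : 0 < r - 1 := Nat.sub_pos_of_lt C.hr.one_lt
  have hqq : 0 < q * (q - 1) := Nat.mul_pos C.hq.pos hq1
  have hbq : ∀ b ∈ B, 1 + be f g h q r B b ≤ q := fun b hb => by
    have := Bele C.swap K.swap hb; rwa [be_swap] at this
  have hbk : ∀ b ∈ B, ∃ k, 0 < k ∧ r - q ≤ k ∧ r - 1 = be f g h q r B b + k := fun b hb =>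
    ⟨r - 1 - be f g h q r B b, by have := hbq b hb; omega, by have := hbq b hb; omega, by have := hbq b hb; omega⟩
  obtain ⟨b, hb, hbe⟩ := id hex
  rcases Qcase C K ⟨b, hb, by have := hbq b hb; omega⟩ with H | H | H | H
  · exfalso
    obtain ⟨x, x1, x2, x3, x4⟩ := K.nA0
    have h1 := H.2 x ⟨x1, x2, x3, x4⟩ b hb
    have h2 := e1lem C (fun b hb => (H.1 b hb).1) hb hbe
    rw [h2, mul_zero, mul_zero, zero_add] at h1
    have := Nat.eq_of_mul_eq_mul_left hqq h1
    have := hbq b hb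
    omega
  · refine ⟨fun b hb => (H.1 b hb).1, fun b hb => (H.1 b hb).2.1, ?_, Or.inl fun b hb => (H.1 b hb).2.2⟩
    intro b hb
    obtain ⟨k, hk0, hk1, hk⟩ := hbk b hb
    have h1 := H.2 b hb
    rw [hk, mul_add, add_comm] at h1
    have h1 := Nat.add_left_cancel h1
    have h2 := Sset_le C K (fun b hb => (H.1 b hb).1) (fun b hb => (H.1 b hb).2.1) (b := b)
    rw [Sset_card C K (fun b hb => (H.1 b hb).1) (fun b hb => (H.1 b hb).2.1) hb] at h2 ⊢
    have h3 := nat_squeeze h1.ge (by omega) hk0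
    have h5 := Nc_le C (y0 := y0) i0 z0
    rw [le_antisymm h5 h3] at h1
    have := Nat.eq_of_mul_eq_mul_left hqq h1
    omega
  · exfalso
    obtain ⟨k, hk0, hk1, hk⟩ := hbk b hb
    have h3 := B3le C K (fun b hb => (H.1 b hb).1) hb
    have h3' := B3leq C K hb
    have h5 : ∀ x, Hole f g h r A i0 y0 z0 x →
        (r - 1) * Nc f g h A y0 i1 (h x) * b3 f g h p B b = (p - 1) * (q * (q - 1)) * k := by
      intro x hx
      have h1 := H.2 x hx b hb
      have : (p - 1) * (q * (q - 1)) * (r - 1) = (p - 1) * (q * (q - 1)) * (be f g h q r B b + k) := by rw [← hk]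
      rw [this] at h1
      linarith
    refine nat_absurd2 C.hp C.hq C.hr C.hpq hqr (sum_holes C K hex ?_) (sum_holes C K hex ?_)
    · intro x hx
      have h6 := h5 x hx
      rw [show (p - 1) * (q * (q - 1)) * k = (q * (q - 1) * k) * (p - 1) by ring] at h6
      exact le_trans (Nat.mul_le_mul_left _ hk1) (nat_squeeze h6.ge (by omega) hp1)
    · intro x hx
      have h6 := h5 x hx
      rw [show (p - 1) * (q * (q - 1)) * k = ((p - 1) * (q * k)) * (q - 1) by ring] at h6
      exact le_trans (Nat.mul_le_mul_left _ (Nat.mul_le_mul_left _ hk1)) (nat_squeeze h6.ge (by omega) hq1)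
  · have key : ∀ b ∈ B, (Sset f h p r B b).card = r ∧ Nc f g h A y0 i1 z0 ≠ 0 := by
      intro b hb
      obtain ⟨k, hk0, hk1, hk⟩ := hbk b hb
      have h1 := H.2 b hb
      rw [hk, mul_add, add_comm] at h1
      have h1 := Nat.add_left_cancel h1
      have h2 := Sset_le C K (fun b hb => (H.1 b hb).1) (fun b hb => (H.1 b hb).2.2) (b := b)
      rw [Sset_card C K (fun b hb => (H.1 b hb).1) (fun b hb => (H.1 b hb).2.2) hb] at h2 ⊢
      have h3 := nat_squeeze h1.ge (by omega) hk0
      have h5 := Nc_le C (y0 := y0) i1 z0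
      have h6 : k ≤ b4 f g h p r B b := by
        apply Nat.le_of_mul_le_mul_left _ hqq
        calc q * (q - 1) * k ≤ (p - 1) * (q * (q - 1)) * k := Nat.mul_le_mul_right _ (Nat.le_mul_of_pos_left _ hp1)
          _ = _ := h1.symm
          _ ≤ _ := Nat.mul_le_mul_right _ h5
      refine ⟨by omega, ?_⟩
      have := Nat.mul_pos hp1 hqq
      omega
    refine ⟨fun b hb => (H.1 b hb).1, fun b hb => (H.1 b hb).2.2, fun b hb => (key b hb).1, Or.inr ?_⟩
    obtain ⟨a, a1, a2, a3, a4⟩ := Nc_ne (key b hb).2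
    exact ⟨a, a1, a2, a3⟩

end Core

section Core
set_option linter.unusedSectionVars false
open scoped Classical

variable {R X Y Z : Type*} [CommRing R] [CommRing X] [CommRing Y] [CommRing Z]
variable [Fintype R] [Fintype X] [Fintype Y] [Fintype Z]
variable {f : R →+* X} {g : R →+* Y} {h : R →+* Z} {p q r : ℕ} {A B : Finset R}
variable {i0 i1 : X} {y0 : Y} {z0 : Z}

theorem notall (C : Ctx f g h p q r A B) (K : Corner f g h p q r A i0 i1 y0 z0)
    (RT : ∀ b ∈ B, (Sset f g p q B b).card = q) : ∃ b ∈ B, be f g h q r B b ≠ r - 1 := by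
  by_contra! hcon
  obtain ⟨b, hb⟩ := C.neB
  have hdvd : r ∣ (Sset f g p q B b).card := by
    rw [Finset.card_eq_sum_card_image (fun b' => (r : Z) * h b')]
    apply Finset.dvd_sum
    intro z hz
    rw [Finset.mem_image] at hz
    obtain ⟨c, hc, rfl⟩ := hz
    rw [mem_Sset] at hc
    obtain ⟨hc, c1, c2⟩ := hc
    have : (Finset.filter (fun a => (r : Z) * h a = (r : Z) * h c) (Sset f g p q B b)) =
        BI f g h B c (· = 0) (Elow q) (Elow r) := by
      ext x
      rw [Finset.mem_filter, mem_Sset, mem_BI]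
      constructor
      · rintro ⟨⟨hx, x1, x2⟩, x3⟩
        exact ⟨hx, C.low K hx hc (by linear_combination x1 - c1) (by linear_combination x2 - c2)
          (by linear_combination x3)⟩
      · rintro ⟨hx, rfl | ⟨x1, x2, x3⟩⟩
        · exact ⟨⟨hx, c1, c2⟩, rfl⟩
        · exact ⟨⟨hx, by linear_combination (p : X) * x1 + c1, by linear_combination x2.2 + c2⟩,
            by linear_combination x3.2⟩
    rw [this, Bc_insert hc (by intro hh; exact hh.2.1.1 rfl)]
    have := hcon c hc
    have h1 := C.hr.one_lt
    unfold be at this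
    rw [this]
    exact dvd_of_eq (by omega)
  rw [RT b hb] at hdvd
  exact C.hqr ((Nat.prime_dvd_prime_iff_eq C.hr C.hq).1 hdvd).symm

theorem part1' (C : Ctx f g h p q r A B) (K : Corner f g h p q r A i0 i1 y0 z0) (hrq : r < q) :
    ∀ b ∈ B, be f g h q r B b = 0 := by
  by_contra! hex
  have hex' : ∃ b ∈ B, be f h g r q B b ≠ 0 := by
    obtain ⟨b, hb, h1⟩ := hex
    exact ⟨b, hb, by rw [be_swap]; exact h1⟩
  obtain ⟨R1, R3, RT, R4⟩ := Rlem C.swap K.swap hrq hex'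
  obtain ⟨b0, hb0, hbe⟩ := notall C K RT
  have HQ := part1Q C K hrq hex ⟨b0, hb0, hbe⟩
  have hbe0 : be f g h q r B b0 = 0 := by
    by_contra hne
    have e1 := e1lem C (fun b hb => (HQ.1 b hb).1) hb0 hne
    obtain ⟨x, hx⟩ := K.nA0
    have := HQ.2 x hx b0 hb0
    rw [e1, mul_zero, mul_zero, zero_add] at this
    exact hbe (Nat.eq_of_mul_eq_mul_left
      (Nat.mul_pos C.hq.pos (Nat.sub_pos_of_lt C.hq.one_lt)) this)
  obtain ⟨s1, s2, s3⟩ := Q1full C K HQ ⟨b0, hb0, hbe0⟩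
  rcases R4 with R4 | ⟨a, ha, a1, a2⟩
  swap
  · exact C.LZ.not_both (s2 a ha a1) a2
  have hL : (BI f g h B b0 (· = 0) IsUnit (· = 0)).card = q := by
    rw [Bc_insert hb0 (by intro hh; exact C.LY.not_both (mul_zero _) hh.2.1)]
    have := s3 b0 hb0 hbe0
    have h1 := C.hq.one_lt
    unfold b1 at this
    omega
  have hLm : ∀ x ∈ BI f g h B b0 (· = 0) IsUnit (· = 0), x ∈ B ∧ f x = f b0 ∧ h x = h b0 := by
    intro x hx
    rw [mem_BI] at hx
    obtain ⟨hx, rfl | ⟨x1, x2, x3⟩⟩ := hx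
    · exact ⟨hx, rfl, rfl⟩
    · exact ⟨hx, sub_eq_zero.1 x1, sub_eq_zero.1 x3⟩
  generalize BI f g h B b0 (· = 0) IsUnit (· = 0) = L at hL hLm
  have hf : ∀ c ∈ B, ∀ x ∈ Sset f g p q B c, f x = f c := by
    intro c hc x hx
    rw [mem_Sset] at hx
    obtain ⟨hx, x1, x2⟩ := hx
    by_contra hne
    have hE : Elow p (f x - f c) := ⟨sub_ne_zero.2 hne, x1⟩
    by_cases h3 : (r : Z) * (h x - h c) = 0
    · rcases C.low K hx hc x1 x2 h3 with h0 | h0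
      · exact hne (by rw [h0])
      · exact hE.1 h0.1
    · have hU := (C.LZ.unit_iff _).2 h3
      by_cases h2 : g x - g c = 0
      · exact Bc_zero_iff.1 (R3 c hc) x hx ⟨hE, hU, h2⟩
      · exact Bc_zero_iff.1 (R4 c hc) x hx ⟨hE, hU, h2, x2⟩
  have hU : (L.biUnion (fun c => Sset f g p q B c)).card = q * q := by
    rw [Finset.card_biUnion, Finset.sum_congr rfl (fun c hc => RT c (hLm c hc).1), Finset.sum_const, hL, smul_eq_mul]
    intro c hc d hd hne
    rw [Function.onFun, Finset.disjoint_left]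
    intro x hx hx'
    rw [mem_Sset] at hx hx'
    obtain ⟨k1, k2, k3⟩ := hLm c hc
    obtain ⟨l1, l2, l3⟩ := hLm d hd
    rcases C.low K k1 l1 (by rw [k2, l2]; simp) (by linear_combination hx'.2.2 - hx.2.2) (by rw [k3, l3]; simp) with h0 | h0
    · exact hne h0
    · exact h0.2.2.1 (by rw [k3, l3]; simp)
  have hle : (A.filter (fun a => f a = i0) ×ˢ L.biUnion (fun c => Sset f g p q B c)).card ≤
      (Finset.univ : Finset (Y × Z)).card := by
    apply Finset.card_le_card_of_injOn (fun ab => (g ab.1 + g ab.2, h ab.1 + h ab.2))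
    · intro x _; simp
    · rintro ⟨a, b⟩ hab ⟨a', b'⟩ hab' he
      have key : ∀ x ∈ L.biUnion (fun c => Sset f g p q B c), x ∈ B ∧ f x = f b0 := by
        intro x hx
        rw [Finset.mem_biUnion] at hx
        obtain ⟨c, hc, hx⟩ := hx
        exact ⟨(mem_Sset.1 hx).1, (hf c (hLm c hc).1 x hx).trans (hLm c hc).2.1⟩
      rw [Finset.mem_coe, Finset.mem_product, Finset.mem_filter] at hab hab'
      obtain ⟨⟨ha, a1⟩, hb⟩ := hab
      obtain ⟨⟨ha', a1'⟩, hb'⟩ := hab'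
      obtain ⟨hb, b1⟩ := key _ hb
      obtain ⟨hb', b1'⟩ := key _ hb'
      simp only [Prod.mk.injEq] at he ha a1 ha' a1' hb hb' b1 b1'
      obtain ⟨w, _, hw⟩ := C.tile 1 isUnit_one (a + b)
      rw [hw (a, b) ⟨ha, hb, by simp⟩, hw (a', b') ⟨ha', hb', by
        simp only [one_mul]
        apply C.inj <;> simp only [map_add]
        · rw [a1, a1', b1, b1']
        · exact he.1.symm
        · exact he.2.symm⟩]
  rw [Finset.card_product, s1, hU, Finset.card_univ, Fintype.card_prod, ← Nat.card_eq_fintype_card,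
    ← Nat.card_eq_fintype_card, C.LY.cardX, C.LZ.cardX] at hle
  have h2 : q ^ 2 * r * q ≤ q ^ 2 * r * r := by nlinarith
  have h3 := Nat.le_of_mul_le_mul_left h2 (Nat.mul_pos (pow_pos C.hq.pos 2) C.hr.pos)
  omega

theorem part1 (C : Ctx f g h p q r A B) (K : Corner f g h p q r A i0 i1 y0 z0) :
    ∀ b ∈ B, be f g h q r B b = 0 := by
  rcases lt_or_gt_of_ne C.hqr with hlt | hlt
  · intro b hb
    rw [← be_swap]
    exact part1' C.swap K.swap hlt b hb
  · exact part1' C K hlt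

theorem core (C : Ctx f g h p q r A B) (K : Corner f g h p q r A i0 i1 y0 z0) :
    (∀ b ∈ B, ∀ b' ∈ B, (p : X) * (f b - f b') = 0 → (q : Y) * (g b - g b') = 0 →
      (r : Z) * (h b - h b') = 0 → b = b') ∧
    (A.filter (fun a => f a = i0)).card = q * r ∧
    (∀ b ∈ B, (B.filter (fun b' => f b' = f b ∧ h b' = h b)).card = q) ∧
    (∀ b ∈ B, (B.filter (fun b' => f b' = f b ∧ g b' = g b)).card = r) := by
  have He := part1 C K
  obtain ⟨h1, h2⟩ := part2 C K He
  refine ⟨fun b hb b' hb' k1 k2 k3 => nbe C K He hb hb' k1 k2 k3, h1, ?_, ?_⟩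
  · intro b hb
    have e : B.filter (fun b' => f b' = f b ∧ h b' = h b) = BI f g h B b (· = 0) IsUnit (· = 0) := by
      ext x
      rw [Finset.mem_filter, mem_BI]
      constructor
      · rintro ⟨hx, x1, x2⟩
        refine ⟨hx, ?_⟩
        by_cases hl : (q : Y) * (g x - g b) = 0
        · left; exact nbe C K He hx hb (by rw [x1]; simp) hl (by rw [x2]; simp)
        · right; exact ⟨sub_eq_zero.2 x1, (C.LY.unit_iff _).2 hl, sub_eq_zero.2 x2⟩
      · rintro ⟨hx, rfl | ⟨x1, x2, x3⟩⟩
        · exact ⟨hx, rfl, rfl⟩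
        · exact ⟨hx, sub_eq_zero.1 x1, sub_eq_zero.1 x3⟩
    rw [e, Bc_insert hb (by intro hh; exact C.LY.not_both (mul_zero _) hh.2.1)]
    have := (h2 b hb).1
    have h3 := C.hq.one_lt
    unfold b1 at this
    omega
  · intro b hb
    have e : B.filter (fun b' => f b' = f b ∧ g b' = g b) = BI f h g B b (· = 0) IsUnit (· = 0) := by
      ext x
      rw [Finset.mem_filter, mem_BI]
      constructor
      · rintro ⟨hx, x1, x2⟩
        refine ⟨hx, ?_⟩
        by_cases hl : (r : Z) * (h x - h b) = 0
        · left; exact nbe C K He hx hb (by rw [x1]; simp) (by rw [x2]; simp) hl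
        · right; exact ⟨sub_eq_zero.2 x1, (C.LZ.unit_iff _).2 hl, sub_eq_zero.2 x2⟩
      · rintro ⟨hx, rfl | ⟨x1, x2, x3⟩⟩
        · exact ⟨hx, rfl, rfl⟩
        · exact ⟨hx, sub_eq_zero.1 x1, sub_eq_zero.1 x3⟩
    rw [e, Bc_insert hb (by intro hh; exact C.LZ.not_both (mul_zero _) hh.2.1)]
    have := (h2 b hb).2
    have h3 := C.hr.one_lt
    unfold b1 at this
    omega

end Core

section Ev
set_option linter.unusedSectionVars false
set_option linter.style.haveILetI false

/-- evaluation of a function on `ZMod M` -/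
noncomputable def tr {M : ℕ} [NeZero M] (c : ZMod M → ℂ) (ζ : ℂ) : ℂ := ∑ x, c x * ζ ^ x.val

/-- evaluation of the mask polynomial -/
noncomputable def ev {M : ℕ} (A : Finset (ZMod M)) (ζ : ℂ) : ℂ := ∑ a ∈ A, ζ ^ a.val

variable {M : ℕ} [NeZero M]

theorem cyc_iff {s : ℕ} (hs : 0 < s) {A : Finset (ZMod M)} {ζ : ℂ} (hζ : IsPrimitiveRoot ζ s) :
    cycDvd M s A ↔ ev A ζ = 0 := by
  unfold cycDvd
  rw [cyclotomic_eq_minpoly hζ hs, ← minpoly.isIntegrallyClosed_dvd_iff (hζ.isIntegral hs)]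
  simp [maskPoly, ev]

theorem pow_val_add {ζ : ℂ} (hζ : ζ ^ M = 1) (x y : ZMod M) : ζ ^ (x + y).val = ζ ^ x.val * ζ ^ y.val := by
  rw [ZMod.val_add, ← pow_add]
  exact (pow_eq_pow_mod _ hζ).symm

theorem pow_val_mul {ζ : ℂ} (hζ : ζ ^ M = 1) (x y : ZMod M) : ζ ^ (x * y).val = (ζ ^ x.val) ^ y.val := by
  rw [ZMod.val_mul, ← pow_mul]
  exact (pow_eq_pow_mod _ hζ).symm

theorem pow_val_natCast {ζ : ℂ} (hζ : ζ ^ M = 1) (k : ℕ) : ζ ^ (k : ZMod M).val = ζ ^ k := by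
  rw [ZMod.val_natCast]
  exact (pow_eq_pow_mod _ hζ).symm

theorem tr_inj {c : ZMod M → ℂ} (H : ∀ ζ : ℂ, ζ ^ M = 1 → tr c ζ = 0) (x : ZMod M) : c x = 0 := by
  have hM : M ≠ 0 := NeZero.ne M
  set P : ℂ[X] := ∑ x : ZMod M, C (c x) * X ^ x.val with hP
  have h0 : P = 0 := by
    apply eq_zero_of_natDegree_lt_card_of_eval_eq_zero' P (nthRootsFinset M (1 : ℂ))
    · intro ζ hζ
      rw [mem_nthRootsFinset (Nat.pos_of_ne_zero hM)] at hζ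
      have := H ζ hζ
      unfold tr at this
      rw [← this, hP, eval_finsetSum]
      simp
    · rw [(Complex.isPrimitiveRoot_exp M hM).card_nthRootsFinset]
      apply lt_of_le_of_lt (b := M - 1)
      · apply natDegree_sum_le_of_forall_le
        intro x _
        refine (natDegree_C_mul_X_pow_le _ _).trans ?_
        have := ZMod.val_lt x
        omega
      · omega
  have h1 : P.coeff x.val = c x := by
    rw [hP, finsetSum_coeff, Finset.sum_eq_single x]
    · simp
    · intro y _ hy
      rw [coeff_C_mul_X_pow, if_neg]
      intro hxy
      exact hy (ZMod.val_injective M hxy).symm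
    · simp
  rw [← h1, h0, coeff_zero]

/-- translation-difference -/
noncomputable def df (d : ZMod M) (c : ZMod M → ℂ) : ZMod M → ℂ := fun x => c x - c (x - d)

theorem tr_df {ζ : ℂ} (hζ : ζ ^ M = 1) (d : ZMod M) (c : ZMod M → ℂ) :
    tr (df d c) ζ = (1 - ζ ^ d.val) * tr c ζ := by
  have h1 : ∑ x : ZMod M, c (x - d) * ζ ^ x.val = ζ ^ d.val * tr c ζ := by
    unfold tr
    rw [← Equiv.sum_comp (Equiv.addRight d), Finset.mul_sum]
    apply Finset.sum_congr rfl
    intro x _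
    simp only [Equiv.coe_addRight, add_sub_cancel_right]
    rw [pow_val_add hζ]; ring
  unfold df
  rw [sub_mul, one_mul, ← h1]
  unfold tr
  rw [← Finset.sum_sub_distrib]
  apply Finset.sum_congr rfl
  intro x _
  ring

theorem sum_all {ζ : ℂ} (hζ : ζ ^ M = 1) (h1 : ζ ≠ 1) : ∑ x : ZMod M, ζ ^ x.val = 0 := by
  have h2 : tr (fun _ : ZMod M => (1 : ℂ)) ζ = ∑ x : ZMod M, ζ ^ x.val := by simp [tr]
  have h3 := tr_df hζ 1 (fun _ : ZMod M => (1 : ℂ))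
  have h4 : tr (df 1 (fun _ : ZMod M => (1 : ℂ))) ζ = 0 := by simp [tr, df]
  have h5 : ζ ^ (1 : ZMod M).val = ζ := by
    have := pow_val_natCast (M := M) hζ 1
    simpa using this
  rw [h4, h5] at h3
  rw [← h2]
  rcases mul_eq_zero.1 h3.symm with h | h
  · exact absurd (sub_eq_zero.1 h).symm h1
  · exact h

open scoped Classical in
/-- number of elements of `A` in a residue class -/
noncomputable def cnt {s : ℕ} (φ : ZMod M →+* ZMod s) (A : Finset (ZMod M)) (x : ZMod s) : ℕ :=
  (A.filter (fun a => φ a = x)).card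

theorem phi_val {s : ℕ} [NeZero s] (φ : ZMod M →+* ZMod s) (a : ZMod M) : φ a = (a.val : ZMod s) := by
  conv_lhs => rw [← ZMod.natCast_zmod_val a]
  rw [map_natCast]

theorem ev_phi {s : ℕ} [NeZero s] (φ : ZMod M →+* ZMod s) (A : Finset (ZMod M)) {ζ : ℂ} (hζ : ζ ^ s = 1) :
    tr (fun x => (cnt φ A x : ℂ)) ζ = ev A ζ := by
  classical
  unfold tr ev
  rw [← Finset.sum_fiberwise (s := A) (g := φ)]
  apply Finset.sum_congr rfl
  intro x _
  unfold cnt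
  rw [← nsmul_eq_mul, ← Finset.sum_const]
  apply Finset.sum_congr
  · ext a; simp
  · intro a ha
    rw [Finset.mem_filter] at ha
    rw [← ha.2, phi_val φ a, pow_val_natCast hζ]

theorem prim_of {s : ℕ} (hs : 0 < s) {ζ : ℂ} (hζ : ζ ^ s = 1) : ∃ d, 0 < d ∧ d ∣ s ∧ IsPrimitiveRoot ζ d := by
  refine ⟨orderOf ζ, ?_, orderOf_dvd_of_pow_eq_one hζ, IsPrimitiveRoot.orderOf ζ⟩
  exact orderOf_pos_iff.2 (isOfFinOrder_iff_pow_eq_one.2 ⟨s, hs, hζ⟩)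

theorem ev_one (A : Finset (ZMod M)) : ev A 1 = A.card := by simp [ev]

/-- tilings and products -/
theorem ev_tile {A B : Finset (ZMod M)} (H : IsTiling M (A : Set (ZMod M)) (B : Set (ZMod M))) {ζ : ℂ}
    (hζ : ζ ^ M = 1) : ev A ζ * ev B ζ = ∑ x : ZMod M, ζ ^ x.val := by
  unfold ev
  rw [Finset.sum_mul_sum, ← Finset.sum_product']
  apply Finset.sum_bij (fun ab _ => ab.1 + ab.2)
  · simp
  · rintro ⟨a, b⟩ h1 ⟨a', b'⟩ h2 he
    rw [Finset.mem_product] at h1 h2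
    obtain ⟨w, _, hw⟩ := H (a + b)
    rw [hw (a, b) ⟨h1.1, h1.2, rfl⟩, hw (a', b') ⟨h2.1, h2.2, he.symm⟩]
  · intro x _
    obtain ⟨w, ⟨h1, h2, h3⟩, _⟩ := H x
    exact ⟨w, Finset.mem_product.2 ⟨h1, h2⟩, h3⟩
  · rintro ⟨a, b⟩ _
    rw [pow_val_add hζ]

theorem card_tile {A B : Finset (ZMod M)} (H : IsTiling M (A : Set (ZMod M)) (B : Set (ZMod M))) :
    A.card * B.card = M := by
  have := ev_tile H (ζ := 1) (one_pow _)
  rw [ev_one, ev_one] at this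
  simp only [one_pow, Finset.sum_const, Finset.card_univ, ZMod.card, nsmul_eq_mul, mul_one] at this
  exact_mod_cast this

theorem cyc_or {A B : Finset (ZMod M)} (H : IsTiling M (A : Set (ZMod M)) (B : Set (ZMod M))) {s : ℕ}
    (hs : 1 < s) (hsM : s ∣ M) : cycDvd M s A ∨ cycDvd M s B := by
  have hp := Complex.isPrimitiveRoot_exp s (by omega)
  rw [cyc_iff (by omega) hp, cyc_iff (by omega) hp, ← mul_eq_zero]
  have h1 := (hp.pow_eq_one_iff_dvd M).2 hsM
  rw [ev_tile H h1]
  exact sum_all h1 (hp.ne_one hs)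

/-- Tijdeman's dilation theorem -/
theorem tijdeman {A B : Finset (ZMod M)} (H : IsTiling M (A : Set (ZMod M)) (B : Set (ZMod M)))
    (t : ZMod M) (ht : IsUnit t) (x : ZMod M) :
    ∃! ab : ZMod M × ZMod M, ab.1 ∈ A ∧ ab.2 ∈ B ∧ ab.1 + t * ab.2 = x := by
  classical
  have hM0 : M ≠ 0 := NeZero.ne M
  set c : ZMod M → ℂ := fun x => (((A ×ˢ B).filter (fun ab => ab.1 + t * ab.2 = x)).card : ℂ) with hc
  have htr : ∀ ζ : ℂ, ζ ^ M = 1 → tr c ζ = ev A ζ * ev B (ζ ^ t.val) := by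
    intro ζ hζ
    unfold ev
    rw [Finset.sum_mul_sum, ← Finset.sum_product', ← Finset.sum_fiberwise (g := fun ab : ZMod M × ZMod M => ab.1 + t * ab.2)]
    unfold tr
    apply Finset.sum_congr rfl
    intro y _
    simp only [hc]
    rw [← nsmul_eq_mul, ← Finset.sum_const]
    apply Finset.sum_congr rfl
    intro ab hab
    rw [Finset.mem_filter] at hab
    rw [← hab.2, pow_val_add hζ, pow_val_mul hζ]
  have h1 : ∀ y, c y - 1 = 0 := by
    apply tr_inj
    intro ζ hζ
    have e1 : tr (fun y => c y - 1) ζ = tr c ζ - ∑ x : ZMod M, ζ ^ x.val := by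
      unfold tr; rw [← Finset.sum_sub_distrib]; apply Finset.sum_congr rfl; intro x _; ring
    rw [e1, htr ζ hζ]
    by_cases hz : ζ = 1
    · subst hz
      rw [one_pow, ev_tile H (one_pow _), sub_self]
    · rw [sum_all hζ hz, sub_zero]
      obtain ⟨s, hs0, hs, hp⟩ := prim_of (Nat.pos_of_ne_zero hM0) hζ
      have h2 := ev_tile H hζ
      rw [sum_all hζ hz, mul_eq_zero] at h2
      rcases h2 with h2 | h2
      · rw [h2, zero_mul]
      · rw [← cyc_iff hs0 hp] at h2
        have hcop : t.val.Coprime s := by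
          have : t.val.Coprime M := by
            rw [← ZMod.isUnit_iff_coprime, ZMod.natCast_zmod_val]; exact ht
          exact this.coprime_dvd_right hs
        rw [(cyc_iff hs0 (hp.pow_of_coprime _ hcop)).1 h2, mul_zero]
  have h2 : ((A ×ˢ B).filter (fun ab => ab.1 + t * ab.2 = x)).card = 1 := by
    have := sub_eq_zero.1 (h1 x)
    simp only [hc] at this
    exact_mod_cast this
  rw [Finset.card_eq_one] at h2
  obtain ⟨w, hw⟩ := h2
  have hmem : ∀ ab : ZMod M × ZMod M, (ab.1 ∈ A ∧ ab.2 ∈ B ∧ ab.1 + t * ab.2 = x) ↔ ab = w := by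
    intro ab
    have e := Finset.ext_iff.1 hw ab
    rw [Finset.mem_singleton, Finset.mem_filter, Finset.mem_product, and_assoc] at e
    exact e
  exact ⟨w, (hmem w).2 rfl, fun y hy => (hmem y).1 hy⟩

/-- equidistribution -/
theorem cnt_equi {N : ℕ} [NeZero N] (φ : ZMod M →+* ZMod N) (A : Finset (ZMod M))
    (H : ∀ s, 1 < s → s ∣ N → cycDvd M s A) (x : ZMod N) : N * cnt φ A x = A.card := by
  have hN0 : N ≠ 0 := NeZero.ne N
  have h1 : ∀ y, (fun y => (N : ℂ) * cnt φ A y - A.card) y = 0 := by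
    apply tr_inj
    intro ζ hζ
    have e1 : tr (fun y => (N : ℂ) * cnt φ A y - A.card) ζ =
        N * tr (fun y => (cnt φ A y : ℂ)) ζ - A.card * ∑ x : ZMod N, ζ ^ x.val := by
      unfold tr; rw [Finset.mul_sum, Finset.mul_sum, ← Finset.sum_sub_distrib]
      apply Finset.sum_congr rfl; intro x _; ring
    rw [e1, ev_phi φ A hζ]
    by_cases hz : ζ = 1
    · subst hz
      rw [ev_one]
      simp [mul_comm]
    · rw [sum_all hζ hz, mul_zero, sub_zero]
      obtain ⟨s, hs0, hs, hp⟩ := prim_of (Nat.pos_of_ne_zero hN0) hζ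
      have hs1 : 1 < s := by
        rcases Nat.lt_or_ge 1 s with h | h
        · exact h
        · have : s = 1 := by omega
          subst this
          exact absurd (by simpa using hp.pow_eq_one) hz
      rw [(cyc_iff hs0 hp).1 (H s hs1 hs), mul_zero]
  have := sub_eq_zero.1 (h1 x)
  exact_mod_cast this

/-- complete residue systems -/
theorem cyc_of_bij {N : ℕ} [NeZero N] (φ : ZMod M →+* ZMod N) (A : Finset (ZMod M))
    (H : ∀ x, cnt φ A x = 1) {s : ℕ} (hs : 1 < s) (hsN : s ∣ N) : cycDvd M s A := by
  have hp := Complex.isPrimitiveRoot_exp s (by omega)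
  have h1 := (hp.pow_eq_one_iff_dvd N).2 hsN
  rw [cyc_iff (by omega) hp, ← ev_phi φ A h1]
  simp only [H, tr, Nat.cast_one, one_mul]
  exact sum_all h1 (hp.ne_one hs)

/-- periodicity at prime powers -/
theorem cnt_per {p n : ℕ} (hp : p.Prime) (hn : 1 ≤ n) [NeZero (p ^ n)] (φ : ZMod M →+* ZMod (p ^ n)) (A : Finset (ZMod M))
    (H : cycDvd M (p ^ n) A) (x : ZMod (p ^ n)) : cnt φ A x = cnt φ A (x - (p ^ (n - 1) : ℕ)) := by
  have h1 : ∀ y, df ((p ^ (n - 1) : ℕ) : ZMod (p ^ n)) (fun y => (cnt φ A y : ℂ)) y = 0 := by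
    apply tr_inj
    intro ζ hζ
    rw [tr_df hζ, pow_val_natCast hζ]
    by_cases h0 : ζ ^ (p ^ (n - 1)) = 1
    · rw [h0]; simp
    · obtain ⟨m, rfl⟩ : ∃ m, n = m + 1 := ⟨n - 1, by omega⟩
      simp only [Nat.add_sub_cancel] at h0
      haveI := Fact.mk hp
      have h2 := orderOf_eq_prime_pow h0 hζ
      have hprim := IsPrimitiveRoot.orderOf ζ
      rw [h2] at hprim
      rw [ev_phi φ A hζ, (cyc_iff (pow_pos hp.pos _) hprim).1 H, mul_zero]
  have := sub_eq_zero.1 (h1 x)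
  simp only at this
  exact_mod_cast this

theorem exists_prime_quot {d s : ℕ} (hd : d ∣ s) (hs : 0 < s) (hne : d ≠ s) : ∃ l, l.Prime ∧ l ∣ s ∧ d ∣ s / l := by
  obtain ⟨k, rfl⟩ := hd
  have hk : k ≠ 1 := by rintro rfl; simp at hne
  obtain ⟨l, hl, m, rfl⟩ := Nat.exists_prime_and_dvd hk
  refine ⟨l, hl, ⟨d * m, by ring⟩, ?_⟩
  rw [show d * (l * m) = l * (d * m) by ring, Nat.mul_div_cancel_left _ hl.pos]
  exact ⟨m, rfl⟩

/-- mixed differences cannot vanish at an isolated point -/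
theorem no_mixed {s p q : ℕ} [NeZero s] (hp : p.Prime) (hq : q.Prime) (hpq : p ≠ q) (hps : p ∣ s) (hqs : q ∣ s)
    (hprime : ∀ l, l.Prime → l ∣ s → l = p ∨ l = q)
    (φ : ZMod M →+* ZMod s) (B : Finset (ZMod M)) (H : cycDvd M s B) {b0 : ZMod M} (hb0 : b0 ∈ B)
    (hiso : ∀ b ∈ B, ((p * q : ℕ) : ZMod s) * (φ b - φ b0) = 0 → φ b = φ b0) : False := by
  classical
  have hs0 : 0 < s := Nat.pos_of_ne_zero (NeZero.ne s)
  obtain ⟨k, hk⟩ := hps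
  obtain ⟨l, hl⟩ := hqs
  have hsp : s / p = k := by rw [hk]; exact Nat.mul_div_cancel_left _ hp.pos
  have hsq : s / q = l := by rw [hl]; exact Nat.mul_div_cancel_left _ hq.pos
  have h1 : ∀ y, df (k : ZMod s) (df (l : ZMod s) (fun y => (cnt φ B y : ℂ))) y = 0 := by
    apply tr_inj
    intro ζ hζ
    rw [tr_df hζ, pow_val_natCast hζ, tr_df hζ, pow_val_natCast hζ]
    by_cases h0 : ζ ^ k = 1
    · rw [h0]; simp
    by_cases h0' : ζ ^ l = 1
    · rw [h0']; simp
    obtain ⟨d, hd0, hd, hprim⟩ := prim_of hs0 hζ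
    by_cases hds : d = s
    · subst hds
      rw [ev_phi φ B hζ, (cyc_iff hs0 hprim).1 H]; simp
    · exfalso
      obtain ⟨m, hm, hms, hdm⟩ := exists_prime_quot hd hs0 hds
      rcases hprime m hm hms with rfl | rfl
      · rw [hsp] at hdm
        exact h0 ((hprim.pow_eq_one_iff_dvd _).2 hdm)
      · rw [hsq] at hdm
        exact h0' ((hprim.pow_eq_one_iff_dvd _).2 hdm)
  have hz : ∀ d : ZMod s, ((p * q : ℕ) : ZMod s) * d = 0 → d ≠ 0 → cnt φ B (φ b0 - d) = 0 := by
    intro d hd hd0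
    unfold cnt
    rw [Finset.card_eq_zero, Finset.filter_eq_empty_iff]
    intro b hb he
    have := hiso b hb (by rw [he, sub_sub_cancel_left, mul_neg, hd, neg_zero])
    rw [this] at he
    exact hd0 (by linear_combination he)
  have hpk : ((p : ZMod s)) * k = 0 := by
    rw [← Nat.cast_mul, ← hk, ZMod.natCast_self]
  have hql : ((q : ZMod s)) * l = 0 := by
    rw [← Nat.cast_mul, ← hl, ZMod.natCast_self]
  have hk0 : (k : ZMod s) ≠ 0 := by
    rw [Ne, ZMod.natCast_eq_zero_iff]
    intro hh
    have hkpos : 0 < k := Nat.pos_of_ne_zero (by rintro rfl; simp at hk; omega)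
    have := Nat.le_of_dvd hkpos hh
    have := hp.two_le
    nlinarith
  have hl0 : (l : ZMod s) ≠ 0 := by
    rw [Ne, ZMod.natCast_eq_zero_iff]
    intro hh
    have hkpos : 0 < l := Nat.pos_of_ne_zero (by rintro rfl; simp at hl; omega)
    have := Nat.le_of_dvd hkpos hh
    have := hq.two_le
    nlinarith
  have hkl0 : (k : ZMod s) + l ≠ 0 := by
    intro hh
    have e : ((p * l : ℕ) : ZMod s) = 0 := by push_cast; linear_combination (p : ZMod s) * hh - hpk
    rw [ZMod.natCast_eq_zero_iff] at e
    obtain ⟨m, hm⟩ := e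
    have hlpos : 0 < l := Nat.pos_of_ne_zero (by rintro rfl; simp at hl; omega)
    rw [hl] at hm
    have : q ∣ p := ⟨m, Nat.eq_of_mul_eq_mul_left hlpos (by linarith)⟩
    exact hpq ((Nat.prime_dvd_prime_iff_eq hq hp).1 this).symm
  have h2 := h1 (φ b0)
  unfold df at h2
  simp only at h2
  rw [sub_sub, sub_sub (φ b0), hz _ (by push_cast; linear_combination (p : ZMod s) * hql) hl0,
    hz _ (by push_cast; linear_combination (q : ZMod s) * hpk) hk0,
    hz _ (by push_cast; linear_combination (q : ZMod s) * hpk + (p : ZMod s) * hql) hkl0] at h2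
  simp only [Nat.cast_zero, add_zero, sub_zero, Nat.cast_eq_zero] at h2
  unfold cnt at h2
  rw [Finset.card_eq_zero, Finset.filter_eq_empty_iff] at h2
  exact h2 hb0 rfl

theorem mask_eval_one (A : Finset (ZMod M)) : (maskPoly M A).eval 1 = A.card := by
  simp [maskPoly, eval_finsetSum]

/-- two prime power cyclotomic divisors -/
theorem two_cyc {p e f : ℕ} (hp : p.Prime) (he : 1 ≤ e) (hf : 1 ≤ f) (hef : e ≠ f) {A : Finset (ZMod M)}
    (h1 : cycDvd M (p ^ e) A) (h2 : cycDvd M (p ^ f) A) : p * p ∣ A.card := by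
  haveI := Fact.mk hp
  obtain ⟨Q, hQ⟩ := h1
  unfold cycDvd at h2
  rw [hQ] at h2
  have hirr : ∀ e, Irreducible (cyclotomic (p ^ e) ℤ) := fun e => cyclotomic.irreducible (pow_pos hp.pos _)
  rcases (hirr f).prime.dvd_or_dvd h2 with h | h
  · exfalso
    have h3 := ((hirr f).associated_of_dvd (hirr e) h)
    have h4 := eq_of_monic_of_associated (cyclotomic.monic _ _) (cyclotomic.monic _ _) h3
    have h5 := cyclotomic_injective h4
    exact hef (Nat.pow_right_injective hp.two_le h5).symm
  · obtain ⟨Q', rfl⟩ := h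
    have h3 := mask_eval_one A
    obtain ⟨e', rfl⟩ : ∃ m, e = m + 1 := ⟨e - 1, by omega⟩
    obtain ⟨f', rfl⟩ : ∃ m, f = m + 1 := ⟨f - 1, by omega⟩
    rw [hQ, eval_mul, eval_mul, eval_one_cyclotomic_prime_pow, eval_one_cyclotomic_prime_pow] at h3
    have : ((p * p : ℕ) : ℤ) ∣ (A.card : ℤ) := ⟨eval 1 Q', by rw [← h3]; push_cast; ring⟩
    exact_mod_cast this

end Ev

section Zm
set_option linter.unusedSectionVars false
set_option linter.style.haveILetI false

theorem nat_red {p n v : ℕ} (hp : p.Prime) (h : p ^ (n + 1) ∣ p * v) : p ^ n ∣ v := by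
  rw [pow_succ'] at h
  exact Nat.dvd_of_mul_dvd_mul_left hp.pos h

theorem zm_dvd {p n : ℕ} (hp : p.Prime) (x : ZMod (p ^ (n + 1))) (hx : (p : ZMod (p ^ (n + 1))) * x = 0) :
    ∃ e : ZMod (p ^ (n + 1)), x = (p : ZMod (p ^ (n + 1))) ^ n * e := by
  haveI : NeZero (p ^ (n + 1)) := ⟨(pow_pos hp.pos _).ne'⟩
  have h1 : ((p * x.val : ℕ) : ZMod (p ^ (n + 1))) = 0 := by
    rw [Nat.cast_mul, ZMod.natCast_zmod_val, hx]
  rw [ZMod.natCast_eq_zero_iff] at h1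
  obtain ⟨k, hk⟩ := nat_red hp h1
  exact ⟨k, by rw [← ZMod.natCast_zmod_val x, hk]; push_cast; rfl⟩

theorem zm_unit {p n : ℕ} (hp : p.Prime) (m : ℕ) : IsUnit (m : ZMod (p ^ (n + 1))) ↔ ¬ p ∣ m := by
  rw [ZMod.isUnit_iff_coprime, Nat.coprime_pow_right_iff (by omega), Nat.coprime_comm, hp.coprime_iff_not_dvd]

theorem zm_nonunit {p n : ℕ} (hp : p.Prime) (x : ZMod (p ^ (n + 1))) (hx : ¬ IsUnit x) :
    ∃ e : ZMod (p ^ (n + 1)), x = p * e := by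
  haveI : NeZero (p ^ (n + 1)) := ⟨(pow_pos hp.pos _).ne'⟩
  rw [← ZMod.natCast_zmod_val x, zm_unit hp, not_not] at hx
  obtain ⟨k, hk⟩ := hx
  exact ⟨k, by rw [← ZMod.natCast_zmod_val x, hk]; push_cast; rfl⟩

theorem zm_top {p n : ℕ} : (p : ZMod (p ^ (n + 1))) ^ (n + 1) = 0 := by
  rw [← Nat.cast_pow, ZMod.natCast_self]

theorem zm_notunit {p n : ℕ} (hp : p.Prime) (e : ZMod (p ^ (n + 1))) : ¬ IsUnit ((p : ZMod (p ^ (n + 1))) * e) := by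
  intro h
  have h2 := isUnit_of_mul_isUnit_left h
  rw [zm_unit hp] at h2
  exact h2 (dvd_refl p)

theorem lv_zmod {p n : ℕ} (hp : p.Prime) : Lv p (ZMod (p ^ (n + 1))) where
  assoc := by
    haveI : NeZero (p ^ (n + 1)) := ⟨(pow_pos hp.pos _).ne'⟩
    intro s d hd hs hsd
    obtain ⟨e, rfl⟩ := zm_dvd hp d hd
    obtain ⟨k, m, hm, hk⟩ := Nat.exists_eq_pow_mul_and_not_dvd
      (n := s.val) (by rwa [Ne, ZMod.val_eq_zero]) p hp.one_lt.ne'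
    have hs' : s = (p : ZMod (p ^ (n + 1))) ^ k * m := by
      rw [← ZMod.natCast_zmod_val s, hk]; push_cast; rfl
    have hu : IsUnit (m : ZMod (p ^ (n + 1))) := (zm_unit hp m).2 hm
    have hkn : k ≤ n := by
      by_contra hc
      apply hs
      have ej : k = n + 1 + (k - (n + 1)) := by omega
      rw [hs', ej, pow_add (p : ZMod (p ^ (n + 1))) (n + 1), zm_top (p := p) (n := n), zero_mul, zero_mul]
    obtain ⟨j, hj⟩ : ∃ j, n = k + j := ⟨n - k, by omega⟩
    have h1 : s + (p : ZMod (p ^ (n + 1))) ^ n * e =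
        (p : ZMod (p ^ (n + 1))) ^ k * ((m : ZMod (p ^ (n + 1))) + (p : ZMod (p ^ (n + 1))) ^ j * e) := by
      have : (p : ZMod (p ^ (n + 1))) ^ n = (p : ZMod (p ^ (n + 1))) ^ k * (p : ZMod (p ^ (n + 1))) ^ j := by
        rw [← pow_add]; exact congrArg _ hj
      rw [hs', this]; ring
    have hv : IsUnit ((m : ZMod (p ^ (n + 1))) + (p : ZMod (p ^ (n + 1))) ^ j * e) := by
      by_contra hnu
      obtain ⟨w, hw⟩ := zm_nonunit hp _ hnu
      rcases j with _ | j
      · apply hsd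
        have hkn' : k = n := by omega
        rw [h1, hw, ← mul_assoc, ← pow_succ, hkn', zm_top (p := p) (n := n), zero_mul]
      · apply zm_notunit hp (w - (p : ZMod (p ^ (n + 1))) ^ j * e)
        rw [mul_sub, ← hw, ← mul_assoc, ← pow_succ']
        simpa using hu
    rw [h1, hs']
    exact Associated.mul_left _ (Cl_unit _ _ hu hv)
  cardK := by
    haveI : NeZero (p ^ (n + 1)) := ⟨(pow_pos hp.pos _).ne'⟩
    have hlt : ∀ k : Fin p, p ^ n * k < p ^ (n + 1) := fun k => by
      rw [pow_succ]; exact Nat.mul_lt_mul_of_pos_left k.2 (pow_pos hp.pos _)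
    rw [← Nat.card_eq_of_bijective (fun k : Fin p => (⟨((p ^ n * (k : ℕ) : ℕ) : ZMod (p ^ (n + 1))), by
      rw [← Nat.cast_mul, ← mul_assoc, ← pow_succ', Nat.cast_mul, ZMod.natCast_self, zero_mul]⟩ :
        {x : ZMod (p ^ (n + 1)) // (p : ZMod (p ^ (n + 1))) * x = 0})) ?_]
    · simp
    · constructor
      · intro k k' hkk
        have h1 := congrArg (fun x => ZMod.val x.1) hkk
        simp only at h1
        rw [ZMod.val_natCast_of_lt (hlt k), ZMod.val_natCast_of_lt (hlt k')] at h1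
        exact Fin.ext (Nat.eq_of_mul_eq_mul_left (pow_pos hp.pos _) h1)
      · rintro ⟨x, hx⟩
        have h1 : ((p * x.val : ℕ) : ZMod (p ^ (n + 1))) = 0 := by
          rw [Nat.cast_mul, ZMod.natCast_zmod_val, hx]
        rw [ZMod.natCast_eq_zero_iff] at h1
        obtain ⟨k, hk⟩ := nat_red hp h1
        have hkp : k < p := by
          have := ZMod.val_lt x
          rw [hk, pow_succ] at this
          exact Nat.lt_of_mul_lt_mul_left this
        refine ⟨⟨k, hkp⟩, ?_⟩
        apply Subtype.ext
        simp only
        rw [← hk, ZMod.natCast_zmod_val]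

theorem lv2_zmod {p : ℕ} (hp : p.Prime) : Lv2 p (ZMod (p ^ 2)) where
  toLv := lv_zmod (n := 1) hp
  cardX := by simp
  unit_iff := by
    haveI : NeZero (p ^ 2) := ⟨(pow_pos hp.pos _).ne'⟩
    intro x
    have h1 := zm_unit (n := 1) hp x.val
    have h2 : (p : ZMod (p ^ 2)) * x = ((p * x.val : ℕ) : ZMod (p ^ 2)) := by
      rw [Nat.cast_mul, ZMod.natCast_zmod_val]
    have h3 : p ^ 2 ∣ p * x.val ↔ p ∣ x.val := by
      constructor
      · intro hh
        simpa using nat_red (n := 1) hp hh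
      · rintro ⟨k, hk⟩
        exact ⟨k, by rw [hk]; ring⟩
    rw [h2, Ne, ZMod.natCast_eq_zero_iff, h3, ← h1, ZMod.natCast_zmod_val]

end Zm

section Su
set_option linter.unusedSectionVars false
set_option linter.style.haveILetI false

/-- arithmetic data -/
structure Su (M p q r n : ℕ) : Prop where
  hp : p.Prime
  hq : q.Prime
  hr : r.Prime
  hpq : p ≠ q
  hpr : p ≠ r
  hqr : q ≠ r
  hM : M = p ^ (n + 1) * q ^ 2 * r ^ 2

variable {M p q r n : ℕ} [NeZero M]

theorem phi_zero {s : ℕ} [NeZero s] (φ : ZMod M →+* ZMod s) (d : ZMod M) : φ d = 0 ↔ s ∣ d.val := by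
  rw [phi_val φ d, ZMod.natCast_eq_zero_iff]

theorem phi_mul_zero {s : ℕ} [NeZero s] (φ : ZMod M →+* ZMod s) (k : ℕ) (d : ZMod M) :
    (k : ZMod s) * φ d = 0 ↔ s ∣ k * d.val := by
  rw [phi_val φ d, ← Nat.cast_mul, ZMod.natCast_eq_zero_iff]

theorem grid_iff {N : ℕ} (hN : N ∣ M) (d : ZMod M) : (N : ZMod M) ∣ d ↔ N ∣ d.val := by
  constructor
  · rintro ⟨k, rfl⟩
    rw [ZMod.val_mul, Nat.dvd_mod_iff hN, ZMod.val_natCast]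
    exact Dvd.dvd.mul_right ((Nat.dvd_mod_iff hN).2 dvd_rfl) _
  · rintro ⟨k, hk⟩
    exact ⟨k, by rw [← ZMod.natCast_zmod_val d, hk]; push_cast; rfl⟩

theorem tri {a b c v : ℕ} (hab : a.Coprime b) (hac : a.Coprime c) (hbc : b.Coprime c) :
    a * b * c ∣ v ↔ a ∣ v ∧ b ∣ v ∧ c ∣ v := by
  constructor
  · intro h
    exact ⟨((dvd_mul_right a b).mul_right c).trans h, ((dvd_mul_left b a).mul_right c).trans h,
      (dvd_mul_left c _).trans h⟩
  · rintro ⟨h1, h2, h3⟩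
    exact (Nat.Coprime.mul_left hac hbc).mul_dvd_of_dvd_of_dvd (hab.mul_dvd_of_dvd_of_dvd h1 h2) h3

theorem nat_red' {p n v : ℕ} (hp : p.Prime) : p ^ (n + 1) ∣ p * v ↔ p ^ n ∣ v := by
  rw [pow_succ']; exact Nat.mul_dvd_mul_iff_left hp.pos

theorem nat_red2 {p v : ℕ} (hp : p.Prime) : p ^ 2 ∣ p * v ↔ p ∣ v := by
  rw [nat_red' (n := 1) hp, pow_one]

theorem Su.cop (S : Su M p q r n) : p.Coprime q ∧ p.Coprime r ∧ q.Coprime r :=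
  ⟨(Nat.coprime_primes S.hp S.hq).2 S.hpq, (Nat.coprime_primes S.hp S.hr).2 S.hpr,
    (Nat.coprime_primes S.hq S.hr).2 S.hqr⟩

theorem Su.swap (S : Su M p q r n) : Su M p r q n :=
  ⟨S.hp, S.hr, S.hq, S.hpr, S.hpq, S.hqr.symm, by rw [S.hM]; ring⟩

variable [NeZero (p ^ (n + 1))] [NeZero (q ^ 2)] [NeZero (r ^ 2)]
variable (f : ZMod M →+* ZMod (p ^ (n + 1))) (g : ZMod M →+* ZMod (q ^ 2)) (h : ZMod M →+* ZMod (r ^ 2))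

theorem Su.grid_q (S : Su M p q r n) (x y : ZMod M) : y ∈ gridSet M x (M / q) ↔
    f y = f x ∧ (q : ZMod (q ^ 2)) * (g y - g x) = 0 ∧ h y = h x := by
  obtain ⟨c1, c2, c3⟩ := S.cop
  have e : M / q = p ^ (n + 1) * q * r ^ 2 := by
    rw [S.hM]; apply Nat.div_eq_of_eq_mul_left S.hq.pos; ring
  have eM : M / q ∣ M := by rw [e, S.hM]; exact ⟨q, by ring⟩
  unfold gridSet
  rw [Set.mem_ofPred_eq, grid_iff eM, e, tri (c1.pow_left _) (Nat.Coprime.pow _ _ c2) (c3.pow_right _),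
    ← sub_eq_zero (a := f y), ← sub_eq_zero (a := h y), ← map_sub, ← map_sub, ← map_sub, phi_zero, phi_zero,
    phi_mul_zero, nat_red2 S.hq]

theorem Su.grid_r (S : Su M p q r n) (x y : ZMod M) : y ∈ gridSet M x (M / r) ↔
    f y = f x ∧ g y = g x ∧ (r : ZMod (r ^ 2)) * (h y - h x) = 0 := by
  rw [S.swap.grid_q f h g]; tauto

theorem Su.grid_qr (S : Su M p q r n) (x y : ZMod M) : y ∈ gridSet M x (M / (q * r)) ↔
    f y = f x ∧ (q : ZMod (q ^ 2)) * (g y - g x) = 0 ∧ (r : ZMod (r ^ 2)) * (h y - h x) = 0 := by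
  obtain ⟨c1, c2, c3⟩ := S.cop
  have e : M / (q * r) = p ^ (n + 1) * q * r := by
    rw [S.hM]; apply Nat.div_eq_of_eq_mul_left (Nat.mul_pos S.hq.pos S.hr.pos); ring
  have eM : M / (q * r) ∣ M := by rw [e, S.hM]; exact ⟨q * r, by ring⟩
  unfold gridSet
  rw [Set.mem_ofPred_eq, grid_iff eM, e, tri (c1.pow_left _) (c2.pow_left _) c3,
    ← sub_eq_zero (a := f y), ← map_sub, ← map_sub, ← map_sub, phi_zero,
    phi_mul_zero, nat_red2 S.hq, phi_mul_zero, nat_red2 S.hr]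

theorem Su.grid_D (S : Su M p q r n) (x y : ZMod M) : y ∈ gridSet M x (p ^ n * q * r) ↔
    (p : ZMod (p ^ (n + 1))) * (f y - f x) = 0 ∧ (q : ZMod (q ^ 2)) * (g y - g x) = 0 ∧ (r : ZMod (r ^ 2)) * (h y - h x) = 0 := by
  obtain ⟨c1, c2, c3⟩ := S.cop
  have eM : p ^ n * q * r ∣ M := by rw [S.hM]; exact ⟨p * q * r, by ring⟩
  unfold gridSet
  rw [Set.mem_ofPred_eq, grid_iff eM, tri (c1.pow_left _) (c2.pow_left _) c3,
    ← map_sub, ← map_sub, ← map_sub,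
    phi_mul_zero, nat_red' S.hp, phi_mul_zero, nat_red2 S.hq, phi_mul_zero, nat_red2 S.hr]

theorem Su.bij (S : Su M p q r n) : Function.Bijective (fun t : ZMod M => (f t, g t, h t)) := by
  obtain ⟨c1, c2, c3⟩ := S.cop
  rw [Fintype.bijective_iff_injective_and_card]
  constructor
  · intro s t he
    simp only [Prod.mk.injEq] at he
    rw [← sub_eq_zero (a := f s), ← sub_eq_zero (a := g s), ← sub_eq_zero (a := h s), ← map_sub, ← map_sub, ← map_sub,
      phi_zero, phi_zero, phi_zero, ← tri (Nat.Coprime.pow _ _ c1) (Nat.Coprime.pow _ _ c2) (Nat.Coprime.pow _ _ c3),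
      ← S.hM] at he
    have := Nat.eq_zero_of_dvd_of_lt he (ZMod.val_lt _)
    rw [ZMod.val_eq_zero] at this
    exact sub_eq_zero.1 this
  · simp only [Fintype.card_prod, ZMod.card]
    rw [S.hM]; ring

/-- equidistribution over cosets of the bottom level -/
theorem per_sum {p n : ℕ} [NeZero (p ^ (n + 1))] (hp : p.Prime) (f : ZMod M →+* ZMod (p ^ (n + 1))) (A : Finset (ZMod M))
    (H : cycDvd M (p ^ (n + 1)) A) (x : ZMod (p ^ (n + 1))) (T : Finset (ZMod M))
    (hT : ∀ a, a ∈ T ↔ a ∈ A ∧ (p : ZMod (p ^ (n + 1))) * (f a - x) = 0) :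
    p * cnt f A x = T.card := by
  classical
  have h1 := cnt_per hp (by omega) f A H
  have h2 : ∀ (k : ℕ) y, cnt f A (y + k * ((p ^ n : ℕ) : ZMod (p ^ (n + 1)))) = cnt f A y := by
    intro k
    induction k with
    | zero => intro y; simp
    | succ k ih =>
      intro y
      rw [← ih y, h1]
      congr 1
      simp only [Nat.add_sub_cancel]
      push_cast
      ring
  have h3 : ∀ y ∈ Ball p x, cnt f A y = cnt f A x := by
    intro y hy
    rw [mem_Ball] at hy
    obtain ⟨e, he⟩ := zm_dvd hp _ hy
    rw [← h2 e.val x, ZMod.natCast_zmod_val]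
    congr 1
    push_cast
    linear_combination he
  rw [Finset.card_eq_sum_card_fiberwise (f := f) (t := Ball p x), Finset.sum_congr rfl (g := fun _ => cnt f A x)]
  · rw [Finset.sum_const, card_Ball (lv_zmod hp), smul_eq_mul]
  · intro y hy
    rw [← h3 y hy]
    unfold cnt
    congr 1
    ext a
    simp only [Finset.mem_filter, hT]
    rw [mem_Ball] at hy
    constructor
    · rintro ⟨⟨k1, k2⟩, k3⟩; exact ⟨k1, k3⟩
    · rintro ⟨k1, k3⟩; exact ⟨⟨k1, by rw [k3]; exact hy⟩, k3⟩
  · intro a ha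
    exact mem_Ball.2 ((hT a).1 ha).2

theorem Su.cardB (S : Su M p q r n) {A B : Finset (ZMod M)} (H : IsTiling M (A : Set (ZMod M)) (B : Set (ZMod M)))
    (hA : A.card = p * q * r) : B.card = p ^ n * q * r := by
  have := card_tile H
  rw [hA] at this
  have e := this.trans S.hM
  have hpos : 0 < p * q * r := Nat.mul_pos (Nat.mul_pos S.hp.pos S.hq.pos) S.hr.pos
  apply Nat.eq_of_mul_eq_mul_left hpos
  rw [e]; ring

theorem Su.ndvd (S : Su M p q r n) : ¬ p ^ (n + 1) ∣ p ^ n * q * r ∧ ¬ q ^ 2 ∣ p ^ n * q * r ∧ ¬ r ^ 2 ∣ p ^ n * q * r := by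
  obtain ⟨c1, c2, c3⟩ := S.cop
  refine ⟨?_, ?_, ?_⟩
  · intro hh
    rw [pow_succ, mul_assoc] at hh
    have h1 := Nat.dvd_of_mul_dvd_mul_left (pow_pos S.hp.pos n) hh
    have h2 := c2.dvd_of_dvd_mul_right h1
    exact S.hp.one_lt.ne' (Nat.eq_one_of_dvd_coprimes c1 dvd_rfl h2)
  · intro hh
    rw [pow_two, show p ^ n * q * r = q * (p ^ n * r) by ring] at hh
    have h1 := Nat.dvd_of_mul_dvd_mul_left S.hq.pos hh
    have h2 := c3.dvd_of_dvd_mul_right h1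
    exact S.hq.one_lt.ne' (Nat.eq_one_of_dvd_coprimes (c1.symm.pow_right n) dvd_rfl h2)
  · intro hh
    rw [pow_two, show p ^ n * q * r = r * (p ^ n * q) by ring] at hh
    have h1 := Nat.dvd_of_mul_dvd_mul_left S.hr.pos hh
    have h2 := c3.symm.dvd_of_dvd_mul_right h1
    exact S.hr.one_lt.ne' (Nat.eq_one_of_dvd_coprimes (c2.symm.pow_right n) dvd_rfl h2)

theorem Su.slice (S : Su M p q r n) {A B : Finset (ZMod M)} (H : IsTiling M (A : Set (ZMod M)) (B : Set (ZMod M)))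
    (hA : A.card = p * q * r) (c : ZMod (p ^ (n + 1))) : cnt f A c ≤ q * r := by
  classical
  by_cases hex : ∃ m, m ≤ n ∧ cycDvd M (p ^ (m + 1)) A
  · obtain ⟨m, hm, hcyc⟩ := hex
    by_cases hne : ∃ a0 ∈ A, f a0 = c
    · obtain ⟨a0, ha0, rfl⟩ := hne
      have hd : p ^ (m + 1) ∣ M := by
        rw [S.hM, mul_assoc]; exact (pow_dvd_pow p (by omega)).mul_right _
      haveI : NeZero (p ^ (m + 1)) := ⟨(pow_pos S.hp.pos _).ne'⟩
      let φ : ZMod M →+* ZMod (p ^ (m + 1)) := ZMod.castHom hd _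
      have h1 := per_sum S.hp φ A hcyc (φ a0) (A.filter (fun a => (p : ZMod (p ^ (m + 1))) * (φ a - φ a0) = 0))
        (fun a => Finset.mem_filter)
      have h2 : (A.filter (fun a => (p : ZMod (p ^ (m + 1))) * (φ a - φ a0) = 0)).card ≤ A.card :=
        Finset.card_filter_le _ _
      rw [← h1, hA, mul_assoc] at h2
      have h3 := Nat.le_of_mul_le_mul_left h2 S.hp.pos
      refine le_trans ?_ h3
      unfold cnt
      apply Finset.card_le_card
      intro a ha
      rw [Finset.mem_filter] at ha ⊢
      refine ⟨ha.1, ?_⟩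
      have h4 := ha.2
      rw [← sub_eq_zero, ← map_sub, phi_zero] at h4 ⊢
      exact (pow_dvd_pow p (by omega)).trans h4
    · push_neg at hne
      unfold cnt
      rw [Finset.filter_eq_empty_iff.2 (fun {a} ha => hne a ha)]
      simp
  · exfalso
    push_neg at hex
    have h1 := cnt_equi f B (fun s hs hsd => by
      obtain ⟨k, hk, rfl⟩ := (Nat.dvd_prime_pow S.hp).1 hsd
      rcases k with _ | k
      · simp at hs
      · rcases cyc_or H hs (hsd.trans (by rw [S.hM, mul_assoc]; exact dvd_mul_right _ _)) with h | h
        · exact absurd h (hex k (by omega))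
        · exact h) 0
    rw [S.cardB H hA] at h1
    exact S.ndvd.1 ⟨_, h1.symm⟩

theorem Su.ctx (S : Su M p q r n) {A B : Finset (ZMod M)} (H : IsTiling M (A : Set (ZMod M)) (B : Set (ZMod M)))
    (hA : A.card = p * q * r) : Ctx f g h p q r A B where
  hp := S.hp
  hq := S.hq
  hr := S.hr
  hpq := S.hpq
  hpr := S.hpr
  hqr := S.hqr
  bij := S.bij f g h
  LX := lv_zmod S.hp
  LY := lv2_zmod S.hq
  LZ := lv2_zmod S.hr
  tile := fun t ht x => tijdeman H t ht x
  slice := fun c => by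
    have := S.slice f H hA c
    unfold cnt at this
    convert this
  neB := by
    rw [← Finset.card_pos, S.cardB H hA]
    exact Nat.mul_pos (Nat.mul_pos (pow_pos S.hp.pos _) S.hq.pos) S.hr.pos

theorem Su.corner (S : Su M p q r n) {A : Finset (ZMod M)} {L : Set (ZMod M)}
    (H : ExtCorner M p q r (A : Set (ZMod M)) L) : ∃ a a' : ZMod M, Corner f g h p q r A (f a) (f a') (g a) (h a) := by
  obtain ⟨c1, c2, c3⟩ := S.cop
  have hex : ∀ x y z, ∃ t, f t = x ∧ g t = y ∧ h t = z := by
    intro x y z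
    obtain ⟨t, ht⟩ := (S.bij f g h).2 (x, y, z)
    simp only [Prod.mk.injEq] at ht
    exact ⟨t, ht⟩
  obtain ⟨a, ⟨ha, -⟩, a', ⟨ha', -⟩, hgcd, F1, F2, F3, F4⟩ := H
  rw [Finset.mem_coe] at ha ha'
  have e : M / p = p ^ n * q ^ 2 * r ^ 2 := by
    rw [S.hM]; apply Nat.div_eq_of_eq_mul_left S.hp.pos; ring
  rw [e] at hgcd
  have hdv : p ^ n * q ^ 2 * r ^ 2 ∣ (a - a').val := by rw [← hgcd]; exact Nat.gcd_dvd_left _ _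
  rw [tri (Nat.Coprime.pow _ _ c1) (Nat.Coprime.pow _ _ c2) (Nat.Coprime.pow _ _ c3)] at hdv
  obtain ⟨d1, d2, d3⟩ := hdv
  have gg : g a' = g a := by
    rw [← phi_zero g, map_sub, sub_eq_zero] at d2; exact d2.symm
  have hh : h a' = h a := by
    rw [← phi_zero h, map_sub, sub_eq_zero] at d3; exact d3.symm
  have ff : (p : ZMod (p ^ (n + 1))) * (f a - f a') = 0 := by
    rw [← map_sub, phi_mul_zero, nat_red' S.hp]; exact d1
  have fne : f a' ≠ f a := by
    intro he
    have h1 : f (a - a') = 0 := by rw [map_sub, he, sub_self]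
    rw [phi_zero] at h1
    have h2 : p ^ (n + 1) ∣ p ^ n * q ^ 2 * r ^ 2 := by
      rw [← hgcd]; apply Nat.dvd_gcd h1; rw [S.hM, mul_assoc]; exact dvd_mul_right _ _
    rw [pow_succ, mul_assoc] at h2
    have h3 := Nat.dvd_of_mul_dvd_mul_left (pow_pos S.hp.pos n) h2
    have h4 := (c2.pow_right 2).dvd_of_dvd_mul_right h3
    exact S.hp.one_lt.ne' (Nat.eq_one_of_dvd_coprimes (c1.pow_right 2) dvd_rfl h4)
  have G1 : ∀ s ∈ A, f s = f a → (q : ZMod (q ^ 2)) * (g s - g a) = 0 → (r : ZMod (r ^ 2)) * (h s - h a) = 0 →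
      ∀ t, f t = f s → (q : ZMod (q ^ 2)) * (g t - g s) = 0 → h t = h s → t ∈ A := by
    intro s hs s1 s2 s3 t t1 t2 t3
    exact (F1 s ⟨hs, (S.grid_qr f g h a s).2 ⟨s1, s2, s3⟩⟩ ((S.grid_q f g h s t).2 ⟨t1, t2, t3⟩)).1
  have G3 : ∀ s ∈ A, f s = f a' → (q : ZMod (q ^ 2)) * (g s - g a) = 0 → (r : ZMod (r ^ 2)) * (h s - h a) = 0 →
      ∀ t, f t = f s → g t = g s → (r : ZMod (r ^ 2)) * (h t - h s) = 0 → t ∈ A := by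
    intro s hs s1 s2 s3 t t1 t2 t3
    rw [← gg] at s2
    rw [← hh] at s3
    exact (F3 s ⟨hs, (S.grid_qr f g h a' s).2 ⟨s1, s2, s3⟩⟩ ((S.grid_r f g h s t).2 ⟨t1, t2, t3⟩)).1
  refine ⟨a, a', ?_⟩
  constructor
  · exact fne
  · linear_combination - ff
  · intro t t1 t2 t3
    exact G1 a ha rfl (by simp) (by simp) t t1 t2 t3
  · intro t t1 t2 t3
    exact G3 a' ha' rfl (by rw [gg]; simp) (by rw [hh]; simp) t t1 (by rw [gg]; exact t2) (by rw [hh]; exact t3)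
  · unfold Fibered at F2
    push_neg at F2
    obtain ⟨s, ⟨hs, hs2⟩, hn⟩ := F2
    obtain ⟨y, hy, hyn⟩ := Set.not_subset.1 hn
    rw [S.grid_qr f g h] at hs2
    rw [S.grid_r f g h] at hy
    have y1 : f y = f a := hy.1.trans hs2.1
    have y2 : (q : ZMod (q ^ 2)) * (g y - g a) = 0 := by rw [hy.2.1]; exact hs2.2.1
    have y3 : (r : ZMod (r ^ 2)) * (h y - h a) = 0 := by linear_combination hy.2.2 + hs2.2.2
    have hyA : y ∉ A := fun hh => hyn ⟨hh, (S.grid_qr f g h a y).2 ⟨y1, y2, y3⟩⟩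
    obtain ⟨c, k1, k2, k3⟩ := hex (f a) (g a) (h y)
    refine ⟨c, k1, k2, by rw [k3]; exact y3, fun hc => hyA ?_⟩
    exact G1 c hc k1 (by rw [k2]; simp) (by rw [k3]; exact y3) y (by rw [y1, k1]) (by rw [k2]; exact y2) k3.symm
  · unfold Fibered at F4
    push_neg at F4
    obtain ⟨s, ⟨hs, hs2⟩, hn⟩ := F4
    obtain ⟨y, hy, hyn⟩ := Set.not_subset.1 hn
    rw [S.grid_qr f g h] at hs2
    rw [S.grid_q f g h] at hy
    have y1 : f y = f a' := hy.1.trans hs2.1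
    have y3 : (r : ZMod (r ^ 2)) * (h y - h a') = 0 := by rw [hy.2.2]; exact hs2.2.2
    have y2 : (q : ZMod (q ^ 2)) * (g y - g a') = 0 := by linear_combination hy.2.1 + hs2.2.1
    have hyA : y ∉ A := fun hh => hyn ⟨hh, (S.grid_qr f g h a' y).2 ⟨y1, y2, y3⟩⟩
    rw [gg] at y2
    rw [hh] at y3
    obtain ⟨c, k1, k2, k3⟩ := hex (f a') (g y) (h a)
    refine ⟨c, k1, k3, by rw [k2]; exact y2, fun hc => hyA ?_⟩
    exact G3 c hc k1 (by rw [k2]; exact y2) (by rw [k3]; simp) y (by rw [y1, k1]) k2.symm (by rw [k3]; exact y3)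
  · intro c hc k1 k2 k3 t t1 t2 t3
    exact G1 c hc k1 (by rw [k2]; simp) k3 t (by rw [t1, k1]) (by rw [k2]; exact t3) t2
  · intro c hc k1 k2 k3 t t1 t2 t3
    exact G3 c hc k1 k3 (by rw [k2]; simp) t (by rw [t1, k1]) t2 (by rw [k2]; exact t3)

end Su

section Fin
set_option linter.unusedSectionVars false
set_option linter.style.haveILetI false

variable {M p q r n : ℕ} [NeZero M]

theorem Su.pos (S : Su M p q r n) : 0 < p ^ n * q * r :=
  Nat.mul_pos (Nat.mul_pos (pow_pos S.hp.pos _) S.hq.pos) S.hr.pos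

theorem Su.Ddvd (S : Su M p q r n) : p ^ n * q * r ∣ M := by rw [S.hM]; exact ⟨p * q * r, by ring⟩

theorem Su.one (S : Su M p q r n) {B : Finset (ZMod M)} [NeZero (p ^ n * q * r)]
    (φ : ZMod M →+* ZMod (p ^ n * q * r)) (hB : B.card = p ^ n * q * r)
    (hinj : ∀ b ∈ B, ∀ b' ∈ B, φ b = φ b' → b = b') (x) : cnt φ B x = 1 := by
  classical
  have himg : B.image φ = Finset.univ := by
    rw [← Finset.card_eq_iff_eq_univ, Finset.card_image_of_injOn (fun b hb b' hb' he => hinj b hb b' hb' he),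
      hB, ZMod.card]
  have hx : x ∈ B.image φ := by rw [himg]; exact Finset.mem_univ _
  obtain ⟨b, hb, rfl⟩ := Finset.mem_image.1 hx
  unfold cnt
  rw [Finset.card_eq_one]
  refine ⟨b, ?_⟩
  ext y
  rw [Finset.mem_filter, Finset.mem_singleton]
  constructor
  · rintro ⟨h1, h2⟩; exact hinj y h1 b hb h2
  · rintro rfl; exact ⟨hb, rfl⟩

theorem Su.tiling (S : Su M p q r n) {B : Finset (ZMod M)} [NeZero (p ^ n * q * r)]
    (φ : ZMod M →+* ZMod (p ^ n * q * r))
    (H : ∀ x, cnt φ B x = 1) (x0 : ZMod M) : IsTiling M (gridSet M x0 (p ^ n * q * r)) (B : Set (ZMod M)) := by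
  classical
  have hmem : ∀ y, y ∈ gridSet M x0 (p ^ n * q * r) ↔ φ y = φ x0 := by
    intro y
    unfold gridSet
    rw [Set.mem_ofPred_eq, grid_iff S.Ddvd, ← phi_zero φ, map_sub, sub_eq_zero]
  intro z
  have h1 := H (φ z - φ x0)
  unfold cnt at h1
  obtain ⟨b, hb⟩ := Finset.card_eq_one.1 h1
  have hb' : ∀ y, (y ∈ B ∧ φ y = φ z - φ x0) ↔ y = b := by
    intro y
    have h2 := Finset.ext_iff.1 hb y
    rw [Finset.mem_filter, Finset.mem_singleton] at h2
    exact h2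
  obtain ⟨k1, k2⟩ := (hb' b).2 rfl
  refine ⟨(z - b, b), ⟨?_, by exact_mod_cast k1, by simp⟩, ?_⟩
  · rw [hmem, map_sub, k2]; ring
  · rintro ⟨y, c⟩ ⟨m1, m2, m3⟩
    simp only at m1 m2 m3
    rw [hmem] at m1
    have : c = b := (hb' c).1 ⟨by exact_mod_cast m2, by rw [← m3, map_add, m1]; ring⟩
    subst this
    rw [← m3]; simp

/-- the top power of a prime cannot divide `B` -/
theorem top_ndvd {l m : ℕ} (hl : l.Prime) (hM : l ^ (m + 1) ∣ M) {B : Finset (ZMod M)}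
    (hB : ∀ s, 1 < s → s ∣ l ^ m → cycDvd M s B) (hn : ¬ l ^ (m + 1) ∣ B.card) : ¬ cycDvd M (l ^ (m + 1)) B := by
  intro H
  haveI : NeZero (l ^ (m + 1)) := ⟨(pow_pos hl.pos _).ne'⟩
  apply hn
  rw [← cnt_equi (ZMod.castHom hM (ZMod (l ^ (m + 1)))) B (fun s hs hsd => by
    obtain ⟨k, hk, rfl⟩ := (Nat.dvd_prime_pow hl).1 hsd
    rcases Nat.lt_or_ge k (m + 1) with h | h
    · exact hB _ hs (pow_dvd_pow l (by omega))
    · obtain rfl : k = m + 1 := by omega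
      exact H) 0]
  exact dvd_mul_right _ _

variable [NeZero (p ^ (n + 1))] [NeZero (q ^ 2)] [NeZero (r ^ 2)]
variable (f : ZMod M →+* ZMod (p ^ (n + 1))) (g : ZMod M →+* ZMod (q ^ 2)) (h : ZMod M →+* ZMod (r ^ 2))

theorem Su.cyc_pq (S : Su M p q r n) {A B : Finset (ZMod M)} (H : IsTiling M (A : Set (ZMod M)) (B : Set (ZMod M)))
    (hne : B.Nonempty)
    (C1 : ∀ b ∈ B, ∀ b' ∈ B, (p : ZMod (p ^ (n + 1))) * (f b - f b') = 0 → (q : ZMod (q ^ 2)) * (g b - g b') = 0 →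
      (r : ZMod (r ^ 2)) * (h b - h b') = 0 → b = b')
    (C2 : ∀ b ∈ B, ∀ T : Finset (ZMod M), (∀ b', b' ∈ T ↔ b' ∈ B ∧ f b' = f b ∧ g b' = g b) → T.card = r) :
    cycDvd M (p ^ (n + 1) * q ^ 2) A := by
  classical
  obtain ⟨c1, c2, c3⟩ := S.cop
  have hc : Nat.Coprime (p ^ (n + 1)) (q ^ 2) := Nat.Coprime.pow _ _ c1
  have hdM : p ^ (n + 1) * q ^ 2 ∣ M := by rw [S.hM]; exact dvd_mul_right _ _
  have hpd : p ∣ p ^ (n + 1) * q ^ 2 := (dvd_pow_self p (by omega)).mul_right _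
  have hqd : q ∣ p ^ (n + 1) * q ^ 2 := (dvd_pow_self q (by omega)).mul_left _
  have hspos : 0 < p ^ (n + 1) * q ^ 2 := Nat.mul_pos (pow_pos S.hp.pos _) (pow_pos S.hq.pos _)
  have h1s : 1 < p ^ (n + 1) * q ^ 2 := lt_of_lt_of_le S.hp.one_lt (Nat.le_of_dvd hspos hpd)
  rcases cyc_or H h1s hdM with hA | hB
  · exact hA
  exfalso
  obtain ⟨b0, hb0⟩ := hne
  haveI : NeZero (p ^ (n + 1) * q ^ 2) := ⟨hspos.ne'⟩
  refine no_mixed S.hp S.hq S.hpq hpd hqd ?_ (ZMod.castHom hdM (ZMod (p ^ (n + 1) * q ^ 2))) B hB hb0 ?_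
  · intro l hl hld
    rcases (Nat.Prime.dvd_mul hl).1 hld with h1 | h1
    · exact Or.inl ((Nat.prime_dvd_prime_iff_eq hl S.hp).1 (hl.dvd_of_dvd_pow h1))
    · exact Or.inr ((Nat.prime_dvd_prime_iff_eq hl S.hq).1 (hl.dvd_of_dvd_pow h1))
  · intro b hb hz
    rw [← map_sub, phi_mul_zero] at hz
    have e1 : p ^ n * q ∣ (b - b0).val := by
      have : p ^ (n + 1) * q ^ 2 = (p * q) * (p ^ n * q) := by ring
      rw [this] at hz
      exact Nat.dvd_of_mul_dvd_mul_left (Nat.mul_pos S.hp.pos S.hq.pos) hz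
    have zf : (p : ZMod (p ^ (n + 1))) * (f b - f b0) = 0 := by
      rw [← map_sub, phi_mul_zero, nat_red' S.hp]; exact (dvd_mul_right _ _).trans e1
    have zg : (q : ZMod (q ^ 2)) * (g b - g b0) = 0 := by
      rw [← map_sub, phi_mul_zero, nat_red2 S.hq]; exact (dvd_mul_left _ _).trans e1
    set T1 := B.filter (fun b' => f b' = f b0 ∧ g b' = g b0) with hT1
    set T2 := B.filter (fun b' => (p : ZMod (p ^ (n + 1))) * (f b' - f b0) = 0 ∧ (q : ZMod (q ^ 2)) * (g b' - g b0) = 0) with hT2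
    have hsub : T1 ⊆ T2 := by
      intro x hx
      rw [hT1, Finset.mem_filter] at hx
      rw [hT2, Finset.mem_filter]
      refine ⟨hx.1, ?_, ?_⟩
      · rw [hx.2.1]; simp
      · rw [hx.2.2]; simp
    have k1 : T1.card = r := C2 b0 hb0 T1 (fun b' => by rw [hT1, Finset.mem_filter])
    have k2 : T2.card ≤ r := by
      apply card_unit_T (g := h) S.hr (lv2_zmod S.hr)
      intro x hx x' hx' he
      rw [hT2, Finset.mem_filter] at hx hx'
      exact C1 x hx.1 x' hx'.1 (by linear_combination hx.2.1 - hx'.2.1) (by linear_combination hx.2.2 - hx'.2.2) he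
    have heq : T1 = T2 := Finset.eq_of_subset_of_card_le hsub (by omega)
    have hbT : b ∈ T1 := by
      rw [heq, hT2, Finset.mem_filter]; exact ⟨hb, zf, zg⟩
    rw [hT1, Finset.mem_filter] at hbT
    rw [← sub_eq_zero, ← map_sub, phi_zero]
    apply hc.mul_dvd_of_dvd_of_dvd
    · rw [← phi_zero f, map_sub, hbT.2.1, sub_self]
    · rw [← phi_zero g, map_sub, hbT.2.2, sub_self]

theorem Su.cyc_qr (S : Su M p q r n) {A B : Finset (ZMod M)} (H : IsTiling M (A : Set (ZMod M)) (B : Set (ZMod M)))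
    (hne : B.Nonempty)
    (C1 : ∀ b ∈ B, ∀ b' ∈ B, (p : ZMod (p ^ (n + 1))) * (f b - f b') = 0 → (q : ZMod (q ^ 2)) * (g b - g b') = 0 →
      (r : ZMod (r ^ 2)) * (h b - h b') = 0 → b = b')
    (hcA : A.card = p * q * r) (i0 : ZMod (p ^ (n + 1))) (C3 : cnt f A i0 = q * r) (hpA : cycDvd M (p ^ (n + 1)) A) :
    cycDvd M (q ^ 2 * r ^ 2) A := by
  classical
  obtain ⟨c1, c2, c3⟩ := S.cop
  have hc : Nat.Coprime (q ^ 2) (r ^ 2) := Nat.Coprime.pow _ _ c3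
  have hdM : q ^ 2 * r ^ 2 ∣ M := by rw [S.hM, mul_assoc]; exact dvd_mul_left _ _
  have hpd : q ∣ q ^ 2 * r ^ 2 := (dvd_pow_self q (by omega)).mul_right _
  have hqd : r ∣ q ^ 2 * r ^ 2 := (dvd_pow_self r (by omega)).mul_left _
  have hspos : 0 < q ^ 2 * r ^ 2 := Nat.mul_pos (pow_pos S.hq.pos _) (pow_pos S.hr.pos _)
  have h1s : 1 < q ^ 2 * r ^ 2 := lt_of_lt_of_le S.hq.one_lt (Nat.le_of_dvd hspos hpd)
  have hall : ∀ a ∈ A, (p : ZMod (p ^ (n + 1))) * (f a - i0) = 0 := by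
    have h1 := per_sum S.hp f A hpA i0 (A.filter (fun a => (p : ZMod (p ^ (n + 1))) * (f a - i0) = 0))
        (fun a => Finset.mem_filter)
    rw [C3, ← mul_assoc, ← hcA] at h1
    have h2 := Finset.eq_of_subset_of_card_le (Finset.filter_subset _ A) h1.le
    intro a ha
    rw [← h2] at ha
    exact (Finset.mem_filter.1 ha).2
  obtain ⟨b0, hb0⟩ := hne
  set B' := B.filter (fun b => (p : ZMod (p ^ (n + 1))) * (f b - f b0) = 0) with hB'
  have hprim := Complex.isPrimitiveRoot_exp (q ^ 2 * r ^ 2) (by omega)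
  set ζ := Complex.exp (2 * Real.pi * Complex.I / ((q ^ 2 * r ^ 2 : ℕ) : ℂ)) with hζ
  have hζM : ζ ^ M = 1 := (hprim.pow_eq_one_iff_dvd M).2 hdM
  set V := (Finset.univ : Finset (ZMod M)).filter (fun x => (p : ZMod (p ^ (n + 1))) * (f x - i0 - f b0) = 0) with hV
  have hprod : ev A ζ * ev B' ζ = ∑ x ∈ V, ζ ^ x.val := by
    unfold ev
    rw [Finset.sum_mul_sum, ← Finset.sum_product']
    apply Finset.sum_bij (fun ab _ => ab.1 + ab.2)
    · rintro ⟨a, b⟩ hab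
      rw [Finset.mem_product, hB', Finset.mem_filter] at hab
      rw [hV, Finset.mem_filter]
      refine ⟨Finset.mem_univ _, ?_⟩
      have := hall a hab.1
      simp only [map_add]
      linear_combination this + hab.2.2
    · rintro ⟨a, b⟩ h1 ⟨a', b'⟩ h2 he
      rw [Finset.mem_product, hB', Finset.mem_filter] at h1 h2
      obtain ⟨w, _, hw⟩ := H (a + b)
      exact (hw (a, b) ⟨by exact_mod_cast h1.1, by exact_mod_cast h1.2.1, rfl⟩).trans
        (hw (a', b') ⟨by exact_mod_cast h2.1, by exact_mod_cast h2.2.1, he.symm⟩).symm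
    · intro x hx
      rw [hV, Finset.mem_filter] at hx
      obtain ⟨⟨a, b⟩, ⟨w1, w2, w3⟩, _⟩ := H x
      simp only at w1 w2 w3
      have ha : a ∈ A := by exact_mod_cast w1
      have hb : b ∈ B := by exact_mod_cast w2
      refine ⟨(a, b), ?_, w3⟩
      rw [Finset.mem_product, hB', Finset.mem_filter]
      refine ⟨ha, hb, ?_⟩
      have k1 := hall a ha
      have k2 := hx.2
      rw [← w3, map_add] at k2
      linear_combination k2 - k1
    · rintro ⟨a, b⟩ _
      exact (pow_val_add hζM a b).symm
  have hw0 : f ((p ^ (n + 1) : ℕ) : ZMod M) = 0 := by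
    rw [map_natCast]; exact ZMod.natCast_self _
  have hwz : ζ ^ ((p ^ (n + 1) : ℕ) : ZMod M).val ≠ 1 := by
    rw [pow_val_natCast hζM]
    intro hh
    have := (hprim.pow_eq_one_iff_dvd _).1 hh
    have h2 := S.hq.dvd_of_dvd_pow (hpd.trans this)
    exact S.hpq ((Nat.prime_dvd_prime_iff_eq S.hq S.hp).1 h2).symm
  have hV0 : ∑ x ∈ V, ζ ^ x.val = 0 := by
    have h1 : ∑ x ∈ V, ζ ^ (x + ((p ^ (n + 1) : ℕ) : ZMod M)).val = ∑ x ∈ V, ζ ^ x.val := by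
      apply Finset.sum_bij (fun x _ => x + ((p ^ (n + 1) : ℕ) : ZMod M))
      · intro x hx
        rw [hV, Finset.mem_filter] at hx ⊢
        refine ⟨Finset.mem_univ _, ?_⟩
        rw [map_add, hw0, add_zero]; exact hx.2
      · intro x _ y _ he
        exact add_right_cancel he
      · intro y hy
        refine ⟨y - ((p ^ (n + 1) : ℕ) : ZMod M), ?_, by ring⟩
        rw [hV, Finset.mem_filter] at hy ⊢
        refine ⟨Finset.mem_univ _, ?_⟩
        rw [map_sub, hw0, sub_zero]; exact hy.2
      · intro x _; rfl
    simp only [pow_val_add hζM] at h1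
    rw [← Finset.sum_mul] at h1
    have h2 : (∑ x ∈ V, ζ ^ x.val) * (ζ ^ ((p ^ (n + 1) : ℕ) : ZMod M).val - 1) = 0 := by
      rw [mul_sub, h1]; ring
    rcases mul_eq_zero.1 h2 with h3 | h3
    · exact h3
    · exact absurd (sub_eq_zero.1 h3) hwz
  rw [hV0, mul_eq_zero] at hprod
  rw [cyc_iff hspos hprim]
  rcases hprod with hA | hB
  · exact hA
  exfalso
  rw [← cyc_iff hspos hprim] at hB
  haveI : NeZero (q ^ 2 * r ^ 2) := ⟨hspos.ne'⟩
  have hb0' : b0 ∈ B' := by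
    rw [hB', Finset.mem_filter]; exact ⟨hb0, by simp⟩
  refine no_mixed S.hq S.hr S.hqr hpd hqd ?_ (ZMod.castHom hdM (ZMod (q ^ 2 * r ^ 2))) B' hB hb0' ?_
  · intro l hl hld
    rcases (Nat.Prime.dvd_mul hl).1 hld with h1 | h1
    · exact Or.inl ((Nat.prime_dvd_prime_iff_eq hl S.hq).1 (hl.dvd_of_dvd_pow h1))
    · exact Or.inr ((Nat.prime_dvd_prime_iff_eq hl S.hr).1 (hl.dvd_of_dvd_pow h1))
  · intro b hb hz
    rw [hB', Finset.mem_filter] at hb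
    rw [← map_sub, phi_mul_zero] at hz
    have e1 : q * r ∣ (b - b0).val := by
      have : q ^ 2 * r ^ 2 = (q * r) * (q * r) := by ring
      rw [this] at hz
      exact Nat.dvd_of_mul_dvd_mul_left (Nat.mul_pos S.hq.pos S.hr.pos) hz
    have zf : (q : ZMod (q ^ 2)) * (g b - g b0) = 0 := by
      rw [← map_sub, phi_mul_zero, nat_red2 S.hq]; exact (dvd_mul_right _ _).trans e1
    have zg : (r : ZMod (r ^ 2)) * (h b - h b0) = 0 := by
      rw [← map_sub, phi_mul_zero, nat_red2 S.hr]; exact (dvd_mul_left _ _).trans e1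
    rw [C1 b hb.1 b0 hb0 hb.2 zf zg]

end Fin

section Fin2
set_option linter.unusedSectionVars false
set_option linter.style.haveILetI false

variable {M p q r n : ℕ} [NeZero M]

theorem Su.pcase (S : Su M p q r n) {l e : ℕ} (hl : l.Prime) (he : 1 ≤ e) (hd : l ^ e ∣ M) :
    (l = p ∧ e ≤ n + 1) ∨ (l = q ∧ e ≤ 2) ∨ (l = r ∧ e ≤ 2) := by
  obtain ⟨c1, c2, c3⟩ := S.cop
  have h1 : l ∣ M := (dvd_pow_self l (by omega)).trans hd
  rw [S.hM] at h1 hd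
  rcases (Nat.Prime.dvd_mul hl).1 h1 with h2 | h2
  · rcases (Nat.Prime.dvd_mul hl).1 h2 with h3 | h3
    · obtain rfl := (Nat.prime_dvd_prime_iff_eq hl S.hp).1 (hl.dvd_of_dvd_pow h3)
      left
      refine ⟨rfl, ?_⟩
      rw [← Nat.pow_dvd_pow_iff_le_right hl.one_lt]
      exact (Nat.Coprime.pow e 2 c1).dvd_of_dvd_mul_right ((Nat.Coprime.pow e 2 c2).dvd_of_dvd_mul_right hd)
    · obtain rfl := (Nat.prime_dvd_prime_iff_eq hl S.hq).1 (hl.dvd_of_dvd_pow h3)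
      right; left
      refine ⟨rfl, ?_⟩
      rw [← Nat.pow_dvd_pow_iff_le_right hl.one_lt]
      exact (Nat.Coprime.pow e (n + 1) c1.symm).dvd_of_dvd_mul_left
        ((Nat.Coprime.pow e 2 c3).dvd_of_dvd_mul_right hd)
  · obtain rfl := (Nat.prime_dvd_prime_iff_eq hl S.hr).1 (hl.dvd_of_dvd_pow h2)
    right; right
    refine ⟨rfl, ?_⟩
    rw [← Nat.pow_dvd_pow_iff_le_right hl.one_lt]
    exact (Nat.Coprime.mul_right (Nat.Coprime.pow e (n + 1) c2.symm) (Nat.Coprime.pow e 2 c3.symm)).dvd_of_dvd_mul_left hd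

theorem sq_ndvd {a b c : ℕ} (ha : a.Prime) (hab : a.Coprime b) (hac : a.Coprime c) : ¬ a * a ∣ a * b * c := by
  intro hh
  rw [mul_assoc] at hh
  have h1 := Nat.dvd_of_mul_dvd_mul_left ha.pos hh
  exact ha.one_lt.ne' (Nat.eq_one_of_dvd_coprimes hab dvd_rfl (hac.dvd_of_dvd_mul_right h1))

theorem Su.final (S : Su M p q r n) {A B : Finset (ZMod M)} (H : IsTiling M (A : Set (ZMod M)) (B : Set (ZMod M)))
    (hA : A.card = p * q * r) (hPhi : cycDvd M M A) (x0 : ZMod M)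
    (hcor : ExtCorner M p q r (A : Set (ZMod M)) (gridSet M x0 (p ^ n * q * r))) :
    IsTiling M (gridSet M x0 (p ^ n * q * r)) (B : Set (ZMod M)) ∧ SatisfiesT2 M A ∧ SatisfiesT2 M B := by
  classical
  obtain ⟨c1, c2, c3⟩ := S.cop
  haveI : NeZero (p ^ (n + 1)) := ⟨(pow_pos S.hp.pos _).ne'⟩
  haveI : NeZero (q ^ 2) := ⟨(pow_pos S.hq.pos _).ne'⟩
  haveI : NeZero (r ^ 2) := ⟨(pow_pos S.hr.pos _).ne'⟩
  haveI : NeZero (p ^ n * q * r) := ⟨S.pos.ne'⟩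
  have dp : p ^ (n + 1) ∣ M := by rw [S.hM, mul_assoc]; exact dvd_mul_right _ _
  have dq : q ^ 2 ∣ M := by rw [S.hM]; exact (dvd_mul_left _ _).mul_right _
  have dr : r ^ 2 ∣ M := by rw [S.hM]; exact dvd_mul_left _ _
  let f : ZMod M →+* ZMod (p ^ (n + 1)) := ZMod.castHom dp _
  let g : ZMod M →+* ZMod (q ^ 2) := ZMod.castHom dq _
  let h : ZMod M →+* ZMod (r ^ 2) := ZMod.castHom dr _
  let φ : ZMod M →+* ZMod (p ^ n * q * r) := ZMod.castHom S.Ddvd _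
  have hB := S.cardB H hA
  have C := S.ctx f g h H hA
  obtain ⟨a, a', K⟩ := S.corner f g h hcor
  obtain ⟨C1, C3, Cq, Cr⟩ := core C K
  have h1 : ∀ x, cnt φ B x = 1 := by
    apply S.one φ hB
    intro b hb b' hb' he
    have hm : b ∈ gridSet M b' (p ^ n * q * r) := by
      unfold gridSet
      rw [Set.mem_ofPred_eq, grid_iff S.Ddvd, ← phi_zero φ, map_sub, he, sub_self]
    rw [S.grid_D f g h] at hm
    exact C1 b hb b' hb' hm.1 hm.2.1 hm.2.2
  have hBD : ∀ s, 1 < s → s ∣ p ^ n * q * r → cycDvd M s B := fun s hs hd => cyc_of_bij φ B h1 hs hd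
  obtain ⟨n1, n2, n3⟩ := S.ndvd
  have tp : ¬ cycDvd M (p ^ (n + 1)) B :=
    top_ndvd S.hp dp (fun s hs hd => hBD s hs (hd.trans ((dvd_mul_right _ _).mul_right _))) (by rw [hB]; exact n1)
  have tq : ¬ cycDvd M (q ^ 2) B :=
    top_ndvd S.hq dq (fun s hs hd => hBD s hs (hd.trans (by rw [pow_one]; exact (dvd_mul_left _ _).mul_right _)))
      (by rw [hB]; exact n2)
  have tr' : ¬ cycDvd M (r ^ 2) B :=
    top_ndvd S.hr dr (fun s hs hd => hBD s hs (hd.trans (by rw [pow_one]; exact dvd_mul_left _ _)))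
      (by rw [hB]; exact n3)
  have ap : cycDvd M (p ^ (n + 1)) A := (cyc_or H (Nat.one_lt_pow (by omega) S.hp.one_lt) dp).resolve_right tp
  have aq : cycDvd M (q ^ 2) A := (cyc_or H (Nat.one_lt_pow (by omega) S.hq.one_lt) dq).resolve_right tq
  have ar : cycDvd M (r ^ 2) A := (cyc_or H (Nat.one_lt_pow (by omega) S.hr.one_lt) dr).resolve_right tr'
  have apq : cycDvd M (p ^ (n + 1) * q ^ 2) A := S.cyc_pq f g h H C.neB C1 (fun b hb T hT => by
    rw [← Cr b hb]; congr 1; ext x; simp only [hT, Finset.mem_filter])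
  have apr : cycDvd M (p ^ (n + 1) * r ^ 2) A := S.swap.cyc_pq f h g H C.neB
    (fun b hb b' hb' k1 k2 k3 => C1 b hb b' hb' k1 k3 k2) (fun b hb T hT => by
    rw [← Cq b hb]; congr 1; ext x; simp only [hT, Finset.mem_filter])
  have aqr : cycDvd M (q ^ 2 * r ^ 2) A := S.cyc_qr f g h H C.neB C1 hA (f a) (by
    rw [← C3]; unfold cnt; congr 1; ext x; simp only [Finset.mem_filter]) ap
  refine ⟨S.tiling φ h1 x0, ?_, ?_⟩
  · intro P e hP hPe
    have hmem : ∀ l ∈ P, (l = p ∧ e l = n + 1) ∨ (l = q ∧ e l = 2) ∨ (l = r ∧ e l = 2) := by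
      intro l hl
      obtain ⟨k1, k2, k3, k4⟩ := hPe l hl
      rcases S.pcase k1 k2 k3 with ⟨rfl, k⟩ | ⟨rfl, k⟩ | ⟨rfl, k⟩
      · left
        refine ⟨rfl, ?_⟩
        by_contra hne
        have := two_cyc k1 k2 (by omega) hne k4 ap
        rw [hA] at this
        exact sq_ndvd k1 c1 c2 this
      · right; left
        refine ⟨rfl, ?_⟩
        by_contra hne
        have := two_cyc k1 k2 (by omega) hne k4 aq
        rw [hA, mul_comm p] at this
        exact sq_ndvd k1 c1.symm c3 this
      · right; right
        refine ⟨rfl, ?_⟩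
        by_contra hne
        have := two_cyc k1 k2 (by omega) hne k4 ar
        rw [hA, mul_comm (p * q), ← mul_assoc] at this
        exact sq_ndvd k1 c2.symm c3.symm this
    have hsub : P ⊆ {p, q, r} := by
      intro l hl
      simp only [Finset.mem_insert, Finset.mem_singleton]
      rcases hmem l hl with k | k | k
      · exact Or.inl k.1
      · exact Or.inr (Or.inl k.1)
      · exact Or.inr (Or.inr k.1)
    have hpq := S.hpq
    have hpr := S.hpr
    have hqr := S.hqr
    have ep : p ∈ P → e p = n + 1 := fun hl => by
      rcases hmem p hl with k | k | k
      · exact k.2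
      · exact absurd k.1 hpq
      · exact absurd k.1 hpr
    have eq : q ∈ P → e q = 2 := fun hl => by
      rcases hmem q hl with k | k | k
      · exact absurd k.1.symm hpq
      · exact k.2
      · exact absurd k.1 hqr
    have er : r ∈ P → e r = 2 := fun hl => by
      rcases hmem r hl with k | k | k
      · exact absurd k.1.symm hpr
      · exact absurd k.1.symm hqr
      · exact k.2
    have hprod : ∏ l ∈ P, l ^ e l = (if p ∈ P then p ^ (n + 1) else 1) * (if q ∈ P then q ^ 2 else 1) *
        (if r ∈ P then r ^ 2 else 1) := by
      have e0 : P = ({p, q, r} : Finset ℕ).filter (fun l => l ∈ P) := by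
        rw [Finset.filter_mem_eq_inter, Finset.inter_eq_right.2 hsub]
      have e1 : ∏ l ∈ P, l ^ e l = ∏ l ∈ ({p, q, r} : Finset ℕ), if l ∈ P then l ^ e l else 1 := by
        conv_lhs => rw [e0]
        rw [Finset.prod_filter]
      rw [e1, Finset.prod_insert (by simp [hpq, hpr]), Finset.prod_insert (by simp [hqr]), Finset.prod_singleton,
        ← mul_assoc]
      congr 1
      · congr 1
        · split_ifs with k
          · rw [ep k]
          · rfl
        · split_ifs with k
          · rw [eq k]
          · rfl
      · split_ifs with k
        · rw [er k]
        · rfl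
    rw [hprod]
    by_cases mp : p ∈ P
    · by_cases mq : q ∈ P
      · by_cases mr : r ∈ P
        · rw [if_pos mp, if_pos mq, if_pos mr, ← S.hM]; exact hPhi
        · rw [if_pos mp, if_pos mq, if_neg mr, mul_one]; exact apq
      · by_cases mr : r ∈ P
        · rw [if_pos mp, if_neg mq, if_pos mr, mul_one]; exact apr
        · rw [if_pos mp, if_neg mq, if_neg mr, mul_one, mul_one]; exact ap
    · by_cases mq : q ∈ P
      · by_cases mr : r ∈ P
        · rw [if_neg mp, if_pos mq, if_pos mr, one_mul]; exact aqr
        · rw [if_neg mp, if_pos mq, if_neg mr, one_mul, mul_one]; exact aq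
      · by_cases mr : r ∈ P
        · rw [if_neg mp, if_neg mq, if_pos mr, one_mul, one_mul]; exact ar
        · exfalso
          obtain ⟨l, hl⟩ := hP
          rcases hmem l hl with ⟨rfl, -⟩ | ⟨rfl, -⟩ | ⟨rfl, -⟩
          · exact mp hl
          · exact mq hl
          · exact mr hl
  · intro P e hP hPe
    apply hBD
    · obtain ⟨l, hl⟩ := hP
      have k := hPe l hl
      have hd : l ^ e l ∣ ∏ p ∈ P, p ^ e p := Finset.dvd_prod_of_mem (fun p => p ^ e p) hl
      have hpos : 0 < ∏ p ∈ P, p ^ e p := Finset.prod_pos (fun p hp => pow_pos (hPe p hp).1.pos _)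
      exact lt_of_lt_of_le (Nat.one_lt_pow (by omega) k.1.one_lt) (Nat.le_of_dvd hpos hd)
    · apply Finset.prod_dvd_of_isRelPrime
      · intro x hx y hy hxy
        exact Nat.coprime_iff_isRelPrime.1 (Nat.Coprime.pow _ _ ((Nat.coprime_primes (hPe x hx).1 (hPe y hy).1).2 hxy))
      · intro l hl
        obtain ⟨k1, k2, k3, k4⟩ := hPe l hl
        rcases S.pcase k1 k2 k3 with ⟨hlp, k⟩ | ⟨hlp, k⟩ | ⟨hlp, k⟩
        · have : e l ≠ n + 1 := fun he => tp (by rw [he, hlp] at k4; exact k4)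
          rw [hlp, mul_assoc]
          rw [hlp] at this k
          exact (pow_dvd_pow _ (by omega)).mul_right _
        · have : e l ≠ 2 := fun he => tq (by rw [he, hlp] at k4; exact k4)
          have e1 : e l = 1 := by omega
          rw [e1, hlp, pow_one]
          exact (dvd_mul_left _ _).mul_right _
        · have : e l ≠ 2 := fun he => tr' (by rw [he, hlp] at k4; exact k4)
          have e1 : e l = 1 := by omega
          rw [e1, hlp, pow_one]
          exact dvd_mul_left _ _

end Fin2

/-- **Extended corner theorem.** Let `M = p_i^{n_i} p_j² p_k²` with `n_i ≥ 2`,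
`A ⊕ B = ℤ_M`, `|A| = p_i p_j p_k`, `Φ_M | A`, and suppose `A ∩ Λ` contains a `p_i` extended
corner for some `D(M)`-grid `Λ`. Then `Λ ⊕ B = ℤ_M` is also a tiling and both `A`, `B`
satisfy (T2). -/
theorem statement15
    (pi pj pk : ℕ) (hpi : pi.Prime) (hpj : pj.Prime) (hpk : pk.Prime)
    (hij : pi ≠ pj) (hik : pi ≠ pk) (hjk : pj ≠ pk)
    (ni : ℕ) (hni : 2 ≤ ni)
    (M : ℕ) (hM : M = pi ^ ni * pj ^ 2 * pk ^ 2)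
    (A B : Finset (ZMod M))
    (htile : IsTiling M (A : Set (ZMod M)) (B : Set (ZMod M)))
    (hcardA : A.card = pi * pj * pk)
    (hPhiM : cycDvd M M A)
    (x0 : ZMod M) (D : ℕ) (hD : D = pi ^ (ni - 1) * pj * pk)
    (hcorner : ExtCorner M pi pj pk (A : Set (ZMod M)) (gridSet M x0 D)) :
    IsTiling M (gridSet M x0 D) (B : Set (ZMod M)) ∧
      SatisfiesT2 M A ∧ SatisfiesT2 M B := by
  obtain ⟨n, rfl⟩ : ∃ n, ni = n + 1 := ⟨ni - 1, by omega⟩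
  have S : Su M pi pj pk n := ⟨hpi, hpj, hpk, hij, hik, hjk, hM⟩
  haveI : NeZero M := ⟨by
    rw [hM]
    exact (Nat.mul_pos (Nat.mul_pos (pow_pos hpi.pos _) (pow_pos hpj.pos _)) (pow_pos hpk.pos _)).ne'⟩
  subst hD
  exact S.final htile hcardA hPhiM x0 hcorner
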